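/- arXiv:2308.09384 — 2 statements merged into one kernel-verified Lean document; each statement's English description precedes it below -/
import Mathlib

section
/- Let K be a field of characteristic 0, A = A_n(K) the n-th Weyl algebra, φ: A → A a K-algebra endomorphism, and S = φ(A). If A is finitely generated as a left S-module or as a right S-module, then S = A; in particular, φ is an automorphism of A. -/
/-- The commutation relations defining the `n`-th Weyl algebra over `R`:
`[x_i, x_j] = 0`, `[∂_i, ∂_j] = 0`, `[∂_i, x_j] = δ_{ij}`.  Generators are indexed by
`Fin n ⊕ Fin n`, with `.inl i` corresponding to `x_i` and `.inr i` to `∂_i`. -/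
inductive WeylRel (R : Type*) [CommRing R] (n : ℕ) :
    FreeAlgebra R (Fin n ⊕ Fin n) → FreeAlgebra R (Fin n ⊕ Fin n) → Prop
  | xx (i j : Fin n) : WeylRel R n
      (FreeAlgebra.ι R (.inl i) * FreeAlgebra.ι R (.inl j))
      (FreeAlgebra.ι R (.inl j) * FreeAlgebra.ι R (.inl i))
  | dd (i j : Fin n) : WeylRel R n
      (FreeAlgebra.ι R (.inr i) * FreeAlgebra.ι R (.inr j))
      (FreeAlgebra.ι R (.inr j) * FreeAlgebra.ι R (.inr i))
  | dx (i j : Fin n) : WeylRel R n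
      (FreeAlgebra.ι R (.inr i) * FreeAlgebra.ι R (.inl j))
      (FreeAlgebra.ι R (.inl j) * FreeAlgebra.ι R (.inr i) + if i = j then 1 else 0)

/-- The `n`-th Weyl algebra `A_n(R)` over a commutative ring `R`, as the quotient of the
free `R`-algebra on `x_1, …, x_n, ∂_1, …, ∂_n` by the Weyl relations. -/
abbrev WeylAlgebra (R : Type*) [CommRing R] (n : ℕ) : Type _ := RingQuot (WeylRel R n)

/-- The generator `x_i` of the Weyl algebra. -/
noncomputable def wX (R : Type*) [CommRing R] {n : ℕ} (i : Fin n) : WeylAlgebra R n :=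
  RingQuot.mkAlgHom R (WeylRel R n) (FreeAlgebra.ι R (.inl i))

/-- The generator `∂_i` of the Weyl algebra. -/
noncomputable def wD (R : Type*) [CommRing R] {n : ℕ} (i : Fin n) : WeylAlgebra R n :=
  RingQuot.mkAlgHom R (WeylRel R n) (FreeAlgebra.ι R (.inr i))


set_option linter.all false

namespace WA

open MvPolynomial

/-- index set of generators -/
abbrev Ix (n : ℕ) := Fin n ⊕ Fin n

section basic
variable {R : Type*} [CommRing R] {n : ℕ}

/-- generators of the Weyl algebra -/
noncomputable def gen (R : Type*) [CommRing R] {n : ℕ} (s : Ix n) : WeylAlgebra R n :=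
  RingQuot.mkAlgHom R (WeylRel R n) (FreeAlgebra.ι R s)

/-- a family satisfying the Weyl relations -/
structure IsWeyl {B : Type*} [Ring B] (g : Ix n → B) : Prop where
  xx : ∀ i j, g (.inl i) * g (.inl j) = g (.inl j) * g (.inl i)
  dd : ∀ i j, g (.inr i) * g (.inr j) = g (.inr j) * g (.inr i)
  dx : ∀ i j, g (.inr i) * g (.inl j) = g (.inl j) * g (.inr i) + if i = j then 1 else 0

theorem isWeyl_gen : IsWeyl (gen R : Ix n → WeylAlgebra R n) := by
  constructor
  · intro i j
    have := RingQuot.mkAlgHom_rel R (WeylRel.xx (R := R) i j)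
    simpa [gen] using this
  · intro i j
    have := RingQuot.mkAlgHom_rel R (WeylRel.dd (R := R) i j)
    simpa [gen] using this
  · intro i j
    have := RingQuot.mkAlgHom_rel R (WeylRel.dx (R := R) i j)
    rw [map_mul, map_add, map_mul] at this
    rw [gen, gen, this]
    split_ifs <;> simp

theorem IsWeyl.map {B C : Type*} [Ring B] [Ring C] {g : Ix n → B} (h : IsWeyl g) (f : B →+* C) :
    IsWeyl (fun s => f (g s)) := by
  constructor
  · intro i j; rw [← map_mul, h.xx, map_mul]
  · intro i j; rw [← map_mul, h.dd, map_mul]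
  · intro i j; rw [← map_mul, h.dx, map_add, map_mul]; split_ifs <;> simp

/-- universal property -/
noncomputable def wlift {B : Type*} [Ring B] [Algebra R B] (g : Ix n → B) (h : IsWeyl g) :
    WeylAlgebra R n →ₐ[R] B :=
  RingQuot.liftAlgHom R ⟨FreeAlgebra.lift R g, by
    rintro _ _ (⟨i, j⟩ | ⟨i, j⟩ | ⟨i, j⟩)
    · simpa using h.xx i j
    · simpa using h.dd i j
    · rw [map_mul, map_add, map_mul]
      simp only [FreeAlgebra.lift_ι_apply]
      rw [h.dx]; split_ifs <;> simp⟩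

@[simp] theorem wlift_gen {B : Type*} [Ring B] [Algebra R B] (g : Ix n → B) (h : IsWeyl g)
    (s : Ix n) : wlift (R := R) g h (gen R s) = g s := by
  simp [wlift, gen]

theorem algHom_ext {B : Type*} [Ring B] [Algebra R B] {f g : WeylAlgebra R n →ₐ[R] B}
    (h : ∀ s, f (gen R s) = g (gen R s)) : f = g := by
  apply RingQuot.ringQuot_ext'
  apply FreeAlgebra.hom_ext
  funext s
  exact h s

theorem adjoin_gen : Algebra.adjoin R (Set.range (gen R : Ix n → WeylAlgebra R n)) = ⊤ := by
  have h : (Algebra.adjoin R (Set.range (gen R : Ix n → WeylAlgebra R n))).val.comp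
      (wlift (B := Algebra.adjoin R (Set.range (gen R : Ix n → WeylAlgebra R n)))
        (fun s => ⟨gen R s, Algebra.subset_adjoin ⟨s, rfl⟩⟩)
        (by constructor <;> intro i j
            · exact Subtype.ext (isWeyl_gen.xx i j)
            · exact Subtype.ext (isWeyl_gen.dd i j)
            · apply Subtype.ext
              have := (isWeyl_gen (R := R)).dx i j
              split_ifs at this ⊢ <;> simpa using this)) = AlgHom.id R _ := by
    apply algHom_ext
    intro s; simp
  rw [eq_top_iff]
  intro a _
  have := congrArg (fun f => f a) h
  simp only [AlgHom.comp_apply, AlgHom.id_apply] at this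
  rw [← this]
  exact Subtype.property _

/-- induction along left multiplication by generators -/
theorem induction_left {p : WeylAlgebra R n → Prop} (h1 : p 1)
    (hadd : ∀ a b, p a → p b → p (a + b)) (hsmul : ∀ (r : R) a, p a → p (r • a))
    (hgen : ∀ s a, p a → p (gen R s * a)) (a : WeylAlgebra R n) : p a := by
  have key : ∀ b ∈ Algebra.adjoin R (Set.range (gen R : Ix n → WeylAlgebra R n)),
      ∀ c, p c → p (b * c) := by
    intro b hb
    induction hb using Algebra.adjoin_induction with
    | mem x hx => obtain ⟨s, rfl⟩ := hx; intro c; exact hgen s c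
    | algebraMap r => intro c hc; rw [← Algebra.smul_def]; exact hsmul r c hc
    | add x y _ _ hx hy => intro c hc; rw [add_mul]; exact hadd _ _ (hx c hc) (hy c hc)
    | mul x y _ _ hx hy => intro c hc; rw [mul_assoc]; exact hx _ (hy _ hc)
  have := key a (by rw [adjoin_gen]; trivial) 1 h1
  rwa [mul_one] at this

/-- operators of the regular representation -/
noncomputable def opG (R : Type*) [CommRing R] {n : ℕ} : Ix n →
    Module.End R (MvPolynomial (Ix n) R) :=
  Sum.elim (fun i => LinearMap.mulLeft R (X (.inl i)))
    (fun i => LinearMap.mulLeft R (X (.inr i)) + (pderiv (.inl i)).toLinearMap)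

theorem pderiv_swap {τ : Type*} (s t : τ) (f : MvPolynomial τ R) :
    pderiv s (pderiv t f) = pderiv t (pderiv s f) := by
  classical
  have h : ⁅(pderiv s : Derivation R (MvPolynomial τ R) (MvPolynomial τ R)),
      (pderiv t : Derivation R (MvPolynomial τ R) (MvPolynomial τ R))⁆ = 0 := by
    apply MvPolynomial.derivation_ext
    intro k
    rw [Derivation.commutator_apply]
    simp only [pderiv_X, Pi.single_apply]
    split_ifs <;> simp
  have := congrArg (fun D : Derivation R (MvPolynomial τ R) (MvPolynomial τ R) => D f) h
  simp only [Derivation.commutator_apply] at this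
  exact sub_eq_zero.1 this

theorem isWeyl_opG : IsWeyl (opG R : Ix n → _) := by
  constructor
  · intro i j; apply LinearMap.ext; intro f; simp [opG]; ring
  · intro i j
    apply LinearMap.ext; intro f
    simp [opG]
    rw [pderiv_swap (Sum.inl i) (Sum.inl j) f]; ring
  · intro i j
    apply LinearMap.ext; intro f
    split_ifs with h
    · subst h; simp [opG]; ring
    · simp [opG, pderiv_X_of_ne, h, Ne.symm h, pderiv_X, Pi.single_apply]; ring

/-- regular representation on polynomials -/
noncomputable def rep : WeylAlgebra R n →ₐ[R] Module.End R (MvPolynomial (Ix n) R) :=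
  wlift (opG R) isWeyl_opG

/-- operators for normal ordering -/
noncomputable def opQ (R : Type*) [CommRing R] {n : ℕ} : Ix n → Module.End R (WeylAlgebra R n) :=
  Sum.elim (fun i => LinearMap.mulLeft R (gen R (.inl i)))
    (fun i => LinearMap.mulRight R (gen R (.inr i)))

theorem opQ_comm (s t : Ix n) : opQ R s * opQ R t = opQ R t * opQ R s := by
  rcases s with i | i <;> rcases t with j | j <;> apply LinearMap.ext <;> intro a
  · simp [opQ, ← mul_assoc, isWeyl_gen.xx i j]
  · simp [opQ, mul_assoc]
  · simp [opQ, mul_assoc]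
  · simp [opQ, mul_assoc, isWeyl_gen.dd i j]

theorem exists_quantHom : ∃ f : MvPolynomial (Ix n) R →ₐ[R] Module.End R (WeylAlgebra R n),
    ∀ s, f (X s) = opQ R s := by
  letI := Algebra.adjoinCommRingOfComm R (s := Set.range (opQ R : Ix n → _))
    (by rintro _ ⟨s, rfl⟩ _ ⟨t, rfl⟩; exact opQ_comm s t)
  refine ⟨(Algebra.adjoin R (Set.range (opQ R : Ix n → _))).val.comp
    (aeval (fun s => ⟨opQ R s, Algebra.subset_adjoin ⟨s, rfl⟩⟩)), fun s => ?_⟩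
  simp

/-- normal ordering -/
noncomputable def quant : MvPolynomial (Ix n) R →ₗ[R] WeylAlgebra R n :=
  (LinearMap.applyₗ (1 : WeylAlgebra R n)).comp (exists_quantHom (R := R) (n := n)).choose.toLinearMap

@[simp] theorem quant_one : quant (1 : MvPolynomial (Ix n) R) = 1 := by
  simp [quant]

theorem quant_X_inl (i : Fin n) (f : MvPolynomial (Ix n) R) :
    quant (X (.inl i) * f) = gen R (.inl i) * quant f := by
  have h := (exists_quantHom (R := R) (n := n)).choose_spec
  simp only [quant, LinearMap.comp_apply, AlgHom.toLinearMap_apply, map_mul, h,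
    LinearMap.applyₗ_apply_apply, Module.End.mul_apply]
  simp [opQ]

theorem quant_X_inr (i : Fin n) (f : MvPolynomial (Ix n) R) :
    quant (X (.inr i) * f) = quant f * gen R (.inr i) := by
  have h := (exists_quantHom (R := R) (n := n)).choose_spec
  simp only [quant, LinearMap.comp_apply, AlgHom.toLinearMap_apply, map_mul, h,
    LinearMap.applyₗ_apply_apply, Module.End.mul_apply]
  simp [opQ]

theorem gen_inr_quant (i : Fin n) (f : MvPolynomial (Ix n) R) :
    gen R (.inr i) * quant f = quant f * gen R (.inr i) + quant (pderiv (.inl i) f) := by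
  induction f using MvPolynomial.induction_on with
  | C a => simp [← algebraMap_eq, Algebra.algebraMap_eq_smul_one]
  | add p q hp hq => simp only [map_add, mul_add, add_mul, hp, hq]; abel
  | mul_X p s hp =>
    rw [mul_comm p]
    rcases s with j | j
    · rw [quant_X_inl, ← mul_assoc, isWeyl_gen.dx, Derivation.leibniz, smul_eq_mul, smul_eq_mul,
        map_add, quant_X_inl, add_mul, mul_assoc, hp, mul_add]
      split_ifs with h
      · subst h; simp [mul_assoc]; abel
      · simp [pderiv_X, Pi.single_apply, h, Ne.symm h, mul_assoc]
    · rw [quant_X_inr, ← mul_assoc, hp, Derivation.leibniz, smul_eq_mul, smul_eq_mul, map_add,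
        quant_X_inr, add_mul, mul_assoc _ (gen R _) (gen R _), isWeyl_gen.dd]
      simp [pderiv_X, Pi.single_apply, mul_assoc]

theorem quant_mul_gen_inl (i : Fin n) (f : MvPolynomial (Ix n) R) :
    quant f * gen R (.inl i) = gen R (.inl i) * quant f + quant (pderiv (.inr i) f) := by
  induction f using MvPolynomial.induction_on with
  | C a => simp [← algebraMap_eq, Algebra.algebraMap_eq_smul_one]
  | add p q hp hq => simp only [map_add, mul_add, add_mul, hp, hq]; abel
  | mul_X p s hp =>
    rw [mul_comm p]
    rcases s with j | j
    · rw [quant_X_inl, mul_assoc, hp, Derivation.leibniz, smul_eq_mul, smul_eq_mul,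
        map_add, quant_X_inl, mul_add, ← mul_assoc, isWeyl_gen.xx]
      simp [pderiv_X, Pi.single_apply, mul_assoc]
    · rw [quant_X_inr, mul_assoc, isWeyl_gen.dx, mul_add, ← mul_assoc, hp, Derivation.leibniz,
        smul_eq_mul, smul_eq_mul, map_add, quant_X_inr, add_mul]
      split_ifs with h
      · subst h; simp [mul_assoc]; abel
      · simp [pderiv_X, Pi.single_apply, h, Ne.symm h, mul_assoc]

theorem quant_rep (a : WeylAlgebra R n) (f : MvPolynomial (Ix n) R) :
    quant (rep a f) = a * quant f := by
  induction a using induction_left with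
  | h1 => simp
  | hadd a b ha hb => simp [add_mul, ha, hb]
  | hsmul r a ha => simp [ha]
  | hgen s a ha =>
    rw [map_mul, Module.End.mul_apply, mul_assoc, ← ha]
    generalize rep a f = g
    rw [rep, wlift_gen]
    rcases s with i | i
    · simp [opG, quant_X_inl]
    · simp [opG, quant_X_inr, gen_inr_quant]

/-- symbol -/
noncomputable def sym : WeylAlgebra R n →ₗ[R] MvPolynomial (Ix n) R :=
  (LinearMap.applyₗ (1 : MvPolynomial (Ix n) R)).comp rep.toLinearMap

@[simp] theorem quant_sym (a : WeylAlgebra R n) : quant (sym a) = a := by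
  have := quant_rep a 1
  simpa [sym] using this

theorem sym_gen_mul_inl (i : Fin n) (a : WeylAlgebra R n) :
    sym (gen R (.inl i) * a) = X (.inl i) * sym a := by
  simp [sym, rep, opG]

theorem sym_gen_mul_inr (i : Fin n) (a : WeylAlgebra R n) :
    sym (gen R (.inr i) * a) = X (.inr i) * sym a + pderiv (.inl i) (sym a) := by
  simp [sym, rep, opG]

theorem rep_mul_X (a : WeylAlgebra R n) (i : Fin n) (f : MvPolynomial (Ix n) R) :
    rep a (X (.inr i) * f) = X (.inr i) * rep a f := by
  induction a using induction_left with
  | h1 => simp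
  | hadd a b ha hb => simp [mul_add, ha, hb]
  | hsmul r a ha => simp [ha]
  | hgen s a ha =>
    rw [map_mul rep, Module.End.mul_apply, Module.End.mul_apply, ha]
    generalize rep a f = g
    rw [rep, wlift_gen]
    rcases s with j | j
    · simp [opG]; ring
    · simp [opG, pderiv_X, Pi.single_apply]; ring

theorem sym_mul_gen_inr (i : Fin n) (a : WeylAlgebra R n) :
    sym (a * gen R (.inr i)) = X (.inr i) * sym a := by
  have := rep_mul_X a i 1
  simp only [sym, LinearMap.comp_apply, AlgHom.toLinearMap_apply, LinearMap.applyₗ_apply_apply,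
    map_mul, Module.End.mul_apply]
  rw [← this]
  congr 1
  simp [rep, opG]

@[simp] theorem sym_one : sym (1 : WeylAlgebra R n) = 1 := by simp [sym]

@[simp] theorem sym_quant (f : MvPolynomial (Ix n) R) : sym (quant f) = f := by
  induction f using MvPolynomial.induction_on with
  | C a => simp [← algebraMap_eq, Algebra.algebraMap_eq_smul_one]
  | add p q hp hq => simp [hp, hq]
  | mul_X p s hp =>
    rw [mul_comm p]
    rcases s with j | j
    · rw [quant_X_inl, sym_gen_mul_inl, hp]
    · rw [quant_X_inr, sym_mul_gen_inr, hp]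

theorem sym_injective : Function.Injective (sym : WeylAlgebra R n → _) :=
  Function.LeftInverse.injective quant_sym

theorem sym_eq_zero {a : WeylAlgebra R n} : sym a = 0 ↔ a = 0 :=
  map_eq_zero_iff _ sym_injective

theorem sym_ad_inr (i : Fin n) (a : WeylAlgebra R n) :
    sym (gen R (.inr i) * a - a * gen R (.inr i)) = pderiv (.inl i) (sym a) := by
  rw [map_sub, sym_gen_mul_inr, sym_mul_gen_inr]; ring

theorem sym_ad_inl (i : Fin n) (a : WeylAlgebra R n) :
    sym (a * gen R (.inl i) - gen R (.inl i) * a) = pderiv (.inr i) (sym a) := by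
  have := quant_mul_gen_inl i (sym a)
  rw [quant_sym] at this
  rw [this, add_sub_cancel_left, sym_quant]

@[simp] theorem quant_X (s : Ix n) : quant (X s : MvPolynomial (Ix n) R) = gen R s := by
  rcases s with j | j
  · simpa using quant_X_inl (R := R) j 1
  · simpa using quant_X_inr (R := R) j 1

@[simp] theorem sym_gen (s : Ix n) : sym (gen R s) = (X s : MvPolynomial (Ix n) R) := by
  rw [← quant_X, sym_quant]

@[simp] theorem sym_algebraMap (r : R) : sym (algebraMap R (WeylAlgebra R n) r) = C r := by
  simp [Algebra.algebraMap_eq_smul_one, ← MvPolynomial.algebraMap_eq]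

/-- functoriality -/
noncomputable def wmap {R' : Type*} [CommRing R'] (f : R →+* R') :
    WeylAlgebra R n →+* WeylAlgebra R' n :=
  letI : Algebra R (WeylAlgebra R' n) := ((algebraMap R' (WeylAlgebra R' n)).comp f).toAlgebra'
    (fun c x => by
      simp only [RingHom.comp_apply]
      exact Algebra.commutes (f c) x)
  (wlift (R := R) (gen R') isWeyl_gen).toRingHom

@[simp] theorem wmap_gen {R' : Type*} [CommRing R'] (f : R →+* R') (s : Ix n) :
    wmap f (gen R s) = gen R' s := by
  letI : Algebra R (WeylAlgebra R' n) := ((algebraMap R' (WeylAlgebra R' n)).comp f).toAlgebra'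
    (fun c x => by
      simp only [RingHom.comp_apply]
      exact Algebra.commutes (f c) x)
  exact wlift_gen _ _ _

@[simp] theorem wmap_algebraMap {R' : Type*} [CommRing R'] (f : R →+* R') (r : R) :
    wmap f (algebraMap R (WeylAlgebra R n) r) = algebraMap R' (WeylAlgebra R' n) (f r) := by
  letI : Algebra R (WeylAlgebra R' n) := ((algebraMap R' (WeylAlgebra R' n)).comp f).toAlgebra'
    (fun c x => by
      simp only [RingHom.comp_apply]
      exact Algebra.commutes (f c) x)
  exact (wlift (R := R) (n := n) (gen R') isWeyl_gen).commutes r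

theorem wmap_smul {R' : Type*} [CommRing R'] (f : R →+* R') (r : R) (a : WeylAlgebra R n) :
    wmap f (r • a) = f r • wmap f a := by
  rw [Algebra.smul_def, map_mul, wmap_algebraMap, ← Algebra.smul_def]

theorem wmap_quant {R' : Type*} [CommRing R'] (f : R →+* R') (g : MvPolynomial (Ix n) R) :
    wmap f (quant g) = quant (MvPolynomial.map f g) := by
  induction g using MvPolynomial.induction_on with
  | C a => 
    have h1 : (C a : MvPolynomial (Ix n) R) = a • 1 := by simp [MvPolynomial.smul_eq_C_mul]
    have h2 : (C (f a) : MvPolynomial (Ix n) R') = (f a) • 1 := by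
      simp [MvPolynomial.smul_eq_C_mul]
    rw [map_C, h1, h2, map_smul quant, map_smul quant, wmap_smul]; simp
  | add p q hp hq => simp [hp, hq]
  | mul_X p s hp =>
    rw [mul_comm p, map_mul (MvPolynomial.map f), map_X]
    rcases s with j | j
    · rw [quant_X_inl, quant_X_inl, map_mul, hp, wmap_gen]
    · rw [quant_X_inr, quant_X_inr, map_mul, hp, wmap_gen]

theorem sym_wmap {R' : Type*} [CommRing R'] (f : R →+* R') (a : WeylAlgebra R n) :
    sym (wmap f a) = MvPolynomial.map f (sym a) := by
  conv_lhs => rw [← quant_sym a]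
  rw [wmap_quant, sym_quant]

end basic
end WA


set_option linter.all false

namespace WA

open MvPolynomial

section filt
variable {R : Type*} [CommRing R] {τ : Type*}

/-- polynomials of total degree `< k` -/
noncomputable def dl (R : Type*) [CommRing R] (τ : Type*) (k : ℕ) :
    Submodule R (MvPolynomial τ R) where
  carrier := {p | ∀ m, coeff m p ≠ 0 → m.degree < k}
  zero_mem' := by intro m hm; simp at hm
  add_mem' := by
    intro p q hp hq m hm
    by_cases h : coeff m p = 0
    · apply hq; intro h'; apply hm; simp [h, h']
    · exact hp m h
  smul_mem' := by
    intro r p hp m hm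
    apply hp; intro h; apply hm; simp [h]

theorem mem_dl {k : ℕ} {p : MvPolynomial τ R} :
    p ∈ dl R τ k ↔ ∀ m, coeff m p ≠ 0 → m.degree < k := Iff.rfl

theorem dl_mono {k j : ℕ} (h : k ≤ j) : dl R τ k ≤ dl R τ j :=
  fun p hp m hm => (hp m hm).trans_le h

theorem mem_dl_zero {p : MvPolynomial τ R} (h : p ∈ dl R τ 0) : p = 0 := by
  ext m
  by_contra hm
  exact absurd (h m (by simpa using hm)) (by simp)

theorem mem_dl_succ {k : ℕ} {p : MvPolynomial τ R} : p ∈ dl R τ (k + 1) ↔ p.totalDegree ≤ k := by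
  rw [mem_dl, totalDegree, Finset.sup_le_iff]
  refine forall_congr' fun m => ?_
  rw [mem_support_iff]
  exact imp_congr_right fun _ => Nat.lt_succ_iff

theorem totalDegree_pow_eq [IsDomain R] {p : MvPolynomial τ R} (hp : p ≠ 0) (e : ℕ) :
    (p ^ e).totalDegree = e * p.totalDegree := by
  induction e with
  | zero => simp
  | succ e ih =>
    rw [pow_succ, totalDegree_mul_of_isDomain (pow_ne_zero _ hp) hp, ih]; ring

theorem monomial_mem_dl {k : ℕ} {m : τ →₀ ℕ} (r : R) (h : m.degree < k) :
    monomial m r ∈ dl R τ k := by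
  classical
  intro m' hm'
  rw [coeff_monomial] at hm'
  split_ifs at hm' with h'
  · rwa [← h']
  · exact absurd rfl hm'

theorem dl_induction {k : ℕ} {P : MvPolynomial τ R → Prop} (h0 : P 0)
    (hadd : ∀ p q, P p → P q → P (p + q))
    (hmon : ∀ m : τ →₀ ℕ, m.degree < k → ∀ r : R, P (monomial m r))
    {p : MvPolynomial τ R} (hp : p ∈ dl R τ k) : P p := by
  rw [p.as_sum]
  apply Finset.sum_induction _ P hadd h0
  intro m hm
  exact hmon m (hp m (by simpa using hm)) _

theorem mul_mem_dl {k j : ℕ} {p q : MvPolynomial τ R} (hp : p ∈ dl R τ (k + 1))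
    (hq : q ∈ dl R τ j) : p * q ∈ dl R τ (k + j) := by
  refine dl_induction (P := fun p => p * q ∈ dl R τ (k + j)) (by simp) ?_ ?_ hp
  · intro p p' h h'; rw [add_mul]; exact add_mem h h'
  intro m hm r
  refine dl_induction (P := fun q => monomial m r * q ∈ dl R τ (k + j)) (by simp) ?_ ?_ hq
  · intro p p' h h'; rw [mul_add]; exact add_mem h h'
  intro m' hm' r'
  rw [monomial_mul]
  apply monomial_mem_dl
  rw [map_add]; omega

theorem X_mem_dl (s : τ) : (X s : MvPolynomial τ R) ∈ dl R τ 2 := by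
  apply monomial_mem_dl; simp [Finsupp.degree_single]

theorem X_mul_mem_dl {j : ℕ} (s : τ) {q : MvPolynomial τ R} (hq : q ∈ dl R τ j) :
    X s * q ∈ dl R τ (j + 1) := by
  have := mul_mem_dl (X_mem_dl (R := R) s) hq
  rwa [add_comm] at this

theorem pderiv_mem_dl {j : ℕ} (s : τ) {q : MvPolynomial τ R} (hq : q ∈ dl R τ (j + 1)) :
    pderiv s q ∈ dl R τ j := by
  classical
  refine dl_induction (P := fun q => pderiv s q ∈ dl R τ j) (by simp) ?_ ?_ hq
  · intro p p' h h'; rw [map_add]; exact add_mem h h'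
  intro m hm r
  rw [pderiv_monomial]
  by_cases h : m s = 0
  · simp [h]
  apply monomial_mem_dl
  have h1 : m - Finsupp.single s 1 + Finsupp.single s 1 = m := by
    apply tsub_add_cancel_of_le
    rw [Finsupp.single_le_iff]; omega
  have := congrArg Finsupp.degree h1
  rw [map_add, Finsupp.degree_single] at this
  omega

theorem one_mem_dl : (1 : MvPolynomial τ R) ∈ dl R τ 1 := by
  apply monomial_mem_dl; simp

theorem dl_map {R' : Type*} [CommRing R'] (f : R →+* R') {k : ℕ} {p : MvPolynomial τ R}
    (hp : p ∈ dl R τ k) : MvPolynomial.map f p ∈ dl R' τ k := by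
  intro m hm
  apply hp
  intro h; apply hm; simp [coeff_map, h]

end filt

section filtW
variable {R : Type*} [CommRing R] {n : ℕ}

theorem sym_mul_sub_mem_aux (k : ℕ) : ∀ m : Ix n →₀ ℕ, m.degree = k →
    ∀ (j : ℕ) (b : WeylAlgebra R n), sym b ∈ dl R (Ix n) (j + 1) →
    sym (quant (monomial m 1) * b) - monomial m 1 * sym b ∈ dl R (Ix n) (k + j) := by
  induction k with
  | zero =>
    intro m hm j b hb
    rw [Finsupp.degree_eq_zero_iff] at hm
    subst hm
    have : (monomial (0 : Ix n →₀ ℕ) (1 : R)) = 1 := rfl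
    simp [this]
  | succ k ih =>
    intro m hm j b hb
    obtain ⟨s, hs⟩ : ∃ s, m s ≠ 0 := by
      by_contra! h
      have : m = 0 := Finsupp.ext h
      simp [this] at hm
    have h1 : Finsupp.single s 1 + (m - Finsupp.single s 1) = m := by
      apply add_tsub_cancel_of_le
      rw [Finsupp.single_le_iff]; omega
    set m' := m - Finsupp.single s 1
    have hm' : m'.degree = k := by
      have := congrArg Finsupp.degree h1
      rw [map_add, Finsupp.degree_single] at this
      omega
    have h2 : (monomial m (1 : R)) = X s * monomial m' 1 := by
      rw [X, monomial_mul, h1, mul_one]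
    rw [h2]
    rcases s with i | i
    · rw [quant_X_inl, mul_assoc, sym_gen_mul_inl, mul_assoc, ← mul_sub]
      have := X_mul_mem_dl (Sum.inl i) (ih m' hm' j b hb)
      exact dl_mono (by omega) this
    · rw [quant_X_inr, mul_assoc]
      have hb' : sym (gen R (.inr i) * b) ∈ dl R (Ix n) (j + 1 + 1) := by
        rw [sym_gen_mul_inr]
        exact add_mem (X_mul_mem_dl _ hb) (dl_mono (by omega) (pderiv_mem_dl _ hb))
      have h3 := ih m' hm' (j + 1) _ hb'
      have h4 : (monomial m' (1 : R)) * pderiv (.inl i) (sym b) ∈ dl R (Ix n) (k + j) :=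
        mul_mem_dl (monomial_mem_dl _ (by omega)) (pderiv_mem_dl _ hb)
      have h5 := add_mem h3 (dl_mono (show k + j ≤ k + (j + 1) by omega) h4)
      rw [sym_gen_mul_inr] at h5
      refine dl_mono (show k + (j + 1) ≤ k + 1 + j by omega) ?_
      convert h5 using 1
      ring

theorem sym_mul_sub_mem {k j : ℕ} {a b : WeylAlgebra R n} (ha : sym a ∈ dl R (Ix n) (k + 1))
    (hb : sym b ∈ dl R (Ix n) (j + 1)) : sym (a * b) - sym a * sym b ∈ dl R (Ix n) (k + j) := by
  have key : ∀ f ∈ dl R (Ix n) (k + 1), sym (quant f * b) - f * sym b ∈ dl R (Ix n) (k + j) := by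
    intro f hf
    refine dl_induction (P := fun f => sym (quant f * b) - f * sym b ∈ dl R (Ix n) (k + j))
      (by simp) ?_ ?_ hf
    · intro p q hp hq
      have := add_mem hp hq
      convert this using 1
      simp only [map_add, add_mul]; ring
    · intro m hm r
      have h := Submodule.smul_mem _ r (sym_mul_sub_mem_aux m.degree m rfl j b hb)
      have h1 : (monomial m r) = r • (monomial m 1 : MvPolynomial (Ix n) R) := by
        simp [smul_monomial]
      rw [h1, map_smul, smul_mul_assoc, map_smul, smul_mul_assoc, ← smul_sub]
      exact dl_mono (by omega) h
  have := key _ ha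
  rwa [quant_sym] at this

theorem sym_mul_mem {k j : ℕ} {a b : WeylAlgebra R n} (ha : sym a ∈ dl R (Ix n) (k + 1))
    (hb : sym b ∈ dl R (Ix n) (j + 1)) : sym (a * b) ∈ dl R (Ix n) (k + j + 1) := by
  have h1 := sym_mul_sub_mem ha hb
  have h2 : sym a * sym b ∈ dl R (Ix n) (k + (j + 1)) := mul_mem_dl ha hb
  have := add_mem (dl_mono (show k + j ≤ k + (j + 1) by omega) h1) h2
  rwa [sub_add_cancel] at this

theorem sym_pow_sub_mem {k : ℕ} {a : WeylAlgebra R n} (ha : sym a ∈ dl R (Ix n) (k + 1)) (e : ℕ) :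
    sym (a ^ e) ∈ dl R (Ix n) (e * k + 1) ∧
    sym (a ^ e) - (sym a) ^ e ∈ dl R (Ix n) (e * k) := by
  induction e with
  | zero => simp; exact one_mem_dl
  | succ e ih =>
    have h1 := sym_mul_mem ih.1 ha
    have h2 := sym_mul_sub_mem ih.1 ha
    rw [← pow_succ] at h1 h2
    rw [show e * k + k = (e + 1) * k by ring] at h1 h2
    refine ⟨h1, ?_⟩
    have h3 : sym a * (sym (a ^ e) - sym a ^ e) ∈ dl R (Ix n) (k + e * k) := mul_mem_dl ha ih.2
    rw [show k + e * k = (e + 1) * k by ring] at h3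
    have := add_mem h2 h3
    convert this using 1
    ring

/-- if a power of `a` has small degree, so has `a`. -/
theorem sym_mem_of_pow [IsDomain R] {c e : ℕ} (he : 0 < e) {a : WeylAlgebra R n}
    (h : sym (a ^ e) ∈ dl R (Ix n) (e * c + 1)) : sym a ∈ dl R (Ix n) (c + 1) := by
  rw [mem_dl_succ]
  by_contra! hlt
  set d := (sym a).totalDegree with hd
  have ha : sym a ∈ dl R (Ix n) (d + 1) := mem_dl_succ.2 le_rfl
  have h1 := (sym_pow_sub_mem ha e).2
  have h2 : sym a ^ e ∈ dl R (Ix n) (e * d) := by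
    have h3 : e * (c + 1) ≤ e * d := Nat.mul_le_mul_left e hlt
    have := sub_mem (dl_mono (show e * c + 1 ≤ e * d by nlinarith) h) h1
    rwa [sub_sub_cancel] at this
  have hne : sym a ≠ 0 := by
    intro h0; rw [h0] at hd; simp at hd; omega
  obtain ⟨j, hj⟩ : ∃ j, e * d = j + 1 := ⟨e * d - 1, by have := Nat.mul_pos he (by omega : 0 < d); omega⟩
  rw [hj, mem_dl_succ, totalDegree_pow_eq hne, ← hd] at h2
  omega

end filtW
end WA


set_option linter.all false

namespace WA

open MvPolynomial

section core
variable {p : ℕ} [Fact p.Prime] {σ : Type*} {Z : Type*} [CommRing Z] [IsDomain Z]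
  [Algebra (ZMod p) Z]

/-- any `m+1` elements are dependent -/
def Dep (m : ℕ) (Φ : MvPolynomial σ (ZMod p) →ₐ[ZMod p] Z) : Prop :=
  ∀ f : Fin (m + 1) → Z, ∃ c : Fin (m + 1) → MvPolynomial σ (ZMod p), c ≠ 0 ∧ ∑ j, Φ (c j) * f j = 0

theorem der_zero {m : ℕ} (hm : m < p) {Φ : MvPolynomial σ (ZMod p) →ₐ[ZMod p] Z}
    (hΦ : Function.Injective Φ) (hdep : Dep m Φ) (δ : Derivation (ZMod p) Z Z)
    (hδ : ∀ f, δ (Φ f) = 0) : δ = 0 := by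
  classical
  ext z
  letI := Φ.toRingHom.toAlgebra
  have hal : ∀ f, algebraMap (MvPolynomial σ (ZMod p)) Z f = Φ f := fun f => rfl
  let δ' : Derivation (MvPolynomial σ (ZMod p)) Z Z := Derivation.mk'
    { toFun := δ, map_add' := map_add δ, map_smul' := by
        intro f z
        simp [Algebra.smul_def, hal, hδ] } (by intro a b; exact δ.leibniz a b)
  have hex : ∃ d, ∃ f : Polynomial (MvPolynomial σ (ZMod p)), f ≠ 0 ∧ f.natDegree = d ∧ d ≤ m ∧
      Polynomial.aeval z f = 0 := by
    obtain ⟨c, hc, hs⟩ := hdep (fun j => z ^ (j : ℕ))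
    refine ⟨_, ∑ j : Fin (m+1), Polynomial.monomial (j : ℕ) (c j), ?_, rfl, ?_, ?_⟩
    · intro h
      apply hc
      funext i
      have := congrArg (fun f => Polynomial.coeff f (i : ℕ)) h
      simpa [Polynomial.finset_sum_coeff, Polynomial.coeff_monomial, Fin.val_inj] using this
    · apply Polynomial.natDegree_sum_le_of_forall_le
      intro j _
      exact (Polynomial.natDegree_monomial_le _).trans (by omega)
    · rw [map_sum, ← hs]
      refine Finset.sum_congr rfl fun j _ => ?_
      rw [Polynomial.aeval_monomial, hal]
  obtain ⟨f, hf, hfd, hdm, hfz⟩ := Nat.find_spec hex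
  have hmin := fun k (hk : k < Nat.find hex) => Nat.find_min hex hk
  have h1 : δ' (Polynomial.aeval z f) = 0 := by rw [hfz, map_zero]
  rw [Derivation.map_aeval, smul_eq_mul, mul_eq_zero] at h1
  rcases h1 with h1 | h1
  · exfalso
    by_cases h0 : f.natDegree = 0
    · rw [Polynomial.eq_C_of_natDegree_eq_zero h0] at hfz hf
      rw [Polynomial.aeval_C, hal, map_eq_zero_iff _ hΦ] at hfz
      rw [hfz] at hf; simp at hf
    by_cases hd : Polynomial.derivative f = 0
    · have := congrArg (fun g => Polynomial.coeff g (f.natDegree - 1)) hd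
      simp only [Polynomial.coeff_derivative, Polynomial.coeff_zero] at this
      rw [show f.natDegree - 1 + 1 = f.natDegree by omega] at this
      have h2 : ((f.natDegree - 1 : ℕ) : MvPolynomial σ (ZMod p)) + 1 = (f.natDegree : ℕ) := by
        rw [← Nat.cast_succ]; congr 1; omega
      rw [h2, mul_eq_zero] at this
      rcases this with h | h
      · exact hf (by simpa using h)
      · rw [CharP.cast_eq_zero_iff _ p] at h
        have := Nat.le_of_dvd (by omega) h
        omega
    · exact hmin _ (by rw [← hfd]; exact Polynomial.natDegree_derivative_lt h0)
        ⟨_, hd, rfl, by have := Polynomial.natDegree_derivative_le f; omega, h1⟩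
  · exact h1

/-- the `p`-th iterate of a derivation is a derivation -/
noncomputable def derPow (δ : Derivation (ZMod p) Z Z) : Derivation (ZMod p) Z Z :=
  Derivation.mk' ((δ : Z →ₗ[ZMod p] Z) ^ p) (by
    intro a b
    set T := (δ : Z →ₗ[ZMod p] Z)
    let A : Module.End (ZMod p) (TensorProduct (ZMod p) Z Z) := TensorProduct.map T LinearMap.id
    let B : Module.End (ZMod p) (TensorProduct (ZMod p) Z Z) := TensorProduct.map LinearMap.id T
    let μ := LinearMap.mul' (ZMod p) Z
    have hμ : ∀ t, μ ((A + B) t) = T (μ t) := by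
      intro t
      induction t using TensorProduct.induction_on with
      | zero => simp
      | add x y hx hy => simp only [map_add, hx, hy]
      | tmul x y => simp [μ, A, B, T]; ring
    have hμk : ∀ (k : ℕ) t, μ (((A + B) ^ k) t) = (T ^ k) (μ t) := by
      intro k
      induction k with
      | zero => intro t; rfl
      | succ k ih => intro t; rw [pow_succ, pow_succ, Module.End.mul_apply, ih, hμ]; rfl
    have hc : Commute A B := by
      ext x y; simp [A, B]
    haveI : CharP (Module.End (ZMod p) (TensorProduct (ZMod p) Z Z)) p := by
      have : FaithfulSMul (ZMod p) (Module.End (ZMod p) (TensorProduct (ZMod p) Z Z)) := inferInstance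
      exact charP_of_injective_algebraMap (FaithfulSMul.algebraMap_injective (ZMod p) _) p
    have h1 : (A + B) ^ p = A ^ p + B ^ p := add_pow_char_of_commute p hc
    have hA : ∀ (k : ℕ), (A ^ k) (TensorProduct.tmul _ a b) = TensorProduct.tmul _ ((T ^ k) a) b := by
      intro k
      induction k with
      | zero => rfl
      | succ k ih => rw [pow_succ', pow_succ', Module.End.mul_apply, ih]; simp [A]
    have hB : ∀ (k : ℕ), (B ^ k) (TensorProduct.tmul _ a b) = TensorProduct.tmul _ a ((T ^ k) b) := by
      intro k
      induction k with
      | zero => rfl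
      | succ k ih => rw [pow_succ', pow_succ', Module.End.mul_apply, ih]; simp [B]
    have := hμk p (TensorProduct.tmul _ a b)
    rw [h1, LinearMap.add_apply, hA, hB, map_add] at this
    simp only [μ, LinearMap.mul'_apply] at this
    rw [← this]; simp; ring)

theorem derPow_apply (δ : Derivation (ZMod p) Z Z) (z : Z) : derPow δ z = δ^[p] z := by
  show ((δ : Z →ₗ[ZMod p] Z) ^ p) z = _
  rw [Module.End.pow_apply]; rfl

end core

section eig
variable {F V : Type*} [Field F] [AddCommGroup V] [Module F V]

theorem eig_decomp (T : V →ₗ[F] V) (S : Finset F) : ∀ z : V,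
    (Polynomial.aeval T (∏ i ∈ S, (Polynomial.X - Polynomial.C i))) z = 0 →
    ∃ c : F → V, z = ∑ i ∈ S, c i ∧ ∀ i, T (c i) = i • c i := by
  classical
  induction S using Finset.induction_on with
  | empty => intro z hz; refine ⟨0, by simpa using hz, by simp⟩
  | insert a S ha ih =>
    intro z hz
    rw [Finset.prod_insert ha, mul_comm, map_mul, Module.End.mul_apply] at hz
    obtain ⟨c, hc, hT⟩ := ih _ hz
    have hz1 : T z - a • z = ∑ i ∈ S, c i := by rw [← hc]; simp
    set w := ∑ i ∈ S, (i - a)⁻¹ • c i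
    have hw : T w - a • w = ∑ i ∈ S, c i := by
      rw [map_sum, Finset.smul_sum, ← Finset.sum_sub_distrib]
      refine Finset.sum_congr rfl fun i hi => ?_
      have : i - a ≠ 0 := by
        intro h; rw [sub_eq_zero] at h; exact ha (h ▸ hi)
      rw [map_smul, hT, smul_comm a, ← smul_sub, ← sub_smul, smul_smul, inv_mul_cancel₀ this, one_smul]
    refine ⟨fun i => if i = a then z - w else (i - a)⁻¹ • c i, ?_, ?_⟩
    · rw [Finset.sum_insert ha, if_pos rfl]
      rw [Finset.sum_congr rfl (g := fun i => (i - a)⁻¹ • c i)]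
      · simp [w]
      · intro i hi; rw [if_neg]; rintro rfl; exact ha hi
    · intro i
      dsimp only
      split_ifs with h
      · subst h
        rw [map_sub, smul_sub, ← sub_eq_zero]
        have := hz1.trans hw.symm
        rw [← sub_eq_zero] at this
        rw [← this]; abel
      · rw [map_smul, hT, smul_comm]

theorem eig_indep (T : V →ₗ[F] V) (S : Finset F) : ∀ c : F → V, (∀ i, T (c i) = i • c i) →
    ∑ i ∈ S, c i = 0 → ∀ i ∈ S, c i = 0 := by
  classical
  induction S using Finset.induction_on with
  | empty => simp
  | insert a S ha ih =>
    intro c hT hs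
    have h0 := congrArg T hs
    have h1 := congrArg (fun v => a • v) hs
    simp only [map_zero, smul_zero, Finset.sum_insert ha, smul_add, map_add, hT, map_sum,
      Finset.smul_sum] at h0 h1
    have h2 : ∑ i ∈ S, (i - a) • c i = 0 := by
      simp only [sub_smul, Finset.sum_sub_distrib]
      have := h0.trans h1.symm
      rw [add_right_inj] at this
      rw [this, sub_self]
    have h3 := ih (fun i => (i - a) • c i) (by intro i; simp only [map_smul, hT]; rw [smul_comm]) h2
    have h4 : ∀ i ∈ S, c i = 0 := by
      intro i hi
      have := h3 i hi
      rw [smul_eq_zero] at this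
      refine this.resolve_left ?_
      intro h; rw [sub_eq_zero] at h; exact ha (h ▸ hi)
    intro i hi
    rw [Finset.mem_insert] at hi
    rcases hi with rfl | hi
    · rw [Finset.sum_insert ha, Finset.sum_eq_zero h4, add_zero] at hs; exact hs
    · exact h4 i hi

end eig
end WA


set_option linter.all false

namespace WA

open MvPolynomial

theorem val_sum_max {Z Γ ι : Type*} [Ring Z] [LinearOrderedCommGroupWithZero Γ] (w : Valuation Z Γ)
    (S : Finset ι) (t : ι → Z)
    (h : ∀ k ∈ S, ∀ l ∈ S, k ≠ l → w (t k) ≠ 0 → w (t k) ≠ w (t l)) :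
    ∀ k ∈ S, w (t k) ≤ w (∑ k ∈ S, t k) := by
  classical
  intro k hk
  obtain ⟨k0, hk0, hmax⟩ := Finset.exists_max_image S (fun k => w (t k)) ⟨k, hk⟩
  refine (hmax k hk).trans ?_
  by_cases h0 : w (t k0) = 0
  · rw [h0]; exact zero_le'
  rw [← Finset.add_sum_erase S t hk0]
  have : w (∑ l ∈ S.erase k0, t l) < w (t k0) := by
    apply Valuation.map_sum_lt w h0
    intro l hl
    rw [Finset.mem_erase] at hl
    exact lt_of_le_of_ne (hmax l hl.2) (fun h' => h k0 hk0 l hl.2 (Ne.symm hl.1) h0 h'.symm)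
  rw [Valuation.map_add_eq_of_lt_left w this]

section fa
variable {p : ℕ} [Fact p.Prime] {σ : Type*} 

open Classical in
/-- part of degree `a` mod `p`. -/
noncomputable def fa (a : ZMod p) (f : MvPolynomial σ (ZMod p)) : MvPolynomial σ (ZMod p) :=
  ∑ m ∈ f.support.filter (fun m => (m.degree : ZMod p) = a), monomial m (coeff m f)

open Classical in
theorem coeff_fa (a : ZMod p) (f : MvPolynomial σ (ZMod p)) (m : σ →₀ ℕ) :
    coeff m (fa a f) = if (m.degree : ZMod p) = a then coeff m f else 0 := by
  simp only [fa, coeff_sum, coeff_monomial]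
  rw [Finset.sum_ite_eq']
  simp only [Finset.mem_filter, mem_support_iff]
  by_cases h : coeff m f = 0 <;> simp [h]

theorem sum_fa (f : MvPolynomial σ (ZMod p)) : ∑ a, fa a f = f := by
  classical
  ext m
  simp [coeff_sum, coeff_fa]

theorem fa_totalDegree {a : ZMod p} {f : MvPolynomial σ (ZMod p)} (h : fa a f ≠ 0) :
    ((fa a f).totalDegree : ZMod p) = a := by
  classical
  have hne : (fa a f).support.Nonempty := by rwa [support_nonempty]
  obtain ⟨m, hm, hd⟩ := Finset.exists_mem_eq_sup _ hne (fun s : σ →₀ ℕ => s.sum fun _ e => e)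
  have : (fa a f).totalDegree = m.degree := hd
  rw [this]
  rw [mem_support_iff, coeff_fa] at hm
  by_contra h'
  rw [if_neg h'] at hm
  exact hm rfl

end fa

section core
variable {p : ℕ} [Fact p.Prime] {σ : Type*} {Z : Type*} [CommRing Z] [IsDomain Z]
  [Algebra (ZMod p) Z] {Γ : Type*} [LinearOrderedCommGroupWithZero Γ]

/-- Euler condition -/
def IsEuler (Φ : MvPolynomial σ (ZMod p) →ₐ[ZMod p] Z) (E : Derivation (ZMod p) Z Z) : Prop :=
  ∀ (m : σ →₀ ℕ) (r : ZMod p), E (Φ (monomial m r)) = (m.degree : ZMod p) • Φ (monomial m r)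

theorem IsEuler.fa {Φ : MvPolynomial σ (ZMod p) →ₐ[ZMod p] Z} {E : Derivation (ZMod p) Z Z}
    (h : IsEuler Φ E) (a : ZMod p) (f : MvPolynomial σ (ZMod p)) : E (Φ (fa a f)) = a • Φ (fa a f) := by
  classical
  rw [WA.fa, map_sum, map_sum, Finset.smul_sum]
  refine Finset.sum_congr rfl fun m hm => ?_
  rw [Finset.mem_filter] at hm
  rw [h, hm.2]

theorem der_pow_eig {E : Derivation (ZMod p) Z Z} {z : Z} {i : ZMod p} (h : E z = i • z) (k : ℕ) :
    E (z ^ k) = (k * i) • z ^ k := by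
  induction k with
  | zero => simp
  | succ k ih =>
    rw [pow_succ, E.leibniz, ih, h]
    simp only [smul_eq_mul, Algebra.smul_def, map_mul, map_natCast, Nat.cast_succ, map_add, map_one]
    ring

theorem der_mul_eig {E : Derivation (ZMod p) Z Z} {z z' : Z} {i j : ZMod p} (h : E z = i • z)
    (h' : E z' = j • z') : E (z * z') = (i + j) • (z * z') := by
  rw [E.leibniz, h, h']
  simp only [smul_eq_mul, Algebra.smul_def, map_add]
  ring

theorem eig_val_ne {m : ℕ} (hm : m < p) {Φ : MvPolynomial σ (ZMod p) →ₐ[ZMod p] Z}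
    (hΦ : Function.Injective Φ) (hdep : Dep m Φ) (w : Valuation Z Γ) (hw0 : ∀ z, w z = 0 → z = 0)
    (hw : ∀ f g, g ≠ 0 → f.totalDegree < g.totalDegree → w (Φ f) < w (Φ g))
    {E : Derivation (ZMod p) Z Z} (hE : IsEuler Φ E) {z z' : Z} {i j : ZMod p} (hij : i ≠ j)
    (hz : E z = i • z) (hz' : E z' = j • z') (hz0 : w z ≠ 0) : w z ≠ w z' := by
  classical
  intro heq
  obtain ⟨c, hc, hs⟩ := hdep (fun k => z ^ (k : ℕ) * z' ^ (m - k : ℕ))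
  obtain ⟨k0, hk0⟩ : ∃ k0, c k0 ≠ 0 := by
    by_contra! h; exact hc (funext h)
  set u : Fin (m+1) → Z := fun k => z ^ (k : ℕ) * z' ^ (m - k : ℕ) with hu
  have hEu : ∀ k, E (u k) = (k * (i - j) + m * j) • u k := by
    intro k
    have := der_mul_eig (der_pow_eig hz k) (der_pow_eig hz' (m - k))
    rw [hu]; dsimp only; rw [this]; congr 1
    rw [Nat.cast_sub (by omega)]; ring
  let t : ZMod p → Z := fun b => ∑ k : Fin (m+1), Φ (fa (b - (((k : ℕ) : ZMod p) * (i - j) + m * j)) (c k)) * u k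
  have ht : ∀ b, E (t b) = b • t b := by
    intro b
    simp only [t, map_sum, Finset.smul_sum]
    refine Finset.sum_congr rfl fun k _ => ?_
    rw [der_mul_eig (hE.fa _ _) (hEu k)]; congr 1; ring
  have hst : ∑ b, t b = 0 := by
    rw [← hs]
    simp only [t]
    rw [Finset.sum_comm]
    refine Finset.sum_congr rfl fun k _ => ?_
    rw [← Finset.sum_mul, ← map_sum]
    congr 2
    conv_rhs => rw [← sum_fa (c k)]
    exact Fintype.sum_equiv (Equiv.subRight _) _ _ (fun b => rfl)
  have hall := eig_indep (E : Z →ₗ[ZMod p] Z) Finset.univ t ht hst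
  have hu0 : ∀ k, w (u k) = w z ^ m := by
    intro k
    simp only [hu, map_mul, map_pow, ← heq]
    rw [← pow_add]; congr 1; omega
  obtain ⟨a, ha⟩ : ∃ a, fa a (c k0) ≠ 0 := by
    by_contra! h
    apply hk0; rw [← sum_fa (c k0)]; simp [h]
  set b := a + (k0 * (i - j) + m * j)
  have hb := val_sum_max w Finset.univ (fun k : Fin (m+1) =>
      Φ (fa (p := p) (b - (((k : ℕ) : ZMod p) * (i - j) + m * j)) (c k)) * u k) (by
    intro k _ l _ hkl hk
    have hk1 : fa (p := p) (b - (((k : ℕ) : ZMod p) * (i - j) + m * j)) (c k) ≠ 0 := by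
      intro h; rw [h] at hk; simp at hk
    by_cases hl1 : fa (p := p) (b - (((l : ℕ) : ZMod p) * (i - j) + m * j)) (c l) = 0
    · rw [hl1]; simpa using hk
    simp only [map_mul, hu0]
    intro h
    have h2 := mul_right_cancel₀ (pow_ne_zero _ hz0) h
    have hd : (fa (p := p) (b - (((k : ℕ) : ZMod p) * (i - j) + m * j)) (c k)).totalDegree
        = (fa (p := p) (b - (((l : ℕ) : ZMod p) * (i - j) + m * j)) (c l)).totalDegree := by
      by_contra hne
      rcases lt_or_gt_of_ne hne with h3 | h3
      · exact (hw _ _ hl1 h3).ne h2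
      · exact (hw _ _ hk1 h3).ne h2.symm
    have h4 := congrArg (Nat.cast : ℕ → ZMod p) hd
    rw [fa_totalDegree hk1, fa_totalDegree hl1] at h4
    have h5 : ((k : ℕ) : ZMod p) = (l : ℕ) := by
      have : (((k : ℕ) : ZMod p) - (l : ℕ)) * (i - j) = 0 := by linear_combination -h4
      rcases mul_eq_zero.1 this with h | h
      · exact sub_eq_zero.1 h
      · exact absurd (sub_eq_zero.1 h) hij
    rw [ZMod.natCast_eq_natCast_iff', Nat.mod_eq_of_lt (by omega), Nat.mod_eq_of_lt (by omega)] at h5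
    exact hkl (Fin.ext h5)) k0 (Finset.mem_univ _)
  have h6 := hall b (Finset.mem_univ _)
  simp only [t] at h6
  rw [h6, map_zero, le_zero_iff, map_mul, mul_eq_zero, hu0] at hb
  rcases hb with hb | hb
  · have := hw0 _ hb
    rw [map_eq_zero_iff _ hΦ] at this
    rw [show b - (((k0 : ℕ) : ZMod p) * (i - j) + m * j) = a by simp [b]] at this
    exact ha this
  · exact pow_ne_zero _ hz0 hb

theorem euler_val_le {m : ℕ} (hm : m < p) {Φ : MvPolynomial σ (ZMod p) →ₐ[ZMod p] Z}
    (hΦ : Function.Injective Φ) (hdep : Dep m Φ) (w : Valuation Z Γ) (hw0 : ∀ z, w z = 0 → z = 0)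
    (hw : ∀ f g, g ≠ 0 → f.totalDegree < g.totalDegree → w (Φ f) < w (Φ g))
    (hwF : ∀ a : ZMod p, w (algebraMap _ _ a) ≤ 1)
    {E : Derivation (ZMod p) Z Z} (hE : IsEuler Φ E) (z : Z) : w (E z) ≤ w z := by
  classical
  have hEp : derPow E = E := by
    rw [← sub_eq_zero]
    apply der_zero hm hΦ hdep
    intro f
    rw [Derivation.sub_apply, derPow_apply, sub_eq_zero]
    have h1 : ∀ (k : ℕ) (a : ZMod p), E^[k] (Φ (fa a f)) = a ^ k • Φ (fa a f) := by
      intro k a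
      induction k with
      | zero => simp
      | succ k ih =>
        rw [Function.iterate_succ_apply', ih, E.map_smul, hE.fa, smul_smul, pow_succ]
    have h2 : ∀ (k : ℕ), E^[k] (Φ f) = ∑ a, a ^ k • Φ (fa a f) := by
      intro k
      conv_lhs => rw [← sum_fa f, map_sum]
      have : ∀ v, E^[k] v = ((E : Z →ₗ[ZMod p] Z) ^ k) v := by
        intro v; rw [Module.End.pow_apply]; rfl
      rw [this, map_sum]
      refine Finset.sum_congr rfl fun a _ => ?_
      rw [← this, h1]
    have h3 := h2 1
    rw [Function.iterate_one] at h3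
    rw [h2, h3]
    simp [ZMod.pow_card]
  have hdec := eig_decomp (E : Z →ₗ[ZMod p] Z) Finset.univ z (by
    have : (∏ i : ZMod p, (Polynomial.X - Polynomial.C i)) = Polynomial.X ^ p - Polynomial.X := by
      have h0 := FiniteField.roots_X_pow_card_sub_X (ZMod p)
      rw [ZMod.card] at h0
      have hp1 := (Fact.out : p.Prime).one_lt
      have h1 := Polynomial.prod_multiset_X_sub_C_of_monic_of_roots_card_eq
        (p := (Polynomial.X ^ p - Polynomial.X : Polynomial (ZMod p)))
        (Polynomial.monic_X_pow_sub (by rw [Polynomial.degree_X]; exact_mod_cast hp1)) (by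
          rw [h0, FiniteField.X_pow_card_sub_X_natDegree_eq _ hp1]
          simp [Finset.card_univ, ZMod.card])
      rw [h0] at h1
      exact h1
    rw [this, map_sub, map_pow, Polynomial.aeval_X, LinearMap.sub_apply, sub_eq_zero]
    exact DFunLike.congr_fun hEp z)
  obtain ⟨c, hc, hT⟩ := hdec
  have hT' : ∀ i, E (c i) = i • c i := hT
  have h1 := val_sum_max w Finset.univ c (by
    intro k _ l _ hkl hk
    exact eig_val_ne hm hΦ hdep w hw0 hw hE hkl (hT' k) (hT' l) hk)
  rw [← hc] at h1
  conv_lhs => rw [hc, map_sum]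
  apply Valuation.map_sum_le
  intro i hi
  rw [hT', Algebra.smul_def, map_mul]
  calc _ ≤ 1 * w (c i) := mul_le_mul' (hwF i) le_rfl
    _ ≤ _ := by rw [one_mul]; exact h1 i hi

end core
end WA


set_option linter.all false

namespace WA

open MvPolynomial

section shift
variable {p : ℕ} [Fact p.Prime] {σ : Type*}

/-- translation -/
noncomputable def shf (v : σ → ZMod p) : MvPolynomial σ (ZMod p) →ₐ[ZMod p] MvPolynomial σ (ZMod p) :=
  aeval (fun s => X s + C (v s))

theorem shf_shf (v : σ → ZMod p) (f : MvPolynomial σ (ZMod p)) : shf v (shf (-v) f) = f := by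
  have : (shf v).comp (shf (-v)) = AlgHom.id _ _ := by
    ext s; simp [shf]
  exact DFunLike.congr_fun this f

theorem shf_mem_dl (v : σ → ZMod p) {k : ℕ} {f : MvPolynomial σ (ZMod p)}
    (hf : f ∈ dl (ZMod p) σ k) : shf v f ∈ dl (ZMod p) σ k := by
  refine dl_induction (P := fun f => shf v f ∈ dl (ZMod p) σ k) (by simp) ?_ ?_ hf
  · intro p q h h'; rw [map_add]; exact add_mem h h'
  intro m hm r
  have key : ∀ m : σ →₀ ℕ, shf v (monomial m 1) ∈ dl (ZMod p) σ (m.degree + 1) := by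
    intro m
    induction m using Finsupp.induction_linear with
    | zero => 
      have : (monomial (0 : σ →₀ ℕ) (1 : ZMod p)) = 1 := rfl
      rw [this, map_one]; exact dl_mono (by omega) one_mem_dl
    | add f g hf hg =>
      have : (monomial (f + g) (1 : ZMod p)) = monomial f 1 * monomial g 1 := by
        rw [monomial_mul, one_mul]
      rw [this, map_mul, map_add]
      exact dl_mono (by omega) (mul_mem_dl hf hg)
    | single a b =>
      have : (monomial (Finsupp.single a b) (1 : ZMod p)) = X a ^ b := by
        rw [X_pow_eq_monomial]
      rw [this, map_pow, Finsupp.degree_single]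
      have h1 : shf v (X a : MvPolynomial σ (ZMod p)) ∈ dl (ZMod p) σ 2 := by
        simp only [shf, aeval_X]
        exact add_mem (X_mem_dl _) (monomial_mem_dl _ (by simp))
      induction b with
      | zero => simpa using one_mem_dl
      | succ b ih =>
        rw [pow_succ']
        exact dl_mono (by omega) (mul_mem_dl h1 (ih (by rw [X_pow_eq_monomial])))
  have h1 : (monomial m r) = r • (monomial m 1 : MvPolynomial σ (ZMod p)) := by
    simp [smul_monomial]
  rw [h1, map_smul]
  exact Submodule.smul_mem _ _ (dl_mono (by omega) (key m))

theorem shf_totalDegree (v : σ → ZMod p) (f : MvPolynomial σ (ZMod p)) :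
    (shf v f).totalDegree = f.totalDegree := by
  apply le_antisymm
  · exact mem_dl_succ.1 (shf_mem_dl v (mem_dl_succ.2 le_rfl))
  · have := shf_mem_dl (-v) (mem_dl_succ.2 (le_refl (shf v f).totalDegree))
    have h2 := shf_shf (-v) f
    rw [neg_neg] at h2
    rw [h2] at this
    exact mem_dl_succ.1 this

theorem shf_inj (v : σ → ZMod p) : Function.Injective (shf v) := by
  intro f g h
  have h2 := shf_shf (-v) f
  rw [neg_neg, h] at h2
  rw [← h2]
  have h3 := shf_shf (-v) g
  rwa [neg_neg] at h3

end shift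

section core
variable {p : ℕ} [Fact p.Prime] {σ : Type*} {Z : Type*} [CommRing Z] [IsDomain Z]
  [Algebra (ZMod p) Z] {Γ : Type*} [LinearOrderedCommGroupWithZero Γ]

/-- duality condition -/
def Dual [DecidableEq σ] (Φ : MvPolynomial σ (ZMod p) →ₐ[ZMod p] Z)
    (D : σ → Derivation (ZMod p) Z Z) : Prop :=
  ∀ s t, D s (Φ (X t)) = if s = t then 1 else 0

variable [DecidableEq σ] {Φ : MvPolynomial σ (ZMod p) →ₐ[ZMod p] Z}
    {D : σ → Derivation (ZMod p) Z Z}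

theorem Dual.pderiv (h : Dual Φ D) (s : σ) (f : MvPolynomial σ (ZMod p)) :
    D s (Φ f) = Φ (pderiv s f) := by
  induction f using MvPolynomial.induction_on with
  | C a => 
    rw [pderiv_C, map_zero, ← algebraMap_eq, AlgHom.commutes]; simp
  | add f g hf hg => simp only [map_add, hf, hg]
  | mul_X f t hf =>
    rw [map_mul, (D s).leibniz, hf, h, Derivation.leibniz, pderiv_X]
    simp only [map_add, smul_eq_mul, map_mul, Pi.single_apply]
    by_cases hst : s = t
    · subst hst; simp
    · simp [hst, Ne.symm hst]

theorem der_zero' {m : ℕ} (hm : m < p) (hΦ : Function.Injective Φ) (hdep : Dep m Φ)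
    (δ : Derivation (ZMod p) Z Z) (hδ : ∀ t, δ (Φ (X t)) = 0) : δ = 0 := by
  apply der_zero hm hΦ hdep
  intro f
  induction f using MvPolynomial.induction_on with
  | C a => rw [← algebraMap_eq, AlgHom.commutes]; simp
  | add f g hf hg => simp only [map_add, hf, hg, add_zero]
  | mul_X f t hf => rw [map_mul, δ.leibniz, hf, hδ]; simp

theorem Dual.comm (h : Dual Φ D) {m : ℕ} (hm : m < p) (hΦ : Function.Injective Φ) (hdep : Dep m Φ)
    (s t : σ) (z : Z) : D s (D t z) = D t (D s z) := by
  have : ⁅D s, D t⁆ = 0 := by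
    apply der_zero' hm hΦ hdep
    intro u
    rw [Derivation.commutator_apply, h, h]
    split_ifs <;> simp
  have := DFunLike.congr_fun this z
  rw [Derivation.commutator_apply] at this
  exact sub_eq_zero.1 this

theorem Dual.pow (h : Dual Φ D) {m : ℕ} (hm : m < p) (hΦ : Function.Injective Φ) (hdep : Dep m Φ)
    (s : σ) (z : Z) : (D s)^[p] z = 0 := by
  have : derPow (D s) = 0 := by
    apply der_zero' hm hΦ hdep
    intro u
    rw [derPow_apply]
    obtain ⟨k, hk⟩ : ∃ k, p = k + 2 := ⟨p - 2, by have := (Fact.out : p.Prime).two_le; omega⟩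
    have : (D s)^[k + 2] (Φ (X u)) = 0 := by
      rw [Function.iterate_add_apply, Function.iterate_succ_apply, Function.iterate_one, h]
      have : (D s) (if s = u then 1 else 0) = 0 := by split_ifs <;> simp
      rw [this, iterate_map_zero]
    rwa [← hk] at this
  rw [← derPow_apply, this]; rfl

theorem Dual.shf (h : Dual Φ D) (v : σ → ZMod p) : Dual (Φ.comp (shf v)) D := by
  intro s t
  have : (Φ.comp (WA.shf v)) (X t) = Φ (X t) + algebraMap _ _ (v t) := by
    simp [WA.shf, ← algebraMap_eq, AlgHom.commutes, -algebraMap_eq]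
  rw [this, map_add, h]; simp

variable [Fintype σ]

/-- Euler field -/
noncomputable def eul (Φ : MvPolynomial σ (ZMod p) →ₐ[ZMod p] Z) (D : σ → Derivation (ZMod p) Z Z) :
    Derivation (ZMod p) Z Z := ∑ s, Φ (X s) • D s

theorem eul_apply (z : Z) : eul Φ D z = ∑ s, Φ (X s) * D s z := by
  have h : ∀ S : Finset σ, (∑ s ∈ S, Φ (X s) • D s) z = ∑ s ∈ S, Φ (X s) * D s z := by
    intro S
    induction S using Finset.induction_on with
    | empty => simp
    | insert a S ha ih =>
      rw [Finset.sum_insert ha, Finset.sum_insert ha, Derivation.add_apply, ih]; rfl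
  exact h _

theorem Dual.euler (h : Dual Φ D) : IsEuler Φ (eul Φ D) := by
  intro m r
  rw [eul_apply]
  simp only [h.pderiv, ← map_mul, ← map_sum]
  have h1 : (monomial m r : MvPolynomial σ (ZMod p)).IsHomogeneous m.degree :=
    isHomogeneous_monomial r rfl
  have := h1.sum_X_mul_pderiv
  rw [this, map_nsmul, Nat.cast_smul_eq_nsmul]

/-- bound for `D s`. -/
theorem der_val_le (h : Dual Φ D) {m : ℕ} (hm : m < p)
    (hΦ : Function.Injective Φ) (hdep : Dep m Φ) (w : Valuation Z Γ) (hw0 : ∀ z, w z = 0 → z = 0)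
    (hw : ∀ f g, g ≠ 0 → f.totalDegree < g.totalDegree → w (Φ f) < w (Φ g))
    (hwF : ∀ a : ZMod p, w (algebraMap _ _ a) ≤ 1) (s : σ) (z : Z) : w (D s z) ≤ w z := by
  set v : σ → ZMod p := Pi.single s 1
  have h1 := euler_val_le hm hΦ hdep w hw0 hw hwF h.euler z
  have hdep' : Dep m (Φ.comp (shf v)) := by
    intro f
    obtain ⟨c, hc, hs⟩ := hdep f
    refine ⟨fun j => shf (-v) (c j), ?_, ?_⟩
    · intro h0; apply hc; funext j
      have := congrFun h0 j
      simp only [Pi.zero_apply] at this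
      exact (map_eq_zero_iff _ (shf_inj _)).1 this
    · simpa [shf_shf] using hs
  have h2 := euler_val_le hm (Φ := Φ.comp (shf v)) (hΦ.comp (shf_inj v)) hdep' w hw0 (by
    intro f g hg hfg
    show w (Φ (shf v f)) < w (Φ (shf v g))
    apply hw
    · rwa [Ne, map_eq_zero_iff _ (shf_inj _)]
    · rwa [shf_totalDegree, shf_totalDegree]) hwF (h.shf v).euler z
  have h3 : D s z = eul (Φ.comp (shf v)) D z - eul Φ D z := by
    rw [eul_apply, eul_apply, ← Finset.sum_sub_distrib]
    rw [Finset.sum_eq_single s]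
    · simp [shf, v, ← algebraMap_eq, -algebraMap_eq, AlgHom.commutes]
      ring
    · intro t _ hts
      simp [shf, v, ← algebraMap_eq, -algebraMap_eq, AlgHom.commutes, Pi.single_apply, hts]
    · simp
  rw [h3]
  exact (Valuation.map_sub _ _ _).trans (max_le h2 h1)

end core
end WA


set_option linter.all false

namespace WA

open MvPolynomial

section O
variable {F : Type*} [Field F] {σ : Type*}

/-- the valuation ring of the degree valuation -/
noncomputable def degO (F : Type*) [Field F] (σ : Type*) :
    ValuationSubring (FractionRing (MvPolynomial σ F)) where
  carrier := {z | ∃ f g : MvPolynomial σ F, g ≠ 0 ∧ f.totalDegree ≤ g.totalDegree ∧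
    z = algebraMap _ (FractionRing (MvPolynomial σ F)) f / algebraMap _ _ g}
  mul_mem' := by
    rintro _ _ ⟨f, g, hg, h, rfl⟩ ⟨f', g', hg', h', rfl⟩
    refine ⟨f * f', g * g', mul_ne_zero hg hg', ?_, ?_⟩
    · rw [totalDegree_mul_of_isDomain hg hg']
      exact (totalDegree_mul _ _).trans (add_le_add h h')
    · rw [map_mul, map_mul, div_mul_div_comm]
  one_mem' := ⟨1, 1, one_ne_zero, le_rfl, by simp⟩
  add_mem' := by
    rintro _ _ ⟨f, g, hg, h, rfl⟩ ⟨f', g', hg', h', rfl⟩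
    have i1 : algebraMap _ (FractionRing (MvPolynomial σ F)) g ≠ 0 := by simpa using hg
    have i2 : algebraMap _ (FractionRing (MvPolynomial σ F)) g' ≠ 0 := by simpa using hg'
    refine ⟨f * g' + g * f', g * g', mul_ne_zero hg hg', ?_, ?_⟩
    · rw [totalDegree_mul_of_isDomain hg hg']
      refine (totalDegree_add _ _).trans (max_le ?_ ?_)
      · exact (totalDegree_mul _ _).trans (add_le_add h le_rfl)
      · exact (totalDegree_mul _ _).trans (add_le_add le_rfl h')
    · rw [div_add_div _ _ i1 i2]; simp
  zero_mem' := ⟨0, 1, one_ne_zero, by simp, by simp⟩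
  neg_mem' := by
    rintro _ ⟨f, g, hg, h, rfl⟩
    refine ⟨-f, g, hg, by rwa [totalDegree_neg], by rw [map_neg, neg_div]⟩
  mem_or_inv_mem' := by
    intro z
    obtain ⟨f, g, hg, rfl⟩ := IsFractionRing.div_surjective (A := MvPolynomial σ F) z
    have hg0 : g ≠ 0 := nonZeroDivisors.ne_zero hg
    rcases le_total f.totalDegree g.totalDegree with h | h
    · exact Or.inl ⟨f, g, hg0, h, rfl⟩
    · by_cases hf : f = 0
      · left; exact ⟨0, 1, one_ne_zero, by simp, by simp [hf]⟩
      · right; exact ⟨g, f, hf, h, by rw [inv_div]⟩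

theorem degO_const {f : MvPolynomial σ F} (h : algebraMap _ _ f ∈ degO F σ) : f.totalDegree = 0 := by
  obtain ⟨a, b, hb, hab, h⟩ := h
  by_cases hf : f = 0
  · simp [hf]
  have i1 : algebraMap _ (FractionRing (MvPolynomial σ F)) b ≠ 0 := by simpa using hb
  rw [eq_div_iff i1, ← map_mul] at h
  have h2 := IsFractionRing.injective (MvPolynomial σ F) _ h
  rw [← h2, totalDegree_mul_of_isDomain hf hb] at hab
  omega

end O

section core
variable {p : ℕ} [Fact p.Prime] {σ : Type*} {Z : Type*} [CommRing Z] [IsDomain Z]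
  [Algebra (ZMod p) Z]

/-- valuation rings over the place at infinity -/
def GoodV (Φ : MvPolynomial σ (ZMod p) →ₐ[ZMod p] Z) (V : ValuationSubring (FractionRing Z)) : Prop :=
  ∀ f g : MvPolynomial σ (ZMod p), g ≠ 0 → f.totalDegree ≤ g.totalDegree →
    algebraMap Z (FractionRing Z) (Φ f) / algebraMap Z (FractionRing Z) (Φ g) ∈ V

theorem alg_of_bounded {Φ : MvPolynomial σ (ZMod p) →ₐ[ZMod p] Z} (hΦ : Function.Injective Φ)
    (κ : Z) (hIntegral : Φ.toRingHom.IsIntegralElem κ)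
    (hb : ∀ V : ValuationSubring (FractionRing Z), GoodV Φ V → algebraMap Z (FractionRing Z) κ ∈ V) :
    IsIntegral (ZMod p) κ := by
  letI : Algebra (MvPolynomial σ (ZMod p)) Z := Φ.toRingHom.toAlgebra
  have hal : ∀ f, algebraMap (MvPolynomial σ (ZMod p)) Z f = Φ f := fun f => rfl
  haveI : FaithfulSMul (MvPolynomial σ (ZMod p)) Z := by
    rw [faithfulSMul_iff_algebraMap_injective]; exact hΦ
  let M := FractionRing (MvPolynomial σ (ZMod p))
  let L := FractionRing Z
  letI : Algebra M L := FractionRing.liftAlgebra _ _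
  haveI : IsScalarTower (MvPolynomial σ (ZMod p)) M L := FractionRing.isScalarTower_liftAlgebra _ _
  have hintP : IsIntegral (MvPolynomial σ (ZMod p)) κ := hIntegral
  have e1 := minpoly.isIntegrallyClosed_eq_field_fractions M L hintP
  set S : Set L := {z | ∃ f g : MvPolynomial σ (ZMod p), g ≠ 0 ∧ f.totalDegree ≤ g.totalDegree ∧
    z = algebraMap Z L (Φ f) / algebraMap Z L (Φ g)}
  have hmem : algebraMap Z L κ ∈ (integralClosure (Subring.closure S) L).toSubring := by
    rw [← iInf_valuationSubring_superset, Subring.mem_iInf]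
    rintro ⟨V, hV⟩
    apply hb
    intro f g hg hfg
    exact hV ⟨f, g, hg, hfg, rfl⟩
  have hmem' : IsIntegral (Subring.closure S) (algebraMap Z L κ) := hmem
  let O := degO (ZMod p) σ
  let fO : O →+* L := algebraMap O L
  have hSO : Subring.closure S ≤ fO.range := by
    rw [Subring.closure_le]
    rintro _ ⟨f, g, hg, hfg, rfl⟩
    refine ⟨⟨algebraMap _ M f / algebraMap _ M g, ⟨f, g, hg, hfg, rfl⟩⟩, ?_⟩
    show algebraMap M L (algebraMap _ M f / algebraMap _ M g) = _
    rw [map_div₀, ← IsScalarTower.algebraMap_apply, ← IsScalarTower.algebraMap_apply,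
      IsScalarTower.algebraMap_apply (MvPolynomial σ (ZMod p)) Z L f,
      IsScalarTower.algebraMap_apply (MvPolynomial σ (ZMod p)) Z L g, hal, hal]
  have hO : IsIntegral O (algebraMap Z L κ) := by
    obtain ⟨q, hq, hq0⟩ := hmem'
    have hl : q.map (algebraMap (Subring.closure S) L) ∈ Polynomial.lifts fO := by
      rw [Polynomial.lifts_iff_coeff_lifts]
      intro k
      rw [Polynomial.coeff_map]
      exact hSO (q.coeff k).2
    obtain ⟨r, hr, _, hrm⟩ := Polynomial.lifts_and_natDegree_eq_and_monic hl (hq.map _)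
    refine ⟨r, hrm, ?_⟩
    rw [← Polynomial.eval_map, hr, Polynomial.eval_map]; exact hq0
  have e2 := minpoly.isIntegrallyClosed_eq_field_fractions' M hO
  have hcoef : ∀ k, ((minpoly (MvPolynomial σ (ZMod p)) κ).coeff k).totalDegree = 0 := by
    intro k
    apply degO_const
    have := congrArg (fun f => Polynomial.coeff f k) (e1.symm.trans e2)
    simp only [Polynomial.coeff_map] at this
    rw [this]
    exact ((minpoly O (algebraMap Z L κ)).coeff k).2
  have hl : minpoly (MvPolynomial σ (ZMod p)) κ ∈ Polynomial.lifts (C : ZMod p →+* MvPolynomial σ (ZMod p)) := by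
    rw [Polynomial.lifts_iff_coeff_lifts]
    intro k
    exact ⟨_, ((totalDegree_eq_zero_iff_eq_C).1 (hcoef k)).symm⟩
  obtain ⟨r, hr, _, hrm⟩ := Polynomial.lifts_and_natDegree_eq_and_monic hl (minpoly.monic hintP)
  refine ⟨r, hrm, ?_⟩
  have h0 := minpoly.aeval (MvPolynomial σ (ZMod p)) κ
  rw [← hr, Polynomial.aeval_def, Polynomial.eval₂_map] at h0
  rw [← h0]
  congr 1
  exact Subsingleton.elim _ _

end core
end WA


set_option linter.all false

namespace WA

open MvPolynomial

section core
variable {p : ℕ} [Fact p.Prime] {σ : Type*} {Z : Type*} [CommRing Z] [IsDomain Z]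
  [Algebra (ZMod p) Z]

/-- valuations extending the degree valuation -/
structure GV {Γ : Type*} [LinearOrderedCommGroupWithZero Γ] (Φ : MvPolynomial σ (ZMod p) →ₐ[ZMod p] Z)
    (w : Valuation Z Γ) (q : Γ) : Prop where
  w0 : ∀ z, w z = 0 → z = 0
  deg : ∀ f, f ≠ 0 → w (Φ f) = q ^ f.totalDegree
  one_le : 1 ≤ q

theorem GoodV.gv {Φ : MvPolynomial σ (ZMod p) →ₐ[ZMod p] Z} (hΦ : Function.Injective Φ)
    {V : ValuationSubring (FractionRing Z)} (h : GoodV Φ V) (s0 : σ) :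
    GV Φ (V.valuation.comap (algebraMap Z (FractionRing Z)))
      (V.valuation (algebraMap Z (FractionRing Z) (Φ (X s0)))) := by
  have hne : ∀ g : MvPolynomial σ (ZMod p), g ≠ 0 →
      V.valuation (algebraMap Z (FractionRing Z) (Φ g)) ≠ 0 := by
    intro g hg
    rw [Valuation.ne_zero_iff]
    simpa using (map_ne_zero_iff Φ hΦ).2 hg
  have key : ∀ f g : MvPolynomial σ (ZMod p), g ≠ 0 → f.totalDegree ≤ g.totalDegree →
      V.valuation (algebraMap Z (FractionRing Z) (Φ f)) ≤
      V.valuation (algebraMap Z (FractionRing Z) (Φ g)) := by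
    intro f g hg hfg
    have := (V.valuation_le_one_iff _).2 (h f g hg hfg)
    rw [map_div₀] at this
    exact (div_le_one₀ (zero_lt_iff.2 (hne g hg))).1 this
  refine ⟨?_, ?_, ?_⟩
  · intro z hz
    rw [Valuation.comap_apply, Valuation.zero_iff] at hz
    simpa using hz
  · intro f hf
    rw [Valuation.comap_apply, ← map_pow, ← map_pow, ← map_pow]
    have hx : (X s0 ^ f.totalDegree : MvPolynomial σ (ZMod p)) ≠ 0 := pow_ne_zero _ (X_ne_zero _)
    have hd : (X s0 ^ f.totalDegree : MvPolynomial σ (ZMod p)).totalDegree = f.totalDegree :=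
      totalDegree_X_pow _ _
    exact le_antisymm (key _ _ hx hd.ge) (key _ _ hf hd.le)
  · have := key 1 (X s0) (X_ne_zero _) (by simp)
    simpa using this

section gv
variable {Γ : Type*} [LinearOrderedCommGroupWithZero Γ] {Φ : MvPolynomial σ (ZMod p) →ₐ[ZMod p] Z}
    {w : Valuation Z Γ} {q : Γ}

theorem GV.hw (h : GV Φ w q) (hq : 1 < q) (f g : MvPolynomial σ (ZMod p)) (hg : g ≠ 0)
    (hfg : f.totalDegree < g.totalDegree) : w (Φ f) < w (Φ g) := by
  rw [h.deg g hg]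
  by_cases hf : f = 0
  · rw [hf, map_zero, map_zero]; exact zero_lt_iff.2 (pow_ne_zero _ (zero_lt_one.trans hq).ne')
  · rw [h.deg f hf]; exact pow_lt_pow_right₀ hq hfg

theorem GV.le (h : GV Φ w q) (f : MvPolynomial σ (ZMod p)) {d : ℕ} (hf : f.totalDegree ≤ d) :
    w (Φ f) ≤ q ^ d := by
  by_cases hf : f = 0
  · rw [hf, map_zero, map_zero]; exact zero_le
  · rw [h.deg f hf]; exact pow_le_pow_right₀ h.one_le ‹_›

theorem GV.hwF (h : GV Φ w q) (a : ZMod p) : w (algebraMap _ _ a) ≤ 1 := by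
  have := h.le (C a) (d := 0) (by simp)
  rwa [← algebraMap_eq, AlgHom.commutes, pow_zero] at this

theorem GV.relation (h : GV Φ w q) {m : ℕ} (hdep : Dep m Φ) {z : Z} (hz : z ≠ 0) :
    ∃ k l l' : ℕ, 1 ≤ k ∧ k ≤ m ∧ w z ^ k * q ^ l = q ^ l' := by
  classical
  obtain ⟨c, hc, hs⟩ := hdep (fun j => z ^ (j : ℕ))
  have hwz : w z ≠ 0 := fun h' => hz (h.w0 z h')
  have hq0 : q ≠ 0 := (zero_lt_one.trans_le h.one_le).ne'
  by_cases hall : ∀ k ∈ (Finset.univ : Finset (Fin (m+1))), ∀ l ∈ (Finset.univ : Finset (Fin (m+1))),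
      k ≠ l → w (Φ (c k) * z ^ (k : ℕ)) ≠ 0 → w (Φ (c k) * z ^ (k : ℕ)) ≠ w (Φ (c l) * z ^ (l : ℕ))
  · exfalso
    have := val_sum_max w Finset.univ (fun k : Fin (m+1) => Φ (c k) * z ^ (k : ℕ)) hall
    rw [hs, map_zero] at this
    apply hc
    funext k
    have h1 := this k (Finset.mem_univ _)
    rw [map_mul, map_pow] at h1
    by_contra h2
    rw [h.deg _ h2] at h1
    exact (mul_ne_zero (pow_ne_zero _ hq0) (pow_ne_zero _ hwz)) (le_antisymm h1 zero_le)
  · push Not at hall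
    obtain ⟨k, -, l, -, hkl, hk0, he⟩ := hall
    have hck : c k ≠ 0 := by
      intro h'; apply hk0; rw [h']; simp
    have hcl : c l ≠ 0 := by
      intro h'; apply hk0; rw [he, h']; simp
    rw [map_mul, map_pow, map_mul, map_pow, h.deg _ hck, h.deg _ hcl] at he
    have key : ∀ k l : Fin (m+1), l < k → ∀ a b : ℕ, q ^ a * w z ^ (k : ℕ) = q ^ b * w z ^ (l : ℕ) →
        ∃ k l l' : ℕ, 1 ≤ k ∧ k ≤ m ∧ w z ^ k * q ^ l = q ^ l' := by
      intro k l hlt a b he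
      have hlt' : (l : ℕ) < k := hlt
      refine ⟨k - l, a, b, by omega, by omega, ?_⟩
      have hk : (k : ℕ) = (k - l) + l := by omega
      rw [hk, pow_add, ← mul_assoc] at he
      rw [mul_comm]
      exact mul_right_cancel₀ (pow_ne_zero _ hwz) he
    rcases lt_or_gt_of_ne hkl with h1 | h1
    · exact key l k h1 _ _ he.symm
    · exact key k l h1 _ _ he

theorem GV.bdd (h : GV Φ w q) {m : ℕ} (hdep : Dep m Φ) (z : Z) : ∃ B : ℕ, w z ≤ q ^ B := by
  by_cases hz : z = 0
  · exact ⟨0, by rw [hz, map_zero]; exact zero_le⟩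
  obtain ⟨k, l, l', hk, -, he⟩ := h.relation hdep hz
  refine ⟨l', ?_⟩
  have h1 : 1 ≤ q ^ l' := one_le_pow₀ h.one_le
  by_contra! hc
  have h2 : w z ≤ w z ^ k := le_self_pow₀ (h1.trans hc.le) (by omega)
  have h3 : w z ^ k ≤ w z ^ k * q ^ l := le_mul_of_one_le_right' (one_le_pow₀ h.one_le)
  rw [he] at h3
  exact absurd (h2.trans h3) (not_le.2 hc)

theorem GV.eq_one (h : GV Φ w q) (hq : q = 1) {m : ℕ} (hdep : Dep m Φ) {z : Z} : w z ≤ 1 := by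
  obtain ⟨B, hB⟩ := h.bdd hdep z
  simpa [hq] using hB

theorem GV.growth (h : GV Φ w q) {m : ℕ} (hdep : Dep m Φ) {x : Z} {ι : Type*} [Fintype ι]
    (b : ι → Z) (c B : ℕ) (hx : ∀ j : ℕ, ∃ g : ι → MvPolynomial σ (ZMod p),
      (∀ k, (g k).totalDegree ≤ c * j + B) ∧ x ^ j = ∑ k, Φ (g k) * b k) :
    w x ≤ q ^ c := by
  classical
  rcases h.one_le.eq_or_lt with hq | hq
  · rw [← hq, one_pow]; exact h.eq_one hq.symm hdep
  have hq0 : 0 < q := zero_lt_one.trans hq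
  by_contra! hc
  have hx0 : x ≠ 0 := by
    rintro rfl; rw [map_zero] at hc; exact absurd hc (not_lt.2 zero_le)
  obtain ⟨k, l, l', hk, -, he⟩ := h.relation hdep hx0
  have h1 : q ^ (c * k + l) < q ^ l' := by
    rw [← he, pow_add, pow_mul]
    exact mul_lt_mul_of_pos_right (pow_lt_pow_left₀ hc zero_le (by omega)) (pow_pos hq0 _)
  have h2 : c * k + l < l' := (pow_lt_pow_iff_right₀ hq).1 h1
  have h3 : q ^ (c * k + 1) ≤ w x ^ k := by
    have : q ^ (c * k + 1) * q ^ l ≤ w x ^ k * q ^ l := by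
      rw [he, ← pow_add]; exact pow_le_pow_right₀ hq.le (by omega)
    exact le_of_mul_le_mul_right this (pow_pos hq0 _)
  choose Bb hBb using fun i => h.bdd hdep (b i)
  obtain ⟨B', hB'⟩ : ∃ B', ∀ i, Bb i ≤ B' := ⟨∑ i, Bb i, fun i => Finset.single_le_sum (fun _ _ => Nat.zero_le _) (Finset.mem_univ i)⟩
  set j := B + B' + 1
  obtain ⟨g, hg, hxg⟩ := hx (k * j)
  have h4 : w (x ^ (k * j)) ≤ q ^ (c * (k * j) + B + B') := by
    rw [hxg]
    apply Valuation.map_sum_le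
    intro i _
    rw [map_mul, pow_add]
    exact mul_le_mul' (h.le _ (hg i)) ((hBb i).trans (pow_le_pow_right₀ hq.le (hB' i)))
  have h5 : q ^ ((c * k + 1) * j) ≤ w (x ^ (k * j)) := by
    rw [map_pow, pow_mul, pow_mul]
    exact pow_le_pow_left₀ zero_le h3 _
  have h6 := (pow_le_pow_iff_right₀ hq).1 (h5.trans h4)
  have : (c * k + 1) * j = c * (k * j) + j := by ring
  omega

theorem GV.const (h : GV Φ w q) {m : ℕ} (hm : m < p) (hΦ : Function.Injective Φ) (hdep : Dep m Φ)
    {E : Derivation (ZMod p) Z Z} (hE : IsEuler Φ E) (s0 : σ) {κ : Z} (hκ : E κ = 0) {c : ℕ}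
    (hc : c * m < p) (hw : w κ ≤ q ^ c) : w κ ≤ 1 := by
  rcases h.one_le.eq_or_lt with hq | hq
  · exact h.eq_one hq.symm hdep
  have hq0 : 0 < q := zero_lt_one.trans hq
  by_contra! hlt
  have hκ0 : κ ≠ 0 := by
    rintro rfl; rw [map_zero] at hlt; exact absurd hlt (not_lt.2 zero_le)
  obtain ⟨k, l, l', hk, hkm, he⟩ := h.relation hdep hκ0
  have h1 : q ^ l < q ^ l' := by
    rw [← he]
    nth_rw 1 [← one_mul (q ^ l)]
    exact mul_lt_mul_of_pos_right (one_lt_pow₀ hlt (by omega)) (pow_pos hq0 _)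
  have h2 := (pow_lt_pow_iff_right₀ hq).1 h1
  obtain ⟨d, rfl⟩ : ∃ d, l' = d + l := ⟨l' - l, by omega⟩
  rw [pow_add] at he
  have h3 : w κ ^ k = q ^ d := mul_right_cancel₀ (pow_pos hq0 l).ne' he
  have h4 : d ≤ c * k := by
    rw [← pow_le_pow_iff_right₀ hq, ← h3, pow_mul]
    exact pow_le_pow_left₀ zero_le hw _
  have hd : d < p := lt_of_le_of_lt (h4.trans (Nat.mul_le_mul_left _ hkm)) hc
  have e1 : E (κ ^ k) = (0 : ZMod p) • κ ^ k := by
    have := der_pow_eig (E := E) (z := κ) (i := 0) (by rw [hκ, zero_smul]) k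
    simpa using this
  have e2 : E (Φ (X s0) ^ d) = (d : ZMod p) • Φ (X s0) ^ d := by
    have := der_pow_eig (E := E) (z := Φ (X s0)) (i := 1) (by
      have := hE (Finsupp.single s0 1) 1
      simpa [X] using this) d
    simpa using this
  refine eig_val_ne hm hΦ hdep w h.w0 (h.hw hq) hE ?_ e1 e2 ?_ ?_
  · intro h0
    have := (ZMod.natCast_eq_zero_iff d p).1 h0.symm
    exact absurd (Nat.le_of_dvd (by omega) this) (by omega)
  · rw [map_pow, h3]; exact pow_ne_zero _ hq0.ne'
  · rw [map_pow, map_pow, h3, h.deg _ (X_ne_zero _), totalDegree_X, pow_one]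

end gv

section ef
variable [Fintype σ]

/-- Euler operator on polynomials -/
noncomputable def ef (f : MvPolynomial σ (ZMod p)) : MvPolynomial σ (ZMod p) := ∑ s, X s * pderiv s f

theorem coeff_ef (f : MvPolynomial σ (ZMod p)) (m : σ →₀ ℕ) :
    coeff m (ef f) = (m.degree : ZMod p) * coeff m f := by
  classical
  induction f using MvPolynomial.induction_on' with
  | monomial u a =>
    have h1 : (monomial u a : MvPolynomial σ (ZMod p)).IsHomogeneous u.degree :=
      isHomogeneous_monomial a rfl
    rw [ef, h1.sum_X_mul_pderiv, ← Nat.cast_smul_eq_nsmul (ZMod p), coeff_smul, coeff_monomial]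
    split_ifs with h
    · rw [h, smul_eq_mul]
    · simp
  | add f g hf hg =>
    have : ef (f + g) = ef f + ef g := by simp [ef, mul_add, Finset.sum_add_distrib]
    rw [this, coeff_add, coeff_add, hf, hg]; ring

end ef

end core
end WA


set_option linter.all false

namespace WA

open MvPolynomial

section core
variable {p : ℕ} [Fact p.Prime] {σ : Type*} {Z : Type*} [CommRing Z] [IsDomain Z]
  [Algebra (ZMod p) Z] [DecidableEq σ] [Fintype σ]

theorem core_aux {Φ : MvPolynomial σ (ZMod p) →ₐ[ZMod p] Z}
    {D : σ → Derivation (ZMod p) Z Z} (h : Dual Φ D) {m : ℕ} (hm : m < p)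
    (hΦ : Function.Injective Φ) (hdep : Dep m Φ) (s0 : σ)
    (hIntegral : ∀ z, Φ.toRingHom.IsIntegralElem z)
    (halg : ∀ z : Z, IsIntegral (ZMod p) z → ∃ a, z = algebraMap (ZMod p) Z a)
    (c : ℕ) (hc : (c + 1) * m < p) (hc' : c + 1 < p) :
    ∀ (N : ℕ) (x : Z) (d : σ → ℕ), ∑ s, d s = N → (∀ s, (D s)^[d s] x = 0) →
    (∀ V : ValuationSubring (FractionRing Z), GoodV Φ V →
      V.valuation (algebraMap Z _ x) ≤ (V.valuation (algebraMap Z _ (Φ (X s0)))) ^ c) →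
    ∃ f : MvPolynomial σ (ZMod p), f.totalDegree ≤ c ∧ Φ f = x := by
  classical
  intro N
  induction N using Nat.strong_induction_on with
  | _ N ih =>
  intro x d hd hx hV
  by_cases hex : ∃ s, d s = 0
  · obtain ⟨s, hs⟩ := hex
    have := hx s
    rw [hs] at this
    exact ⟨0, by simp, by rw [map_zero]; exact this.symm⟩
  push Not at hex
  have hcommit : ∀ s t k (z : Z), (D t)^[k] (D s z) = D s ((D t)^[k] z) := by
    intro s t k z
    induction k with
    | zero => rfl
    | succ k ih =>
      rw [Function.iterate_succ_apply', ih, h.comm hm hΦ hdep, Function.iterate_succ_apply']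
  have hDV : ∀ V : ValuationSubring (FractionRing Z), GoodV Φ V → ∀ s (z : Z),
      V.valuation (algebraMap Z _ z) ≤ (V.valuation (algebraMap Z _ (Φ (X s0)))) ^ c →
      V.valuation (algebraMap Z _ (D s z)) ≤ (V.valuation (algebraMap Z _ (Φ (X s0)))) ^ c := by
    intro V hVg s z hz
    have hg := hVg.gv hΦ s0
    rcases hg.one_le.eq_or_lt with hq | hq
    · rw [← hq, one_pow]; exact hg.eq_one hq.symm hdep
    · exact (der_val_le h hm hΦ hdep _ hg.w0 (hg.hw hq) hg.hwF s z).trans hz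
  have hD : ∀ s, ∃ f : MvPolynomial σ (ZMod p), f.totalDegree ≤ c ∧ Φ f = D s x := by
    intro s
    have hlt : ∑ t, Function.update d s (d s - 1) t < N := by
      rw [← hd]
      apply Finset.sum_lt_sum
      · intro t _
        by_cases hts : t = s
        · subst hts; simp
        · simp [hts]
      · exact ⟨s, Finset.mem_univ _, by have := hex s; simp; omega⟩
    refine ih _ hlt (D s x) (Function.update d s (d s - 1)) rfl ?_ ?_
    · intro t
      by_cases hts : t = s
      · subst hts
        rw [Function.update_self, ← Function.iterate_succ_apply]
        have : d t - 1 + 1 = d t := by have := hex t; omega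
        rw [Nat.succ_eq_add_one, this]; exact hx t
      · rw [Function.update_of_ne hts, hcommit, hx, map_zero]
    · intro V hVg
      exact hDV V hVg s x (hV V hVg)
  choose g hgdeg hg using hD
  set G : MvPolynomial σ (ZMod p) := ∑ s, X s * g s with hG
  have hGdeg : G.totalDegree ≤ c + 1 := by
    apply totalDegree_finsetSum_le
    intro s _
    refine (totalDegree_mul _ _).trans ?_
    rw [totalDegree_X]; have := hgdeg s; omega
  have hEx : eul Φ D x = Φ G := by
    rw [eul_apply, hG, map_sum]
    exact Finset.sum_congr rfl fun s _ => by rw [map_mul, hg]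
  set H : MvPolynomial σ (ZMod p) :=
    ∑ m ∈ G.support, monomial m ((m.degree : ZMod p)⁻¹ * coeff m G) with hH
  have hHc : ∀ m, coeff m H = (m.degree : ZMod p)⁻¹ * coeff m G := by
    intro m
    rw [hH, coeff_sum]
    simp only [coeff_monomial]
    rw [Finset.sum_ite_eq']
    split_ifs with h1
    · rfl
    · rw [notMem_support_iff.1 h1, mul_zero]
  have hHdeg : H.totalDegree ≤ c + 1 := by
    apply totalDegree_finsetSum_le
    intro m hm
    refine (totalDegree_monomial_le _ _).trans ?_
    exact (le_totalDegree hm).trans hGdeg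
  have hunit : ∀ k : ℕ, 0 < k → k ≤ c + 1 → (k : ZMod p) ≠ 0 := by
    intro k hk hk' h0
    have := (ZMod.natCast_eq_zero_iff k p).1 h0
    exact absurd (Nat.le_of_dvd hk this) (by omega)
  have hEH : ef H = G - C (coeff 0 G) := by
    ext m
    rw [coeff_ef, hHc, coeff_sub, coeff_C]
    by_cases hm0 : m = 0
    · subst hm0; simp
    · rw [if_neg (Ne.symm hm0), sub_zero]
      by_cases hmG : coeff m G = 0
      · rw [hmG]; simp
      · rw [← mul_assoc, mul_inv_cancel₀, one_mul]
        apply hunit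
        · rw [Nat.pos_iff_ne_zero, Ne, Finsupp.degree_eq_zero_iff]; exact hm0
        · exact (le_totalDegree (mem_support_iff.2 hmG)).trans hGdeg
  have hEΦ : ∀ f, eul Φ D (Φ f) = Φ (ef f) := by
    intro f
    rw [eul_apply, ef, map_sum]
    exact Finset.sum_congr rfl fun s _ => by rw [map_mul, h.pderiv]
  set κ := x - Φ H with hκ
  have hEκ : eul Φ D κ = algebraMap (ZMod p) Z (coeff 0 G) := by
    rw [hκ, map_sub, hEx, hEΦ, hEH, ← map_sub, sub_sub_cancel, ← algebraMap_eq, AlgHom.commutes]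
  have hDκ : ∀ s, D s κ = Φ (g s - pderiv s H) := by
    intro s
    rw [hκ, map_sub, ← hg, h.pderiv, map_sub]
  have hkdeg : ∀ s, (g s - pderiv s H).totalDegree ≤ c := by
    intro s
    refine (totalDegree_sub _ _).trans (max_le (hgdeg s) ?_)
    have : pderiv s H ∈ dl (ZMod p) σ (c + 1) := pderiv_mem_dl _ (mem_dl_succ.2 hHdeg)
    exact mem_dl_succ.1 this
  have hEDκ : ∀ s, eul Φ D (D s κ) = - D s κ := by
    intro s
    have h1 : D s (eul Φ D κ) = eul Φ D (D s κ) + D s κ := by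
      rw [eul_apply, map_sum, eul_apply]
      simp only [Derivation.leibniz, smul_eq_mul, h s]
      rw [Finset.sum_add_distrib]
      congr 1
      · exact Finset.sum_congr rfl fun t _ => by rw [h.comm hm hΦ hdep]
      · simp
    rw [hEκ, Derivation.map_algebraMap] at h1
    exact eq_neg_of_add_eq_zero_left h1.symm
  have hDκ0 : ∀ s, D s κ = 0 := by
    intro s
    have h1 := hEDκ s
    rw [hDκ, hEΦ, ← map_neg] at h1
    have h2 := hΦ h1
    have : g s - pderiv s H = 0 := by
      ext m
      have h3 := congrArg (coeff m) h2
      rw [coeff_ef, coeff_neg] at h3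
      rw [coeff_zero]
      by_contra hne
      have h4 : ((m.degree + 1 : ℕ) : ZMod p) * coeff m (g s - pderiv s H) = 0 := by
        push_cast
        rw [add_mul, h3]; ring
      have h5 : m.degree ≤ c := (le_totalDegree (mem_support_iff.2 hne)).trans (hkdeg s)
      exact (mul_ne_zero (hunit _ (by omega) (by omega)) hne) h4
    rw [hDκ, this, map_zero]
  have hEκ0 : eul Φ D κ = 0 := by
    rw [eul_apply]; simp [hDκ0]
  obtain ⟨a, ha⟩ : ∃ a, κ = algebraMap (ZMod p) Z a := by
    apply halg
    apply alg_of_bounded hΦ _ (hIntegral _)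
    intro V hVg
    have hgv := hVg.gv hΦ s0
    rw [← V.valuation_le_one_iff]
    refine hgv.const hm hΦ hdep h.euler s0 hEκ0 hc ?_
    refine (Valuation.map_sub _ _ _).trans (max_le ?_ (hgv.le _ hHdeg))
    exact (hV V hVg).trans (pow_le_pow_right₀ hgv.one_le (Nat.le_succ c))
  have hxf : Φ (H + C a) = x := by
    rw [map_add, ← algebraMap_eq, AlgHom.commutes, ← ha, hκ]; ring
  refine ⟨H + C a, ?_, hxf⟩
  by_contra! hlt
  have hbd : ∀ V : ValuationSubring (FractionRing Z), GoodV Φ V →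
      algebraMap Z (FractionRing Z) (Φ (X s0)) ∈ V := by
    intro V hVg
    have hgv := hVg.gv hΦ s0
    rw [← V.valuation_le_one_iff]
    by_contra! hq
    have h1 := hV V hVg
    rw [← hxf] at h1
    have hne : H + C a ≠ 0 := by rintro h0; rw [h0] at hlt; simp at hlt
    have h2 := hgv.deg _ hne
    rw [Valuation.comap_apply] at h2
    rw [h2] at h1
    exact absurd ((pow_le_pow_iff_right₀ hq).1 h1) (by omega)
  obtain ⟨b, hb⟩ := halg _ (alg_of_bounded hΦ _ (hIntegral _) hbd)
  rw [← Φ.commutes] at hb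
  have := congrArg totalDegree (hΦ hb)
  rw [algebraMap_eq, totalDegree_X, totalDegree_C] at this
  exact one_ne_zero this

theorem core {Φ : MvPolynomial σ (ZMod p) →ₐ[ZMod p] Z}
    {D : σ → Derivation (ZMod p) Z Z} (h : Dual Φ D) {m : ℕ} (hm : m < p)
    (hΦ : Function.Injective Φ) (hdep : Dep m Φ) (s0 : σ)
    (hIntegral : ∀ z, Φ.toRingHom.IsIntegralElem z)
    (halg : ∀ z : Z, IsIntegral (ZMod p) z → ∃ a, z = algebraMap (ZMod p) Z a)
    (c : ℕ) (hc : (c + 1) * m < p) (hc' : c + 1 < p) (x : Z) {ι : Type*} [Fintype ι]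
    (b : ι → Z) (B : ℕ) (hx : ∀ j : ℕ, ∃ g : ι → MvPolynomial σ (ZMod p),
      (∀ k, (g k).totalDegree ≤ c * j + B) ∧ x ^ j = ∑ k, Φ (g k) * b k) :
    ∃ f : MvPolynomial σ (ZMod p), f.totalDegree ≤ c ∧ Φ f = x := by
  refine core_aux h hm hΦ hdep s0 hIntegral halg c hc hc' _ x (fun _ => p) rfl
    (fun s => h.pow hm hΦ hdep s x) ?_
  intro V hV
  exact (hV.gv hΦ s0).growth hdep b c B hx

end core
end WA


set_option linter.all false

namespace WA

open MvPolynomial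

section pexp
variable {p : ℕ} [Fact p.Prime] {σ : Type*} [Fintype σ] [DecidableEq σ]

/-- the monomial exponent attached to digits -/
noncomputable def dg (γ : σ → Fin p) : σ →₀ ℕ := Finsupp.equivFunOnFinite.symm (fun s => (γ s : ℕ))

@[simp] theorem dg_apply (γ : σ → Fin p) (s : σ) : dg γ s = γ s := rfl

/-- digits of an exponent -/
def dgm (u : σ →₀ ℕ) : σ → Fin p := fun s => ⟨u s % p, Nat.mod_lt _ (Fact.out : p.Prime).pos⟩

/-- quotient of an exponent -/
noncomputable def dgq (p : ℕ) (u : σ →₀ ℕ) : σ →₀ ℕ := u.mapRange (· / p) (Nat.zero_div p)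

theorem dg_decomp (u : σ →₀ ℕ) : p • dgq p u + dg (dgm (p := p) u) = u := by
  ext s; simp [dgq, dgm, Nat.div_add_mod]

theorem dgm_add (u v : σ →₀ ℕ) : dgm (p := p) (p • v + u) = dgm u := by
  funext s; simp [dgm]

theorem dgq_add (u v : σ →₀ ℕ) : dgq p (p • v + u) = v + dgq p u := by
  ext s; simp [dgq]
  rw [Nat.mul_add_div (Fact.out : p.Prime).pos]

theorem dgm_dg (γ : σ → Fin p) : dgm (dg γ) = γ := by
  funext s; ext; simp [dgm, Nat.mod_eq_of_lt]

theorem dgq_dg (γ : σ → Fin p) : dgq p (dg γ) = 0 := by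
  ext s; simp [dgq, Nat.div_eq_of_lt]

theorem dgq_degree (u : σ →₀ ℕ) : p * (dgq p u).degree ≤ u.degree := by
  rw [Finsupp.degree_eq_sum, Finsupp.degree_eq_sum, Finset.mul_sum]
  apply Finset.sum_le_sum
  intro s _
  simp only [dgq, Finsupp.mapRange_apply]
  exact Nat.mul_div_le _ _

/-- coordinates of a polynomial over the `p`-th powers -/
noncomputable def cf (γ : σ → Fin p) : MvPolynomial σ (ZMod p) →ₗ[ZMod p] MvPolynomial σ (ZMod p) :=
  (basisMonomials σ (ZMod p)).constr (ZMod p) (fun u => if dgm u = γ then monomial (dgq p u) 1 else 0)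

theorem cf_monomial (γ : σ → Fin p) (u : σ →₀ ℕ) (r : ZMod p) :
    cf γ (monomial u r) = if dgm u = γ then monomial (dgq p u) r else 0 := by
  have h1 : cf γ (monomial u 1) = if dgm u = γ then monomial (dgq p u) (1 : ZMod p) else 0 := by
    have h0 := (basisMonomials σ (ZMod p)).constr_basis (ZMod p)
      (fun u => if dgm u = γ then monomial (dgq p u) (1 : ZMod p) else 0) u
    rw [coe_basisMonomials] at h0
    exact h0
  have h2 : (monomial u r : MvPolynomial σ (ZMod p)) = r • monomial u 1 := by
    rw [smul_monomial, smul_eq_mul, mul_one]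
  rw [h2, map_smul, h1]
  split_ifs
  · rw [smul_monomial, smul_eq_mul, mul_one]
  · simp

theorem cf_sum (f : MvPolynomial σ (ZMod p)) : ∑ γ, expand p (cf γ f) * monomial (dg γ) 1 = f := by
  induction f using MvPolynomial.induction_on' with
  | monomial u r =>
    rw [Finset.sum_eq_single (dgm u)]
    · rw [cf_monomial, if_pos rfl, expand_monomial, monomial_mul, mul_one, dg_decomp]
    · intro γ _ h
      rw [cf_monomial, if_neg (Ne.symm h)]; simp
    · simp
  | add f g hf hg =>
    simp only [map_add, add_mul, Finset.sum_add_distrib, hf, hg]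

theorem cf_expand_mul (γ : σ → Fin p) (g f : MvPolynomial σ (ZMod p)) :
    cf γ (expand p g * f) = g * cf γ f := by
  induction g using MvPolynomial.induction_on' with
  | monomial v b =>
    induction f using MvPolynomial.induction_on' with
    | monomial u r =>
      rw [expand_monomial, monomial_mul, cf_monomial, cf_monomial, dgm_add, dgq_add]
      split_ifs
      · rw [monomial_mul]
      · simp
    | add f g hf hg => simp only [map_add, mul_add, hf, hg]
  | add g g' hg hg' => simp only [map_add, add_mul, hg, hg']

theorem cf_dg (γ δ : σ → Fin p) : cf γ (monomial (dg δ) 1) = if δ = γ then 1 else 0 := by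
  rw [cf_monomial, dgm_dg, dgq_dg]; rfl

theorem cf_deg (γ : σ → Fin p) (d : ℕ) {f : MvPolynomial σ (ZMod p)} (hf : f.totalDegree ≤ p * d) :
    (cf γ f).totalDegree ≤ d := by
  have h1 : f ∈ dl (ZMod p) σ (p * d + 1) := mem_dl_succ.2 hf
  rw [← mem_dl_succ]
  refine dl_induction (P := fun f => cf γ f ∈ dl (ZMod p) σ (d + 1)) (by simp) ?_ ?_ h1
  · intro a b ha hb; rw [map_add]; exact add_mem ha hb
  · intro u hu r
    rw [cf_monomial]
    split_ifs
    · apply monomial_mem_dl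
      have := dgq_degree (p := p) u
      have hp := (Fact.out : p.Prime).pos
      rw [Nat.lt_succ_iff] at hu ⊢
      exact Nat.le_of_mul_le_mul_left (this.trans hu) hp
    · exact zero_mem _

end pexp

section iota
variable {p : ℕ} [Fact p.Prime] {n : ℕ}

theorem quant_X_pow_inl {R : Type*} [CommRing R] (i : Fin n) (k : ℕ) (f : MvPolynomial (Ix n) R) :
    quant (X (.inl i) ^ k * f) = gen R (.inl i) ^ k * quant f := by
  induction k with
  | zero => simp
  | succ k ih => rw [pow_succ', mul_assoc, quant_X_inl, ih, pow_succ', mul_assoc]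

theorem quant_X_pow_inr {R : Type*} [CommRing R] (i : Fin n) (k : ℕ) (f : MvPolynomial (Ix n) R) :
    quant (X (.inr i) ^ k * f) = quant f * gen R (.inr i) ^ k := by
  induction k with
  | zero => simp
  | succ k ih => rw [pow_succ', mul_assoc, quant_X_inr, ih, pow_succ, mul_assoc]

theorem sym_gen_pow {R : Type*} [CommRing R] (s : Ix n) (k : ℕ) :
    sym (gen R s ^ k) = (X s : MvPolynomial (Ix n) R) ^ k := by
  have : gen R s ^ k = quant ((X s : MvPolynomial (Ix n) R) ^ k) := by
    rcases s with i | i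
    · have := quant_X_pow_inl (R := R) i k 1
      simpa using this.symm
    · have := quant_X_pow_inr (R := R) i k 1
      simpa using this.symm
  rw [this, sym_quant]

theorem commute_of_pderiv {R : Type*} [CommRing R] {a : WeylAlgebra R n}
    (h : ∀ s, pderiv s (sym a) = 0) (b : WeylAlgebra R n) : Commute a b := by
  have hg : ∀ s, Commute a (gen R s) := by
    rintro (i | i)
    · have := sym_ad_inl i a
      rw [h, sym_eq_zero, sub_eq_zero] at this; exact this
    · have := sym_ad_inr i a
      rw [h, sym_eq_zero, sub_eq_zero] at this; exact this.symm
  refine induction_left (p := fun b => Commute a b) (Commute.one_right _) ?_ ?_ ?_ b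
  · intro x y hx hy; exact hx.add_right hy
  · intro r x hx; exact hx.smul_right r
  · intro s x hx; exact (hg s).mul_right hx

theorem gen_pow_central (s : Ix n) (b : WeylAlgebra (ZMod p) n) : Commute (gen (ZMod p) s ^ p) b := by
  apply commute_of_pderiv
  intro t
  rw [sym_gen_pow, Derivation.leibniz_pow]
  simp

/-- the inclusion of the centre -/
noncomputable def iota (p n : ℕ) [Fact p.Prime] :
    MvPolynomial (Ix n) (ZMod p) →ₐ[ZMod p] WeylAlgebra (ZMod p) n :=
  (Subalgebra.center (ZMod p) (WeylAlgebra (ZMod p) n)).val.comp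
    (aeval (fun s => ⟨gen (ZMod p) s ^ p, Subalgebra.mem_center_iff.2
      fun b => (gen_pow_central s b).symm.eq⟩))

@[simp] theorem iota_X (s : Ix n) : iota p n (X s) = gen (ZMod p) s ^ p := by
  simp [iota]

theorem iota_comm (f : MvPolynomial (Ix n) (ZMod p)) (b : WeylAlgebra (ZMod p) n) :
    Commute (iota p n f) b := by
  have := Subalgebra.mem_center_iff.1
    ((aeval (fun s => (⟨gen (ZMod p) s ^ p, Subalgebra.mem_center_iff.2
      fun b => (gen_pow_central s b).symm.eq⟩ : Subalgebra.center (ZMod p) (WeylAlgebra (ZMod p) n)))) f).2 b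
  exact this.symm

theorem quant_expand_mul (g f : MvPolynomial (Ix n) (ZMod p)) :
    quant (expand p g * f) = iota p n g * quant f := by
  induction g using MvPolynomial.induction_on generalizing f with
  | C a => rw [expand_C, ← algebraMap_eq, AlgHom.commutes, ← Algebra.smul_def, ← Algebra.smul_def, map_smul]
  | add g g' hg hg' => simp only [map_add, add_mul, hg, hg']
  | mul_X g s hg =>
    rw [map_mul (expand p), map_mul (iota p n), mul_assoc, hg, expand_X, mul_assoc, iota_X]
    congr 1
    rcases s with i | i
    · exact quant_X_pow_inl i p f
    · rw [quant_X_pow_inr]; exact (gen_pow_central _ _).symm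

/-- basis of the Weyl algebra over its centre -/
noncomputable def bq (γ : Ix n → Fin p) : WeylAlgebra (ZMod p) n := quant (monomial (dg γ) 1)

/-- coordinates over the centre -/
noncomputable def co (γ : Ix n → Fin p) (a : WeylAlgebra (ZMod p) n) : MvPolynomial (Ix n) (ZMod p) :=
  cf γ (sym a)

theorem co_add (γ : Ix n → Fin p) (a b : WeylAlgebra (ZMod p) n) : co γ (a + b) = co γ a + co γ b := by
  simp [co]

@[simp] theorem co_zero (γ : Ix n → Fin p) : co γ (0 : WeylAlgebra (ZMod p) n) = 0 := by simp [co]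

theorem co_fsum (γ : Ix n → Fin p) {ι : Type*} (S : Finset ι) (a : ι → WeylAlgebra (ZMod p) n) :
    co γ (∑ i ∈ S, a i) = ∑ i ∈ S, co γ (a i) := by
  simp [co]

theorem co_sum (a : WeylAlgebra (ZMod p) n) : ∑ γ, iota p n (co γ a) * bq γ = a := by
  have := congrArg quant (cf_sum (p := p) (sym a))
  rw [quant_sym, map_sum] at this
  rw [← this]
  refine Finset.sum_congr rfl fun γ _ => ?_
  rw [quant_expand_mul, this]; rfl

theorem co_mul (γ : Ix n → Fin p) (z : MvPolynomial (Ix n) (ZMod p)) (a : WeylAlgebra (ZMod p) n) :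
    co γ (iota p n z * a) = z * co γ a := by
  rw [co, co, ← cf_expand_mul]
  have := quant_expand_mul z (sym a)
  rw [quant_sym] at this
  rw [← this, sym_quant]

theorem co_ext {a b : WeylAlgebra (ZMod p) n} (h : ∀ γ, co γ a = co γ b) : a = b := by
  rw [← co_sum a, ← co_sum b]; simp [h]

/-- zero digits -/
def d0 (p n : ℕ) [Fact p.Prime] : Ix n → Fin p := fun _ => ⟨0, (Fact.out : p.Prime).pos⟩

theorem bq_d0 : bq (d0 p n) = 1 := by
  have : dg (d0 p n) = 0 := by ext s; simp [d0]
  rw [bq, this]; exact quant_one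

theorem co_bq (γ δ : Ix n → Fin p) : co γ (bq δ) = if δ = γ then 1 else 0 := by
  rw [co, bq, sym_quant, cf_dg]

theorem co_one (γ : Ix n → Fin p) : co γ (1 : WeylAlgebra (ZMod p) n) = if d0 p n = γ then 1 else 0 := by
  rw [← bq_d0, co_bq]

theorem co_iota (z : MvPolynomial (Ix n) (ZMod p)) : co (d0 p n) (iota p n z) = z := by
  have := co_mul (d0 p n) z 1
  rwa [co_one, if_pos rfl, mul_one, mul_one] at this

theorem iota_inj : Function.Injective (iota p n) :=
  Function.LeftInverse.injective (g := co (d0 p n)) co_iota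

theorem exists_rel {κ : Type*} [Fintype κ] (hκ : Fintype.card (Ix n → Fin p) < Fintype.card κ)
    (v : κ → WeylAlgebra (ZMod p) n) :
    ∃ z : κ → MvPolynomial (Ix n) (ZMod p), z ≠ 0 ∧ ∑ i, iota p n (z i) * v i = 0 := by
  have h : ¬ LinearIndependent (MvPolynomial (Ix n) (ZMod p))
      (fun i => (fun γ => co γ (v i) : (Ix n → Fin p) → MvPolynomial (Ix n) (ZMod p))) := by
    intro h
    have := h.fintype_card_le_finrank
    rw [Module.finrank_fintype_fun_eq_card] at this
    omega
  rw [Fintype.not_linearIndependent_iff] at h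
  obtain ⟨z, hz, i, hi⟩ := h
  refine ⟨z, fun h => hi (by rw [h]; rfl), ?_⟩
  apply co_ext
  intro γ
  rw [co_fsum, co_zero]
  have := congrFun hz γ
  rw [Finset.sum_apply] at this
  simp only [co_mul]
  exact this

end iota
end WA


set_option linter.all false

namespace WA

open MvPolynomial

section cen
variable {p : ℕ} [Fact p.Prime] {n : ℕ} (φ : WeylAlgebra (ZMod p) n →ₐ[ZMod p] WeylAlgebra (ZMod p) n)

/-- centralizer of the image -/
def Cen (c : WeylAlgebra (ZMod p) n) : Prop := ∀ b, Commute c (φ b)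

variable {φ}

theorem ad_pair (s : Ix n) : ∃ T : WeylAlgebra (ZMod p) n →+ WeylAlgebra (ZMod p) n,
    (∀ c, Cen φ c → ∀ f, T (c * φ (quant f)) = c * φ (quant (pderiv s f))) ∧
    ∀ z b, T (iota p n z * b) = iota p n z * T b := by
  rcases s with i | i
  · refine ⟨AddMonoidHom.mulLeft (φ (gen _ (.inr i))) - AddMonoidHom.mulRight (φ (gen _ (.inr i))), ?_, fun z b => by
      simp only [AddMonoidHom.sub_apply, AddMonoidHom.coe_mulLeft, AddMonoidHom.coe_mulRight]
      rw [← mul_assoc, ← (iota_comm z (φ (gen _ (.inr i)))).eq, mul_sub, mul_assoc, mul_assoc]⟩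
    intro c hc f
    have h1 := sym_ad_inr i (quant f)
    rw [sym_quant] at h1
    rw [← h1, quant_sym, map_sub φ, map_mul φ, map_mul φ, mul_sub, AddMonoidHom.sub_apply]
    simp only [AddMonoidHom.coe_mulLeft, AddMonoidHom.coe_mulRight]
    rw [← mul_assoc, ← mul_assoc, ← mul_assoc, (hc (gen _ (.inr i))).eq]
  · refine ⟨AddMonoidHom.mulRight (φ (gen _ (.inl i))) - AddMonoidHom.mulLeft (φ (gen _ (.inl i))), ?_, fun z b => by
      simp only [AddMonoidHom.sub_apply, AddMonoidHom.coe_mulLeft, AddMonoidHom.coe_mulRight]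
      rw [← mul_assoc, ← (iota_comm z (φ (gen _ (.inl i)))).eq, mul_sub, mul_assoc, mul_assoc]⟩
    intro c hc f
    have h1 := sym_ad_inl i (quant f)
    rw [sym_quant] at h1
    rw [← h1, quant_sym, map_sub φ, map_mul φ, map_mul φ, mul_sub, AddMonoidHom.sub_apply]
    simp only [AddMonoidHom.coe_mulLeft, AddMonoidHom.coe_mulRight]
    rw [← mul_assoc, ← mul_assoc, ← mul_assoc, (hc (gen _ (.inl i))).eq]

theorem op_pair : ∀ (N : ℕ) (u0 : Ix n →₀ ℕ), u0.degree = N → (∀ s, u0 s < p) →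
    ∃ (T : WeylAlgebra (ZMod p) n →+ WeylAlgebra (ZMod p) n)
      (U : MvPolynomial (Ix n) (ZMod p) →ₗ[ZMod p] MvPolynomial (Ix n) (ZMod p)) (k : ZMod p),
      (∀ c, Cen φ c → ∀ f, T (c * φ (quant f)) = c * φ (quant (U f))) ∧
      (∀ u : Ix n →₀ ℕ, u.degree ≤ N → u ≠ u0 → U (monomial u 1) = 0) ∧
      U (monomial u0 1) = C k ∧ k ≠ 0 ∧ ∀ z b, T (iota p n z * b) = iota p n z * T b := by
  intro N
  induction N with
  | zero =>
    intro u0 hu0 _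
    refine ⟨AddMonoidHom.id _, LinearMap.id, 1, fun c hc f => rfl, ?_, ?_, one_ne_zero, fun z b => rfl⟩
    · intro u hu hne
      exfalso; apply hne
      rw [(Finsupp.degree_eq_zero_iff _).1 hu0, (Finsupp.degree_eq_zero_iff _).1 (Nat.le_zero.1 hu)]
    · rw [(Finsupp.degree_eq_zero_iff _).1 hu0]; rfl
  | succ N ih =>
    intro u0 hu0 hlt
    obtain ⟨s, hs⟩ : ∃ s, u0 s ≠ 0 := by
      by_contra! h
      have : u0 = 0 := by ext s; exact h s
      rw [this] at hu0; simp at hu0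
    have hdec : ∀ u : Ix n →₀ ℕ, u s ≠ 0 → (u - Finsupp.single s 1) + Finsupp.single s 1 = u := by
      intro u hu
      apply tsub_add_cancel_of_le
      rw [Finsupp.single_le_iff]; omega
    have hdeg : ∀ u : Ix n →₀ ℕ, u s ≠ 0 → (u - Finsupp.single s 1).degree + 1 = u.degree := by
      intro u hu
      have := congrArg Finsupp.degree (hdec u hu)
      rwa [map_add, Finsupp.degree_single] at this
    obtain ⟨T, U, k, hT, hU, hUk, hk, hTz⟩ := ih (u0 - Finsupp.single s 1) (by have := hdeg u0 hs; omega)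
      (fun t => lt_of_le_of_lt (by simp) (hlt t))
    obtain ⟨T', hT', hTz'⟩ := ad_pair (φ := φ) s
    have hm : ∀ u : Ix n →₀ ℕ, pderiv s (monomial u (1 : ZMod p)) =
        (u s : ZMod p) • monomial (u - Finsupp.single s 1) 1 := by
      intro u; rw [pderiv_monomial, smul_monomial]; simp
    refine ⟨T.comp T', U.comp (pderiv s).toLinearMap, u0 s * k, ?_, ?_, ?_, ?_, fun z b => by
      rw [AddMonoidHom.comp_apply, hTz', hTz, AddMonoidHom.comp_apply]⟩
    · intro c hc f
      rw [AddMonoidHom.comp_apply, hT' c hc, hT c hc]; rfl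
    · intro u hu hne
      rw [LinearMap.comp_apply]
      show U (pderiv s _) = 0
      rw [hm, map_smul]
      by_cases h0 : u s = 0
      · rw [h0]; simp
      rw [hU, smul_zero]
      · have := hdeg u h0; omega
      · intro h; apply hne
        rw [← hdec u h0, h, hdec u0 hs]
    · rw [LinearMap.comp_apply]
      show U (pderiv s _) = _
      rw [hm, map_smul, hUk, smul_eq_C_mul, ← C_mul]
    · refine mul_ne_zero ?_ hk
      rw [Ne, ZMod.natCast_eq_zero_iff]
      intro h; exact absurd (Nat.le_of_dvd (by omega) h) (not_le.2 (hlt s))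

/-- independence of the images of the basis over the centralizer -/
theorem cen_indep {c : (Ix n → Fin p) → WeylAlgebra (ZMod p) n} (hc : ∀ γ, Cen φ (c γ))
    (h : ∑ γ, c γ * φ (bq γ) = 0) : c = 0 := by
  classical
  by_contra hne
  have hex : (Finset.univ.filter fun γ => c γ ≠ 0).Nonempty := by
    by_contra h'
    rw [Finset.not_nonempty_iff_eq_empty, Finset.filter_eq_empty_iff] at h'
    apply hne; funext γ; simpa using h' (Finset.mem_univ γ)
  obtain ⟨γ0, hγ0, hmax⟩ := Finset.exists_max_image _ (fun γ => (dg γ).degree) hex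
  rw [Finset.mem_filter] at hγ0
  obtain ⟨T, U, k, hT, hU, hUk, hk, hTz⟩ := op_pair (φ := φ) (dg γ0).degree (dg γ0) rfl (fun s => (γ0 s).2)
  have h2 := congrArg T h
  rw [map_zero, map_sum, Finset.sum_eq_single γ0] at h2
  · rw [bq, hT _ (hc γ0), hUk] at h2
    have h3 : quant (C k : MvPolynomial (Ix n) (ZMod p)) = algebraMap _ _ k := by
      rw [← sym_algebraMap, quant_sym]
    rw [h3, AlgHom.commutes, ← Algebra.commutes, ← Algebra.smul_def] at h2
    have h4 := congrArg (fun x => k⁻¹ • x) h2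
    simp only [smul_zero, smul_smul, inv_mul_cancel₀ hk, one_smul] at h4
    exact hγ0.2 h4
  · intro γ _ hγ
    by_cases h0 : c γ = 0
    · rw [h0, zero_mul, map_zero]
    rw [bq, hT _ (hc γ), hU, map_zero, map_zero, mul_zero]
    · exact hmax γ (by simp [h0])
    · intro h'
      apply hγ
      rw [← dgm_dg γ, h', dgm_dg]
  · simp

theorem cen_iota (z : MvPolynomial (Ix n) (ZMod p)) : Cen φ (iota p n z) := fun b => iota_comm z _

theorem Cen.add {a b : WeylAlgebra (ZMod p) n} (ha : Cen φ a) (hb : Cen φ b) : Cen φ (a + b) :=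
  fun x => (ha x).add_left (hb x)
theorem Cen.mul {a b : WeylAlgebra (ZMod p) n} (ha : Cen φ a) (hb : Cen φ b) : Cen φ (a * b) :=
  fun x => (ha x).mul_left (hb x)

theorem iota_mul_eq_zero {z : MvPolynomial (Ix n) (ZMod p)} (hz : z ≠ 0) {a : WeylAlgebra (ZMod p) n}
    (h : iota p n z * a = 0) : a = 0 := by
  apply co_ext
  intro γ
  have := congrArg (co γ) h
  rw [co_mul, co_zero] at this
  rw [co_zero]
  exact (mul_eq_zero.1 this).resolve_left hz

/-- the centralizer of the image is the centre -/
theorem cen_eq {c : WeylAlgebra (ZMod p) n} (hc : Cen φ c) : ∃ z, iota p n z = c := by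
  classical
  obtain ⟨z, hz, hs⟩ := exists_rel (p := p) (n := n) (κ := Option (Ix n → Fin p)) (by simp)
    (fun o => o.elim c (fun γ => φ (bq γ)))
  rw [Fintype.sum_option] at hs
  simp only [Option.elim] at hs
  set c' : (Ix n → Fin p) → WeylAlgebra (ZMod p) n := fun γ =>
    iota p n (z (some γ)) + if γ = d0 p n then iota p n (z none) * c else 0 with hc'
  have h0 : c' = 0 := by
    apply cen_indep (φ := φ)
    · intro γ
      apply (cen_iota _).add
      split_ifs
      · exact (cen_iota _).mul hc
      · intro b; exact Commute.zero_left _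
    · rw [← hs]
      simp only [hc', add_mul, Finset.sum_add_distrib, ite_mul, zero_mul, Finset.sum_ite_eq',
        Finset.mem_univ, if_true]
      rw [bq_d0, map_one, mul_one, add_comm]
  have hz0 : z none ≠ 0 := by
    intro h; apply hz
    funext o
    rcases o with _ | γ
    · exact h
    · have := congrFun h0 γ
      simp only [hc', h, map_zero, zero_mul, ite_self, add_zero, Pi.zero_apply] at this
      exact iota_inj (by rw [this]; simp)
  have h1 : iota p n (z none) * c = - iota p n (z (some (d0 p n))) := by
    have := congrFun h0 (d0 p n)
    simp only [hc', if_true, Pi.zero_apply] at this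
    exact eq_neg_of_add_eq_zero_right this
  refine ⟨co (d0 p n) c, ?_⟩
  apply co_ext
  intro γ
  by_cases hγ : d0 p n = γ
  · rw [← hγ, co_iota]
  · have h2 := co_mul γ (co (d0 p n) c) 1
    rw [mul_one, co_one, if_neg hγ, mul_zero] at h2
    rw [h2]
    have h3 := congrArg (co γ) h1
    rw [co_mul, ← map_neg] at h3
    have h4 := co_mul γ (-z (some (d0 p n))) 1
    rw [mul_one, co_one, if_neg hγ, mul_zero] at h4
    rw [h4] at h3
    exact ((mul_eq_zero.1 h3).resolve_left hz0).symm

theorem exists_phi (φ : WeylAlgebra (ZMod p) n →ₐ[ZMod p] WeylAlgebra (ZMod p) n) :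
    ∃ Φ : MvPolynomial (Ix n) (ZMod p) →ₐ[ZMod p] MvPolynomial (Ix n) (ZMod p),
      ∀ z, φ (iota p n z) = iota p n (Φ z) := by
  have h : ∀ s : Ix n, ∃ z, iota p n z = φ (iota p n (X s)) := by
    intro s
    apply cen_eq (φ := φ)
    intro b
    exact (iota_comm _ b).map φ
  choose f hf using h
  refine ⟨aeval f, ?_⟩
  have : φ.comp (iota p n) = (iota p n).comp (aeval f) := by
    apply MvPolynomial.algHom_ext
    intro s
    simp only [AlgHom.comp_apply, aeval_X, hf]
  intro z
  exact DFunLike.congr_fun this z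

end cen

section data
variable {p : ℕ} [Fact p.Prime] {n : ℕ}

/-- The data of a finite left module modulo `p` -/
structure FD (φ : WeylAlgebra (ZMod p) n →ₐ[ZMod p] WeylAlgebra (ZMod p) n) (m c : ℕ) where
  a : Fin m → WeylAlgebra (ZMod p) n
  l0 : Fin m
  a0 : a l0 = 1
  u : Fin m → Ix n → Fin m → WeylAlgebra (ZMod p) n
  hu : ∀ l s k, sym (u l s k) ∈ dl (ZMod p) (Ix n) (c + 1)
  rel : ∀ l s, a l * gen _ s = ∑ k, φ (u l s k) * a k

variable {φ : WeylAlgebra (ZMod p) n →ₐ[ZMod p] WeylAlgebra (ZMod p) n} {m c : ℕ}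
  {Φ : MvPolynomial (Ix n) (ZMod p) →ₐ[ZMod p] MvPolynomial (Ix n) (ZMod p)}

theorem FD.step (d : FD φ m c) (s : Ix n) (t : Fin m → WeylAlgebra (ZMod p) n) :
    (∑ l, φ (t l) * d.a l) * gen _ s = ∑ k, φ (∑ l, t l * d.u l s k) * d.a k := by
  simp only [map_sum, map_mul, Finset.sum_mul, mul_assoc, d.rel, Finset.mul_sum]
  rw [Finset.sum_comm]

theorem FD.gen_pow (d : FD φ m c) (s : Ix n) (e : ℕ) : ∃ t : Fin m → WeylAlgebra (ZMod p) n,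
    (∀ l, sym (t l) ∈ dl (ZMod p) (Ix n) (c * e + 1)) ∧ gen _ s ^ e = ∑ l, φ (t l) * d.a l := by
  classical
  induction e with
  | zero =>
    refine ⟨fun l => if l = d.l0 then 1 else 0, ?_, ?_⟩
    · intro l
      dsimp only
      split_ifs
      · rw [sym_one, mul_zero]; exact one_mem_dl
      · rw [map_zero]; exact zero_mem _
    · rw [Finset.sum_eq_single d.l0]
      · simp [d.a0]
      · intro l _ hl; simp [hl]
      · simp
  | succ e ih =>
    obtain ⟨t, ht, he⟩ := ih
    refine ⟨fun k => ∑ l, t l * d.u l s k, ?_, ?_⟩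
    · intro k
      rw [map_sum]
      apply sum_mem
      intro l _
      have := sym_mul_mem (ht l) (d.hu l s k)
      rwa [mul_add, mul_one, add_assoc]
    · rw [pow_succ, he, d.step]

theorem FD.span (d : FD φ m c) (b : WeylAlgebra (ZMod p) n) : ∃ t : Fin m → WeylAlgebra (ZMod p) n,
    b = ∑ l, φ (t l) * d.a l := by
  classical
  have key : ∀ (b : WeylAlgebra (ZMod p) n) (t : Fin m → WeylAlgebra (ZMod p) n), ∃ t' : Fin m → WeylAlgebra (ZMod p) n,
      (∑ l, φ (t l) * d.a l) * b = ∑ l, φ (t' l) * d.a l := by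
    intro b
    refine induction_left (p := fun b => ∀ t : Fin m → WeylAlgebra (ZMod p) n, ∃ t' : Fin m → WeylAlgebra (ZMod p) n,
      (∑ l, φ (t l) * d.a l) * b = ∑ l, φ (t' l) * d.a l) ?_ ?_ ?_ ?_ b
    · intro t; exact ⟨t, by rw [mul_one]⟩
    · intro x y hx hy t
      obtain ⟨t1, h1⟩ := hx t
      obtain ⟨t2, h2⟩ := hy t
      exact ⟨fun l => t1 l + t2 l, by simp only [mul_add, h1, h2, map_add, add_mul, Finset.sum_add_distrib]⟩
    · intro r x hx t
      obtain ⟨t1, h1⟩ := hx t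
      exact ⟨fun l => r • t1 l, by simp only [mul_smul_comm, h1, map_smul, smul_mul_assoc, Finset.smul_sum]⟩
    · intro s x hx t
      rw [← mul_assoc, d.step]
      exact hx _
  obtain ⟨t, ht⟩ := key b (fun l => if l = d.l0 then 1 else 0)
  refine ⟨t, ?_⟩
  rw [← ht, Finset.sum_eq_single d.l0]
  · simp [d.a0]
  · intro l _ hl; simp [hl]
  · simp

theorem FD.expand (d : FD φ m c) (hΦ : ∀ z, φ (iota p n z) = iota p n (Φ z))
    (t : Fin m → WeylAlgebra (ZMod p) n) :
    ∑ l, φ (t l) * d.a l = ∑ k : Fin m × (Ix n → Fin p),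
      iota p n (Φ (co k.2 (t k.1))) * (φ (bq k.2) * d.a k.1) := by
  rw [Fintype.sum_prod_type]
  refine Finset.sum_congr rfl fun l _ => ?_
  conv_lhs => rw [← co_sum (t l), map_sum, Finset.sum_mul]
  refine Finset.sum_congr rfl fun γ _ => ?_
  rw [map_mul, hΦ, mul_assoc]

theorem FD.dep (d : FD φ m c) (hΦ : ∀ z, φ (iota p n z) = iota p n (Φ z)) : Dep m Φ := by
  classical
  intro f
  choose t ht using fun x : Fin (m + 1) × (Ix n → Fin p) => d.span (iota p n (f x.1) * φ (bq x.2))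
  have hcard : 0 < Fintype.card (Ix n → Fin p) := Fintype.card_pos_iff.2 ⟨d0 p n⟩
  have h : ¬ LinearIndependent (MvPolynomial (Ix n) (ZMod p))
      (fun x => (fun k => co k.2 (t x k.1) : Fin m × (Ix n → Fin p) → MvPolynomial (Ix n) (ZMod p))) := by
    intro h
    have := h.fintype_card_le_finrank
    rw [Module.finrank_fintype_fun_eq_card, Fintype.card_prod, Fintype.card_prod, Fintype.card_fin,
      Fintype.card_fin] at this
    have := Nat.le_of_mul_le_mul_right this hcard
    omega
  rw [Fintype.not_linearIndependent_iff] at h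
  obtain ⟨z, hz, ⟨j0, γ0⟩, hi⟩ := h
  have hz' : ∀ k : Fin m × (Ix n → Fin p), ∑ x, z x * co k.2 (t x k.1) = 0 := by
    intro k
    have := congrFun hz k
    rw [Finset.sum_apply] at this
    exact this
  have h1 : ∑ x : Fin (m + 1) × (Ix n → Fin p), iota p n (Φ (z x)) * (iota p n (f x.1) * φ (bq x.2)) = 0 := by
    have h2 : ∀ x, iota p n (Φ (z x)) * (iota p n (f x.1) * φ (bq x.2)) =
        ∑ k : Fin m × (Ix n → Fin p),
        iota p n (Φ (z x * co k.2 (t x k.1))) * (φ (bq k.2) * d.a k.1) := by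
      intro x
      rw [ht, d.expand hΦ, Finset.mul_sum]
      refine Finset.sum_congr rfl fun k _ => ?_
      rw [← mul_assoc, map_mul Φ, map_mul (iota p n)]
    simp only [h2]
    rw [Finset.sum_comm]
    apply Finset.sum_eq_zero
    intro k _
    rw [← Finset.sum_mul, ← map_sum, ← map_sum, hz', map_zero, map_zero, zero_mul]
  rw [Fintype.sum_prod_type_right] at h1
  have h3 : (fun γ => ∑ j, iota p n (Φ (z (j, γ)) * f j)) = 0 := by
    apply cen_indep (φ := φ)
    · intro γ
      rw [← map_sum]; exact cen_iota _
    · rw [← h1]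
      refine Finset.sum_congr rfl fun γ _ => ?_
      rw [Finset.sum_mul]
      refine Finset.sum_congr rfl fun j _ => ?_
      rw [map_mul, mul_assoc]
  refine ⟨fun j => z (j, γ0), fun h => hi (congrFun h j0), ?_⟩
  have h4 := congrFun h3 γ0
  simp only [← map_sum] at h4
  exact iota_inj (by rw [h4, map_zero]; rfl)

theorem FD.repr (d : FD φ m c) (hΦ : ∀ z, φ (iota p n z) = iota p n (Φ z))
    (t : Fin m → WeylAlgebra (ZMod p) n) (x : MvPolynomial (Ix n) (ZMod p))
    (hx : iota p n x = ∑ l, φ (t l) * d.a l) :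
    x = ∑ k : Fin m × (Ix n → Fin p),
      Φ (co k.2 (t k.1)) * co (d0 p n) (φ (bq k.2) * d.a k.1) := by
  rw [d.expand hΦ] at hx
  have := congrArg (co (d0 p n)) hx
  rw [co_iota, co_fsum] at this
  rw [this]
  refine Finset.sum_congr rfl fun k _ => ?_
  rw [co_mul]

theorem fin_integral {P Z ι : Type*} [CommRing P] [CommRing Z] [Fintype ι] (f : P →+* Z) (b : ι → Z)
    (h : ∀ z, ∃ g : ι → P, z = ∑ k, f (g k) * b k) (z : Z) : f.IsIntegralElem z := by
  classical
  letI := f.toAlgebra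
  have : Module.Finite P Z := by
    refine ⟨⟨Finset.univ.image b, ?_⟩⟩
    rw [eq_top_iff]
    intro x _
    obtain ⟨g, hg⟩ := h x
    rw [hg]
    apply sum_mem
    intro k _
    exact Submodule.smul_mem _ (g k) (Submodule.subset_span (by simp))
  exact Algebra.IsIntegral.isIntegral (R := P) z

theorem FD.integral (d : FD φ m c) (hΦ : ∀ z, φ (iota p n z) = iota p n (Φ z))
    (z : MvPolynomial (Ix n) (ZMod p)) : Φ.toRingHom.IsIntegralElem z := by
  apply fin_integral Φ.toRingHom (fun k : Fin m × (Ix n → Fin p) =>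
      co (d0 p n) (φ (bq k.2) * d.a k.1))
  intro x
  obtain ⟨t, ht⟩ := d.span (iota p n x)
  exact ⟨_, d.repr hΦ t x ht⟩

theorem FD.growth (d : FD φ m c) (hΦ : ∀ z, φ (iota p n z) = iota p n (Φ z)) (s : Ix n) (j : ℕ) :
    ∃ g : Fin m × (Ix n → Fin p) → MvPolynomial (Ix n) (ZMod p),
      (∀ k, (g k).totalDegree ≤ c * j + 0) ∧
      (X s : MvPolynomial (Ix n) (ZMod p)) ^ j = ∑ k, Φ (g k) * co (d0 p n) (φ (bq k.2) * d.a k.1) := by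
  obtain ⟨t, ht, he⟩ := d.gen_pow s (p * j)
  refine ⟨fun k => co k.2 (t k.1), ?_, ?_⟩
  · intro k
    apply cf_deg
    have := mem_dl_succ.1 (ht k.1)
    rw [add_zero]
    convert this using 1
    ring
  · apply d.repr hΦ
    rw [← he, map_pow, iota_X, pow_mul]

theorem phi_inj (hΦ : ∀ z, φ (iota p n z) = iota p n (Φ z)) (hinj : Function.Injective Φ) :
    Function.Injective φ := by
  rw [injective_iff_map_eq_zero]
  intro a ha
  rw [← co_sum a, map_sum] at ha
  have : (fun γ => iota p n (Φ (co γ a))) = 0 := by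
    apply cen_indep (φ := φ)
    · intro γ; exact cen_iota _
    · rw [← ha]
      refine Finset.sum_congr rfl fun γ _ => ?_
      rw [map_mul, hΦ]
  apply co_ext
  intro γ
  have h1 := congrFun this γ
  rw [co_zero]
  exact hinj (iota_inj (by rw [map_zero, map_zero]; exact h1))

theorem halg_poly {σ : Type*} (z : MvPolynomial σ (ZMod p)) (h : IsIntegral (ZMod p) z) :
    ∃ a, z = algebraMap (ZMod p) _ a := by
  by_cases hz : z.totalDegree = 0
  · exact ⟨_, (totalDegree_eq_zero_iff_eq_C).1 hz⟩
  exfalso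
  obtain ⟨q, hq, h0⟩ := h
  have hz0 : z ≠ 0 := by rintro rfl; simp at hz
  rw [Polynomial.eval₂_eq_sum_range, Finset.sum_range_succ, hq.coeff_natDegree, map_one, one_mul] at h0
  have h1 : z ^ q.natDegree ∈ dl (ZMod p) σ (q.natDegree * z.totalDegree) := by
    rw [eq_neg_of_add_eq_zero_right h0]
    apply neg_mem
    apply sum_mem
    intro i hi
    rw [Finset.mem_range] at hi
    rw [← Algebra.smul_def]
    apply Submodule.smul_mem
    have : z ^ i ∈ dl (ZMod p) σ (i * z.totalDegree + 1) := by
      rw [mem_dl_succ, totalDegree_pow_eq hz0]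
    refine dl_mono ?_ this
    have : i * z.totalDegree < q.natDegree * z.totalDegree :=
      Nat.mul_lt_mul_of_pos_right hi (Nat.pos_of_ne_zero hz)
    omega
  rcases Nat.eq_zero_or_pos q.natDegree with hd | hd
  · rw [hd] at h0; simp at h0
  have h2 : 0 < q.natDegree * z.totalDegree := Nat.mul_pos hd (Nat.pos_of_ne_zero hz)
  obtain ⟨e, he⟩ : ∃ e, q.natDegree * z.totalDegree = e + 1 := ⟨_, (Nat.succ_pred_eq_of_pos h2).symm⟩
  rw [he, mem_dl_succ, totalDegree_pow_eq hz0, he] at h1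
  omega

end data
end WA


set_option linter.all false

namespace WA

open MvPolynomial

section comm

theorem ad_pow_x {B : Type*} [Ring B] {d x : B} (h : d * x = x * d + 1) (j : ℕ) :
    d * x ^ j - x ^ j * d = (j : B) * x ^ (j - 1) := by
  induction j with
  | zero => simp
  | succ j ih =>
    have h1 : d * x ^ j = x ^ j * d + (j : B) * x ^ (j - 1) := by rw [← ih]; abel
    rw [pow_succ, ← mul_assoc, h1, add_mul, mul_assoc, h, mul_add, mul_one, mul_assoc (j : B)]
    rcases Nat.eq_zero_or_pos j with rfl | hj
    · simp
    · have : x ^ (j - 1) * x = x ^ j := by rw [← pow_succ]; congr 1; omega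
      rw [this, Nat.add_sub_cancel, ← mul_assoc]
      push_cast
      noncomm_ring

theorem pow_comm_formula {B : Type*} [Ring B] {d x : B} (h : d * x = x * d + 1) (p : ℕ) :
    d ^ p * x ^ p = ∑ k ∈ Finset.range (p + 1),
      ((p.choose k * p.descFactorial k : ℕ) : B) * (x ^ (p - k) * d ^ (p - k)) := by
  set ad : Module.End ℤ B := LinearMap.mulLeft ℤ d - LinearMap.mulRight ℤ d with had
  have hc : Commute ad (LinearMap.mulRight ℤ d) := by
    apply Commute.sub_left
    · exact LinearMap.ext fun y => by simp [mul_assoc]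
    · exact Commute.refl _
  have hL : LinearMap.mulLeft ℤ d = ad + LinearMap.mulRight ℤ d := by rw [had]; abel
  have hk : ∀ k, (ad ^ k) (x ^ p) = (p.descFactorial k : B) * x ^ (p - k) := by
    intro k
    induction k with
    | zero => simp
    | succ k ih =>
      rw [pow_succ', Module.End.mul_apply, ih]
      have h1 : ∀ (m : ℕ) (y : B), ad ((m : B) * y) = (m : B) * ad y := by
        intro m y
        rw [← nsmul_eq_mul, map_nsmul, nsmul_eq_mul]
      rw [h1]
      have h2 : ad (x ^ (p - k)) = ((p - k : ℕ) : B) * x ^ (p - k - 1) := by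
        rw [← ad_pow_x h]; simp [had]
      rw [h2, Nat.descFactorial_succ, ← mul_assoc, Nat.sub_sub, ← Nat.cast_mul, mul_comm (p - k)]
  have h1 : d ^ p * x ^ p = (LinearMap.mulLeft ℤ d ^ p) (x ^ p) := by
    rw [LinearMap.pow_mulLeft]; rfl
  rw [h1, hL, hc.add_pow, LinearMap.sum_apply]
  refine Finset.sum_congr rfl fun k _ => ?_
  rw [(hc.pow_pow k (p - k)).eq, Module.End.mul_apply, Module.End.natCast_apply, map_nsmul,
    Module.End.mul_apply, hk, LinearMap.pow_mulRight, LinearMap.mulRight_apply, nsmul_eq_mul,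
    Nat.cast_mul]
  simp only [mul_assoc]

theorem pow_comm_p {B : Type*} [Ring B] {d x : B} (h : d * x = x * d + 1) {p : ℕ} (hp : p.Prime) :
    ∃ e : B, d ^ p * x ^ p - x ^ p * d ^ p = (p : B) * ((p : B) * e + ((p - 1).factorial : B)) := by
  have hp0 := hp.pos
  have hdv : ∀ k, 0 < k → k < p → ∃ c : ℕ, p.choose k * p.descFactorial k = p * (p * c) := by
    intro k hk hkp
    obtain ⟨a, ha⟩ := hp.dvd_choose_self hk.ne' hkp
    obtain ⟨j, rfl⟩ : ∃ j, k = j + 1 := ⟨k - 1, by omega⟩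
    have : p ∣ p.descFactorial (j + 1) := by
      obtain ⟨q, rfl⟩ : ∃ q, p = q + 1 := ⟨p - 1, by omega⟩
      rw [Nat.succ_descFactorial_succ]; exact Dvd.intro _ rfl
    obtain ⟨b, hb⟩ := this
    exact ⟨a * b, by rw [ha, hb]; ring⟩
  choose! c hc using hdv
  obtain ⟨q, hq⟩ : ∃ q, p = q + 1 := ⟨p - 1, by omega⟩
  refine ⟨∑ k ∈ Finset.range q, (c (k + 1) : B) * (x ^ (p - (k + 1)) * d ^ (p - (k + 1))), ?_⟩
  rw [pow_comm_formula h, Finset.sum_range_succ']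
  simp only [Nat.choose_zero_right, Nat.descFactorial_zero, Nat.mul_one, Nat.cast_one, one_mul, Nat.sub_zero,
    add_sub_cancel_right]
  have h1 : Finset.range p = Finset.range (q + 1) := by rw [hq]
  rw [h1, Finset.sum_range_succ, mul_add]
  congr 1
  · rw [Finset.mul_sum, Finset.mul_sum]
    refine Finset.sum_congr rfl fun k hk => ?_
    rw [Finset.mem_range] at hk
    rw [hc (k + 1) (by omega) (by omega)]
    push_cast
    simp only [mul_assoc]
  · rw [← hq]
    simp only [Nat.choose_self, Nat.descFactorial_self, one_mul, Nat.sub_self, pow_zero, mul_one]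
    rw [← Nat.cast_mul, Nat.mul_factorial_pred hp0.ne']

end comm

section poisson
variable {p : ℕ} [Fact p.Prime] {n : ℕ} {B : Type*} [Ring B]

/-- a flat lifting of the Weyl algebra modulo `p` -/
structure IsLift (red : B →+* WeylAlgebra (ZMod p) n) : Prop where
  surj : Function.Surjective red
  ker : ∀ b, red b = 0 → ∃ e, b = (p : B) * e
  tf : ∀ e : B, (p : B) * e = 0 → e = 0

variable {red : B →+* WeylAlgebra (ZMod p) n}

theorem red_p (red : B →+* WeylAlgebra (ZMod p) n) (e : B) : red ((p : B) * e) = 0 := by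
  have : (p : WeylAlgebra (ZMod p) n) = 0 := by
    rw [← map_natCast (algebraMap (ZMod p) _)]; simp
  rw [map_mul, map_natCast, this, zero_mul]

theorem p_comm (b c : B) : b * ((p : B) * c) = (p : B) * (b * c) := by
  rw [← mul_assoc, ← mul_assoc, (Nat.cast_commute p b).eq]

/-- `v` is the bracket of `Q` and `w` -/
def BrEx (red : B →+* WeylAlgebra (ZMod p) n) (Q : B) (w v : MvPolynomial (Ix n) (ZMod p)) : Prop :=
  ∀ w' b, red w' = iota p n w → Q * w' - w' * Q = (p : B) * b → red b = iota p n v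

theorem IsLift.div (h : IsLift red) {Q : B} (hQ : ∀ a, Commute (red Q) a) (w : B) :
    ∃ b, Q * w - w * Q = (p : B) * b := by
  apply h.ker
  rw [map_sub, map_mul, map_mul, (hQ _).eq, sub_self]

theorem IsLift.brex (h : IsLift red) {Q : B} (hQ : ∀ a, Commute (red Q) a)
    (w : MvPolynomial (Ix n) (ZMod p)) : ∃ v, BrEx red Q w v := by
  obtain ⟨w1, hw1⟩ := h.surj (iota p n w)
  obtain ⟨b1, hb1⟩ := h.div hQ w1
  have hcw : ∀ a, Commute (red w1) a := by rw [hw1]; exact iota_comm w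
  have hcen : Cen (AlgHom.id (ZMod p) (WeylAlgebra (ZMod p) n)) (red b1) := by
    intro a
    obtain ⟨a', rfl⟩ := h.surj a
    obtain ⟨c1, hc1⟩ := h.div hcw a'
    obtain ⟨c2, hc2⟩ := h.div hQ a'
    have hj : (p : B) * (b1 * a' - a' * b1) = (p : B) * ((Q * c1 - c1 * Q) - (w1 * c2 - c2 * w1)) := by
      have e1 : (p : B) * (b1 * a' - a' * b1) = (p : B) * b1 * a' - a' * ((p : B) * b1) := by
        rw [p_comm]; noncomm_ring
      have e2 : (p : B) * ((Q * c1 - c1 * Q) - (w1 * c2 - c2 * w1)) =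
          (Q * ((p : B) * c1) - (p : B) * c1 * Q) - (w1 * ((p : B) * c2) - (p : B) * c2 * w1) := by
        rw [p_comm, p_comm]; noncomm_ring
      rw [e1, e2, ← hb1, ← hc1, ← hc2]; noncomm_ring
    have hj' : b1 * a' - a' * b1 = (Q * c1 - c1 * Q) - (w1 * c2 - c2 * w1) := by
      rw [← sub_eq_zero]; apply h.tf; rw [mul_sub, hj, sub_self]
    have := congrArg red hj'
    simp only [map_sub, map_mul] at this
    rw [(hQ (red c1)).eq, (hcw (red c2)).eq, sub_self, sub_self, sub_self, sub_eq_zero] at this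
    exact this
  obtain ⟨v, hv⟩ := cen_eq hcen
  refine ⟨v, ?_⟩
  intro w' b hw' hb
  obtain ⟨e, he⟩ := h.ker (w' - w1) (by rw [map_sub, hw', hw1, sub_self])
  have h1 : w' = w1 + (p : B) * e := by rw [← he]; abel
  have h2 : (p : B) * b = (p : B) * (b1 + (Q * e - e * Q)) := by
    rw [← hb, h1, mul_add (p : B), ← hb1, mul_sub (p : B), ← p_comm Q]; noncomm_ring
  have h3 : b = b1 + (Q * e - e * Q) := by
    rw [← sub_eq_zero]; apply h.tf; rw [mul_sub, h2, sub_self]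
  rw [h3, map_add, map_sub, map_mul, map_mul, (hQ _).eq, sub_self, add_zero, hv]

theorem IsLift.exists_der (h : IsLift red) {Q : B} (hQ : ∀ a, Commute (red Q) a) :
    ∃ D : Derivation (ZMod p) (MvPolynomial (Ix n) (ZMod p)) (MvPolynomial (Ix n) (ZMod p)),
      ∀ w, BrEx red Q w (D w) := by
  choose D hD using h.brex hQ
  have hadd : ∀ x y, D (x + y) = D x + D y := by
    intro x y
    obtain ⟨x1, hx1⟩ := h.surj (iota p n x)
    obtain ⟨y1, hy1⟩ := h.surj (iota p n y)
    obtain ⟨b, hb⟩ := h.div hQ x1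
    obtain ⟨c, hc⟩ := h.div hQ y1
    apply iota_inj
    rw [map_add, ← hD x x1 b hx1 hb, ← hD y y1 c hy1 hc, ← map_add]
    symm
    apply hD (x + y) (x1 + y1) _ (by rw [map_add, hx1, hy1, map_add])
    rw [mul_add (p : B), ← hb, ← hc]; noncomm_ring
  have hmul : ∀ x y, D (x * y) = x * D y + y * D x := by
    intro x y
    obtain ⟨x1, hx1⟩ := h.surj (iota p n x)
    obtain ⟨y1, hy1⟩ := h.surj (iota p n y)
    obtain ⟨b, hb⟩ := h.div hQ x1
    obtain ⟨c, hc⟩ := h.div hQ y1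
    apply iota_inj
    have := hD (x * y) (x1 * y1) (x1 * c + b * y1) (by rw [map_mul, hx1, hy1, map_mul]) (by
      rw [mul_add (p : B), ← p_comm, ← mul_assoc (p : B), ← hb, ← hc]; noncomm_ring)
    rw [← this, map_add, map_add, map_mul, map_mul, map_mul, map_mul, hx1, hy1, hD x x1 b hx1 hb,
      hD y y1 c hy1 hc, (iota_comm (D x) _).eq]
  refine ⟨Derivation.mk' ((AddMonoidHom.mk' D hadd).toZModLinearMap p) ?_, ?_⟩
  · intro a b; exact hmul a b
  · intro w; exact hD w

end poisson

section inj
variable {p : ℕ} [Fact p.Prime] {σ : Type*} [Fintype σ] [DecidableEq σ]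

theorem eq_pow_of_pderiv {g : MvPolynomial σ (ZMod p)} (hg : ∀ s, pderiv s g = 0) :
    ∃ h, g = h ^ p := by
  refine ⟨∑ u ∈ g.support, monomial (dgq p u) (coeff u g), ?_⟩
  rw [← expand_zmod, map_sum]
  conv_lhs => rw [g.as_sum]
  refine Finset.sum_congr rfl fun u hu => ?_
  have hu' : p • dgq p u = u := ?_
  · rw [expand_monomial, hu']
  ext s
  simp only [dgq, Finsupp.smul_apply, Finsupp.mapRange_apply, smul_eq_mul]
  rw [Nat.mul_div_cancel']
  by_cases h0 : u s = 0
  · rw [h0]; exact dvd_zero _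
  have h1 := congrArg (coeff (u - Finsupp.single s 1)) (hg s)
  have h2 : u - Finsupp.single s 1 + Finsupp.single s 1 = u := by
    apply tsub_add_cancel_of_le
    rw [Finsupp.single_le_iff]; omega
  rw [coeff_pderiv, h2, coeff_zero] at h1
  have h3 := (mul_eq_zero.1 h1).resolve_left (mem_support_iff.1 hu)
  rw [← ZMod.natCast_eq_zero_iff, ← h3]
  have h4 : u s = (u s - 1) + 1 := by omega
  conv_lhs => rw [h4]
  simp

theorem Dual.inj {Z : Type*} [CommRing Z] [IsDomain Z] [Algebra (ZMod p) Z]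
    {Φ : MvPolynomial σ (ZMod p) →ₐ[ZMod p] Z} {D : σ → Derivation (ZMod p) Z Z} (h : Dual Φ D) :
    Function.Injective Φ := by
  rw [injective_iff_map_eq_zero]
  have key : ∀ k, ∀ g ∈ dl (ZMod p) σ k, Φ g = 0 → g = 0 := by
    intro k
    induction k with
    | zero => intro g hg _; exact mem_dl_zero hg
    | succ k ih =>
      intro g hg h0
      rcases k with _ | k
      · have := (totalDegree_eq_zero_iff_eq_C).1 (Nat.le_zero.1 (mem_dl_succ.1 hg))
        rw [this, ← algebraMap_eq, AlgHom.commutes] at h0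
        rw [this, (map_eq_zero_iff _ (algebraMap (ZMod p) Z).injective).1 h0, C_0]
      · have hpd : ∀ s, MvPolynomial.pderiv s g = 0 := by
          intro s
          apply ih _ (pderiv_mem_dl s hg)
          rw [← h.pderiv, h0, map_zero]
        obtain ⟨f, rfl⟩ := eq_pow_of_pderiv hpd
        rw [map_pow] at h0
        have h1 := pow_eq_zero_iff (Fact.out : p.Prime).ne_zero |>.1 h0
        by_cases hf : f = 0
        · rw [hf, zero_pow (Fact.out : p.Prime).ne_zero]
        rw [ih f _ h1, zero_pow (Fact.out : p.Prime).ne_zero]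
        rw [mem_dl_succ] at hg ⊢
        rw [totalDegree_pow_eq hf] at hg
        have := (Fact.out : p.Prime).two_le
        by_contra! hlt
        have : 2 * f.totalDegree ≤ p * f.totalDegree := Nat.mul_le_mul_right _ this
        omega
  intro g hg
  exact key _ g (mem_dl_succ.2 le_rfl) hg

end inj
end WA


set_option linter.all false

namespace WA

open MvPolynomial

section dualc
variable {p : ℕ} [Fact p.Prime] {n : ℕ} {B : Type*} [Ring B]
  {red : B →+* WeylAlgebra (ZMod p) n}

/-- the dual elements -/
def qd (p : ℕ) (G : Ix n → B) : Ix n → B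
  | .inl i => - G (.inr i) ^ p
  | .inr i => G (.inl i) ^ p

theorem red_b (red : B →+* WeylAlgebra (ZMod p) n) (e : B) :
    red ((p : B) * e + ((p - 1).factorial : B)) = -1 := by
  rw [map_add, red_p, zero_add, map_natCast, ← map_natCast (algebraMap (ZMod p) _),
    ZMod.wilsons_lemma, map_neg, map_one]

theorem qd_comm (red : B →+* WeylAlgebra (ZMod p) n) {G : Ix n → B} (hG : IsWeyl G) (s t : Ix n) :
    ∃ b, qd p G s * G t ^ p - G t ^ p * qd p G s = (p : B) * b ∧ red b = if s = t then 1 else 0 := by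
  have hdx : ∀ i j, ∃ b, G (.inl j) ^ p * G (.inr i) ^ p - G (.inr i) ^ p * G (.inl j) ^ p = (p : B) * b ∧
      red b = if i = j then 1 else 0 := by
    intro i j
    by_cases hij : i = j
    · subst hij
      have h := hG.dx i i
      rw [if_pos rfl] at h
      obtain ⟨e, he⟩ := pow_comm_p h (Fact.out : p.Prime)
      refine ⟨-((p : B) * e + ((p - 1).factorial : B)), ?_, ?_⟩
      · rw [mul_neg, ← he]; abel
      · rw [map_neg, red_b, neg_neg, if_pos rfl]
    · have h := hG.dx i j
      rw [if_neg hij, add_zero] at h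
      have h' : Commute (G (.inr i)) (G (.inl j)) := h
      refine ⟨0, ?_, by rw [map_zero, if_neg hij]⟩
      rw [mul_zero, (h'.pow_pow p p).eq, sub_self]
  rcases s with i | i <;> rcases t with j | j
  · obtain ⟨b, h1, h2⟩ := hdx i j
    refine ⟨b, ?_, by rw [h2]; simp⟩
    rw [← h1]; simp only [qd]; noncomm_ring
  · refine ⟨0, ?_, by simp⟩
    have h' : Commute (G (.inr i)) (G (.inr j)) := hG.dd i j
    simp only [qd]
    rw [mul_zero, neg_mul, (h'.pow_pow p p).eq, mul_neg, sub_self]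
  · refine ⟨0, ?_, by simp⟩
    have h' : Commute (G (.inl i)) (G (.inl j)) := hG.xx i j
    simp only [qd]
    rw [mul_zero, (h'.pow_pow p p).eq, sub_self]
  · obtain ⟨b, h1, h2⟩ := hdx j i
    refine ⟨b, ?_, by rw [h2]; simp [eq_comm]⟩
    rw [← h1]; simp only [qd]

variable {φ : WeylAlgebra (ZMod p) n →ₐ[ZMod p] WeylAlgebra (ZMod p) n}
  {Φ : MvPolynomial (Ix n) (ZMod p) →ₐ[ZMod p] MvPolynomial (Ix n) (ZMod p)}

theorem exists_dual (hr : IsLift red) {G : Ix n → B} (hG : IsWeyl G)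
    (hφ : ∀ s, red (G s) = φ (gen _ s)) (hΦ : ∀ z, φ (iota p n z) = iota p n (Φ z)) :
    ∃ D, Dual Φ D := by
  have hGp : ∀ s, red (G s ^ p) = iota p n (Φ (X s)) := by
    intro s
    rw [map_pow, hφ, ← hΦ, iota_X, map_pow]
  have hcen : ∀ s a, Commute (red (G s ^ p)) a := by
    intro s; rw [hGp]; exact iota_comm _
  have hQ : ∀ s a, Commute (red (qd p G s)) a := by
    rintro (i | i) a
    · simp only [qd]; rw [map_neg]; exact (hcen _ a).neg_left
    · exact hcen _ a
  choose D hD using fun s => hr.exists_der (hQ s)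
  refine ⟨D, ?_⟩
  intro s t
  obtain ⟨b, h1, h2⟩ := qd_comm red hG s t
  have := hD s (Φ (X t)) (G t ^ p) b (hGp t) h1
  rw [h2] at this
  apply iota_inj
  rw [← this]
  split_ifs <;> simp

end dualc

section surj
variable {p : ℕ} [Fact p.Prime] {n : ℕ}
  {φ : WeylAlgebra (ZMod p) n →ₐ[ZMod p] WeylAlgebra (ZMod p) n}

theorem surj_aux {z : MvPolynomial (Ix n) (ZMod p)} (hz : z ≠ 0) : ∀ (N : ℕ) (b : WeylAlgebra (ZMod p) n)
    (t : (Ix n → Fin p) → MvPolynomial (Ix n) (ZMod p)),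
    iota p n z * b = ∑ γ, iota p n (t γ) * φ (bq γ) → (∀ γ, N ≤ (dg γ).degree → t γ = 0) →
    ∃ w : (Ix n → Fin p) → MvPolynomial (Ix n) (ZMod p), b = ∑ γ, iota p n (w γ) * φ (bq γ) := by
  classical
  intro N
  induction N with
  | zero =>
    intro b t h h0
    refine ⟨0, ?_⟩
    have : b = 0 := by
      apply iota_mul_eq_zero hz
      rw [h]
      refine Finset.sum_eq_zero fun γ _ => ?_
      rw [h0 γ (Nat.zero_le _), map_zero, zero_mul]
    rw [this]; simp
  | succ N ih =>
    intro b t h h0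
    have hdiv : ∀ γ, ∃ w, (dg γ).degree = N → t γ = z * w := by
      intro γ0
      by_cases hγ : (dg γ0).degree = N
      swap
      · exact ⟨0, fun h => absurd h hγ⟩
      obtain ⟨T, U, k, hT, hU, hUk, hk, hTz⟩ := op_pair (φ := φ) N (dg γ0) hγ (fun s => (γ0 s).2)
      have h2 := congrArg T h
      rw [hTz, map_sum, Finset.sum_eq_single γ0] at h2
      · rw [bq, hT _ (cen_iota _), hUk] at h2
        have h3 : quant (C k : MvPolynomial (Ix n) (ZMod p)) = algebraMap _ _ k := by
          rw [← sym_algebraMap, quant_sym]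
        rw [h3, AlgHom.commutes, ← (iota p n).commutes, ← map_mul] at h2
        have h4 := congrArg (co (d0 p n)) h2
        rw [co_mul, co_iota, mul_comm (t γ0), ← Algebra.smul_def] at h4
        refine ⟨k⁻¹ • co (d0 p n) (T b), fun _ => ?_⟩
        rw [mul_smul_comm, h4, smul_smul, inv_mul_cancel₀ hk, one_smul]
      · intro γ _ hne
        by_cases hd : N + 1 ≤ (dg γ).degree
        · rw [h0 γ hd, map_zero, zero_mul, map_zero]
        rw [bq, hT _ (cen_iota _), hU, map_zero, map_zero, mul_zero]
        · omega
        · intro h'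
          apply hne
          rw [← dgm_dg γ, h', dgm_dg]
      · simp
    choose w hw using hdiv
    obtain ⟨w', hw'⟩ := ih (b - ∑ γ, iota p n (if (dg γ).degree = N then w γ else 0) * φ (bq γ))
      (fun γ => if (dg γ).degree = N then 0 else t γ) (by
        rw [mul_sub, h, Finset.mul_sum, ← Finset.sum_sub_distrib]
        refine Finset.sum_congr rfl fun γ _ => ?_
        split_ifs with hd
        · rw [hw γ hd, map_mul, mul_assoc, sub_self, map_zero, zero_mul]
        · simp) (by
        intro γ hγ
        split_ifs with hd
        · rfl
        · exact h0 γ (by omega))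
    refine ⟨fun γ => w' γ + if (dg γ).degree = N then w γ else 0, ?_⟩
    simp only [map_add, add_mul, Finset.sum_add_distrib]
    rw [← hw']; abel

theorem span_bq (b : WeylAlgebra (ZMod p) n) :
    ∃ w : (Ix n → Fin p) → MvPolynomial (Ix n) (ZMod p), b = ∑ γ, iota p n (w γ) * φ (bq γ) := by
  classical
  obtain ⟨z, hz, hs⟩ := exists_rel (p := p) (n := n) (κ := Option (Ix n → Fin p)) (by simp)
    (fun o => o.elim b (fun γ => φ (bq γ)))
  rw [Fintype.sum_option] at hs
  simp only [Option.elim] at hs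
  have hz0 : z none ≠ 0 := by
    intro h; apply hz
    rw [h, map_zero, zero_mul, zero_add] at hs
    have := cen_indep (φ := φ) (fun γ => cen_iota (z (some γ))) hs
    funext o
    rcases o with _ | γ
    · exact h
    · exact iota_inj (by rw [congrFun this γ]; simp)
  refine surj_aux hz0 ((Finset.univ.sup fun γ : Ix n → Fin p => (dg γ).degree) + 1) b
    (fun γ => - z (some γ)) ?_ ?_
  · rw [eq_neg_of_add_eq_zero_left hs, ← Finset.sum_neg_distrib]
    refine Finset.sum_congr rfl fun γ _ => ?_
    symm; apply eq_neg_of_add_eq_zero_left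
    rw [← add_mul, ← map_add, neg_add_cancel, map_zero, zero_mul]
  · intro γ hγ
    have : (dg γ).degree ≤ Finset.univ.sup fun γ : Ix n → Fin p => (dg γ).degree :=
      Finset.le_sup (f := fun γ : Ix n → Fin p => (dg γ).degree) (Finset.mem_univ γ)
    omega

theorem phi_surj {Φ : MvPolynomial (Ix n) (ZMod p) →ₐ[ZMod p] MvPolynomial (Ix n) (ZMod p)}
    (hΦ : ∀ z, φ (iota p n z) = iota p n (Φ z)) (hs : Function.Surjective Φ) (b : WeylAlgebra (ZMod p) n) :
    ∃ y, φ y = b := by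
  obtain ⟨w, hw⟩ := span_bq (φ := φ) b
  choose g hg using hs
  refine ⟨∑ γ, iota p n (g (w γ)) * bq γ, ?_⟩
  rw [map_sum, hw]
  refine Finset.sum_congr rfl fun γ _ => ?_
  rw [map_mul, hΦ, hg]

end surj

theorem mod_p {p : ℕ} [Fact p.Prime] {n : ℕ} {B : Type*} [Ring B]
    {red : B →+* WeylAlgebra (ZMod p) n} (hr : IsLift red) {G : Ix n → B} (hG : IsWeyl G)
    {φ : WeylAlgebra (ZMod p) n →ₐ[ZMod p] WeylAlgebra (ZMod p) n}
    (hφ : ∀ s, red (G s) = φ (gen _ s)) {m c : ℕ} (d : FD φ m c) (hm : m < p)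
    (hc : (c + 1) * m < p) (hc' : c + 1 < p) (s : Ix n) :
    ∃ y, sym y ∈ dl (ZMod p) (Ix n) (c + 1) ∧ φ y = gen _ s := by
  classical
  obtain ⟨Φ, hΦ⟩ := exists_phi φ
  obtain ⟨D, hD⟩ := exists_dual hr hG hφ hΦ
  have hinj := hD.inj
  have hX : ∀ s, ∃ f, f.totalDegree ≤ c ∧ Φ f = X s := fun s =>
    core hD hm hinj (d.dep hΦ) s (d.integral hΦ) halg_poly c hc hc' (X s) _ 0 (d.growth hΦ s)
  choose f hf1 hf2 using hX
  have hsurj : Function.Surjective Φ := by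
    intro z
    refine ⟨aeval f z, ?_⟩
    have : Φ.comp (aeval f) = AlgHom.id _ _ := by
      apply MvPolynomial.algHom_ext
      intro s
      simp [hf2]
    exact DFunLike.congr_fun this z
  obtain ⟨y, hy⟩ := phi_surj hΦ hsurj (gen _ s)
  refine ⟨y, ?_, hy⟩
  have h1 : y ^ p = iota p n (f s) := by
    apply phi_inj hΦ hinj
    rw [map_pow, hy, hΦ, hf2, iota_X]
  apply sym_mem_of_pow (Fact.out : p.Prime).pos
  have h2 := quant_expand_mul (f s) 1
  rw [mul_one, quant_one, mul_one] at h2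
  rw [h1, ← h2, sym_quant, mem_dl_succ, totalDegree_expand, mul_comm]
  exact Nat.mul_le_mul_left _ (hf1 s)

/-- reduction from the p-adic integers -/
theorem isLift_padic (p : ℕ) [Fact p.Prime] (n : ℕ) :
    IsLift (wmap (n := n) (PadicInt.toZMod (p := p))) where
  surj := by
    intro b
    have hs : Function.Surjective (PadicInt.toZMod (p := p)) := ZMod.ringHom_surjective _
    obtain ⟨q, hq⟩ := MvPolynomial.map_surjective _ hs (sym b)
    refine ⟨quant q, ?_⟩
    rw [wmap_quant, hq, quant_sym]
  ker := by
    intro b hb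
    have h1 : MvPolynomial.map (PadicInt.toZMod (p := p)) (sym b) = 0 := by
      rw [← sym_wmap, hb, map_zero]
    have h2 : (C (p : ℤ_[p])) ∣ sym b := by
      rw [C_dvd_iff_dvd_coeff]
      intro u
      have := congrArg (coeff u) h1
      rw [coeff_map, coeff_zero] at this
      have h3 : coeff u (sym b) ∈ RingHom.ker (PadicInt.toZMod (p := p)) := this
      rw [PadicInt.ker_toZMod, PadicInt.maximalIdeal_eq_span_p, Ideal.mem_span_singleton] at h3
      exact h3
    obtain ⟨e, he⟩ := h2
    refine ⟨quant e, ?_⟩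
    apply sym_injective
    rw [he, ← nsmul_eq_mul, map_nsmul, sym_quant, nsmul_eq_mul, map_natCast]
  tf := by
    intro e he
    apply sym_injective
    rw [← nsmul_eq_mul] at he
    have := congrArg sym he
    rw [map_nsmul, map_zero, nsmul_eq_mul, mul_eq_zero] at this
    rw [map_zero]
    refine this.resolve_left ?_
    exact_mod_cast (Fact.out : p.Prime).ne_zero

end WA


set_option linter.all false

namespace WA

section arith
open Polynomial

theorem exists_prime_root (f : ℤ[X]) (hf : 0 < f.natDegree) (M : ℕ) :
    ∃ p : ℕ, p.Prime ∧ M < p ∧ ∃ k : ℤ, (p : ℤ) ∣ f.eval k := by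
  by_cases ha : f.eval 0 = 0
  · obtain ⟨p, hp1, hp2⟩ := Nat.exists_infinite_primes (M + 1)
    exact ⟨p, hp2, by omega, 0, by rw [ha]; exact dvd_zero _⟩
  set a := f.eval 0 with ha'
  set Q : ℤ := (M.factorial : ℤ) with hQ
  have hQ0 : Q ≠ 0 := by rw [hQ]; exact_mod_cast M.factorial_ne_zero
  have hev : ∀ x : ℤ, f.eval (a * Q * x) = a * (1 + Q * x * f.divX.eval (a * Q * x)) := by
    intro x
    conv_lhs => rw [← f.divX_mul_X_add]
    rw [eval_add, eval_mul, eval_X, eval_C, coeff_zero_eq_eval_zero, ← ha']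
    ring
  have hne : ∀ c : ℤ, f - C c ≠ 0 := by
    intro c h
    rw [sub_eq_zero] at h
    rw [h, natDegree_C] at hf; exact lt_irrefl _ hf
  obtain ⟨x, hx⟩ : ∃ x : ℤ, ¬ ((f - C a) * (f - C (-a))).IsRoot (a * Q * x) := by
    by_contra! h
    have hfin := Polynomial.finite_setOfPred_isRoot (mul_ne_zero (hne a) (hne (-a)))
    have hinj : Function.Injective fun x : ℤ => a * Q * x :=
      fun x y hxy => mul_left_cancel₀ (mul_ne_zero ha hQ0) hxy
    exact Set.infinite_range_of_injective hinj (hfin.subset (by rintro _ ⟨x, rfl⟩; exact h x))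
  set g := 1 + Q * x * f.divX.eval (a * Q * x) with hg
  have hg1 : g.natAbs ≠ 1 := by
    intro h
    apply hx
    rw [IsRoot.def, eval_mul, eval_sub, eval_sub, eval_C, eval_C, hev, ← hg]
    rcases Int.natAbs_eq_iff.1 h with h | h <;> rw [h] <;> simp
  obtain ⟨p, hp, hpg⟩ := Nat.exists_prime_and_dvd hg1
  have hpg' : (p : ℤ) ∣ g := Int.natCast_dvd.2 hpg
  refine ⟨p, hp, ?_, a * Q * x, ?_⟩
  · by_contra! hle
    have h1 : (p : ℤ) ∣ Q := by
      rw [hQ]; exact_mod_cast (hp.dvd_factorial.2 hle)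
    have h2 : (p : ℤ) ∣ 1 := by
      have : (1 : ℤ) = g - Q * x * f.divX.eval (a * Q * x) := by rw [hg]; ring
      rw [this]
      exact dvd_sub hpg' (by rw [mul_assoc]; exact h1.mul_right _)
    have h3 := Int.natCast_dvd.1 h2
    exact hp.one_lt.ne' (Nat.dvd_one.1 h3)
  · rw [hev, ← hg]; exact hpg'.mul_left _

theorem clear_den (g : ℚ[X]) : ∃ (d : ℤ) (h : ℤ[X]), d ≠ 0 ∧ h.map (Int.castRingHom ℚ) = C (d : ℚ) * g := by
  obtain ⟨b, hb⟩ := IsLocalization.integerNormalization_map_to_map (nonZeroDivisors ℤ) g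
  refine ⟨b, IsLocalization.integerNormalization (nonZeroDivisors ℤ) g, nonZeroDivisors.ne_zero b.2, ?_⟩
  have : (Int.castRingHom ℚ) = algebraMap ℤ ℚ := rfl
  rw [this, hb]
  rw [← smul_eq_C_mul]
  ext i
  simp [Submonoid.smul_def]

theorem exists_padic_emb (L : Type*) [Field L] [Algebra ℚ L] [FiniteDimensional ℚ L] (M : ℕ) :
    ∃ (p : ℕ) (_ : Fact p.Prime), M < p ∧ Nonempty (L →+* ℚ_[p]) := by
  let pb := Field.powerBasisOfFiniteOfSeparable ℚ L
  have hIntegral : IsIntegral ℚ pb.gen := Algebra.IsIntegral.isIntegral _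
  have hsep : (minpoly ℚ pb.gen).Separable := Algebra.IsSeparable.isSeparable ℚ pb.gen
  set f0 := minpoly ℚ pb.gen with hf0
  obtain ⟨u, v, huv⟩ := hsep
  obtain ⟨b, f, hb, hf⟩ := clear_den f0
  obtain ⟨d1, u', hd1, hu'⟩ := clear_den u
  obtain ⟨d2, v', hd2, hv'⟩ := clear_den v
  have hfd : 0 < f.natDegree := by
    have h1 : (f.map (Int.castRingHom ℚ)).natDegree = f0.natDegree := by
      rw [hf, natDegree_C_mul (by exact_mod_cast hb)]
    have h2 := minpoly.natDegree_pos hIntegral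
    rw [← hf0, ← h1] at h2
    exact h2.trans_le natDegree_map_le
  have hD : C d2 * u' * f + C d1 * v' * derivative f = C (d1 * d2 * b) := by
    apply Polynomial.map_injective (Int.castRingHom ℚ) Int.cast_injective
    simp only [Polynomial.map_add, Polynomial.map_mul, Polynomial.map_C, ← derivative_map, hf, hu', hv',
      derivative_C_mul, map_mul]
    have : C (d1 : ℚ) * C (d2 : ℚ) * C (b : ℚ) = C (d1 : ℚ) * C (d2 : ℚ) * C (b : ℚ) *
      (u * f0 + v * derivative f0) := by rw [huv, mul_one]
    simp only [eq_intCast] at *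
    rw [this]; ring
  obtain ⟨p, hp, hpM, k, hk⟩ := exists_prime_root f hfd (M + (d1 * d2 * b).natAbs)
  haveI : Fact p.Prime := ⟨hp⟩
  have hk' : ¬ (p : ℤ) ∣ (derivative f).eval k := by
    intro h
    have h1 := congrArg (eval k) hD
    rw [eval_add, eval_mul, eval_mul (p := C d1 * v'), eval_C] at h1
    have h2 : (p : ℤ) ∣ d1 * d2 * b := by
      rw [← h1]; exact dvd_add (hk.mul_left _) (h.mul_left _)
    have h3 := Nat.le_of_dvd (Int.natAbs_pos.2 (mul_ne_zero (mul_ne_zero hd1 hd2) hb)) (Int.natCast_dvd.1 h2)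
    omega
  have hev : ∀ g : ℤ[X], aeval (k : ℤ_[p]) g = ((g.eval k : ℤ) : ℤ_[p]) := by
    intro g
    have := aeval_algebraMap_apply ℤ_[p] k g
    simpa using this
  obtain ⟨z, hz, -⟩ := hensels_lemma (p := p) (F := f) (a := (k : ℤ_[p])) (by
    rw [hev, hev]
    have h1 : ‖(((derivative f).eval k : ℤ) : ℤ_[p])‖ = 1 := by
      apply le_antisymm (PadicInt.norm_le_one _)
      by_contra! h
      exact hk' ((PadicInt.norm_int_lt_one_iff_dvd _).1 h)
    rw [h1, one_pow]
    exact (PadicInt.norm_int_lt_one_iff_dvd _).2 hk)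
  refine ⟨p, ‹_›, by omega, ⟨(pb.lift (z : ℚ_[p]) ?_).toRingHom⟩⟩
  rw [← hf0]
  have h1 : aeval (z : ℚ_[p]) (f.map (Int.castRingHom ℚ)) = 0 := by
    have := aeval_map_algebraMap ℚ (z : ℚ_[p]) f
    rw [show Int.castRingHom ℚ = algebraMap ℤ ℚ from rfl, this]
    have h2 := aeval_algebraMap_apply ℚ_[p] z f
    rw [hz, map_zero] at h2
    exact h2
  rw [hf, map_mul, aeval_C, mul_eq_zero] at h1
  refine h1.resolve_left ?_
  simpa using hb

theorem padic_of_int {p : ℕ} [Fact p.Prime] {x : ℚ_[p]} (hx : IsIntegral ℤ x) : ‖x‖ ≤ 1 := by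
  have h : IsIntegral ℤ_[p] x := hx.tower_top
  obtain ⟨y, rfl⟩ := IsIntegrallyClosed.isIntegral_iff.1 h
  exact y.2

theorem exists_residue.{u} (A : Type u) [CommRing A] [Nontrivial A] [Algebra ℚ A] [Algebra.FiniteType ℚ A] :
    ∃ (L : Type u) (_ : Field L) (_ : Algebra ℚ L) (_ : FiniteDimensional ℚ L), Nonempty (A →+* L) := by
  obtain ⟨I, hI⟩ := Ideal.exists_maximal A
  letI : Field (A ⧸ I) := Ideal.Quotient.field I
  haveI : Module.Finite ℚ (A ⧸ I) := finite_of_finite_type_of_isJacobsonRing ℚ (A ⧸ I)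
  exact ⟨A ⧸ I, inferInstance, inferInstance, this, ⟨Ideal.Quotient.mk I⟩⟩

theorem exists_int_mult {L : Type*} [Field L] [Algebra ℚ L] [FiniteDimensional ℚ L] (x : L) :
    ∃ N : ℤ, N ≠ 0 ∧ IsIntegral ℤ (N • x) := by
  have h1 : IsAlgebraic ℚ x := Algebra.IsAlgebraic.isAlgebraic x
  have h2 : IsAlgebraic ℤ x := (IsFractionRing.isAlgebraic_iff ℤ ℚ L).2 h1
  obtain ⟨y, hy, h⟩ := h2.exists_integral_multiple
  exact ⟨y, hy, h⟩

theorem exists_padic {K : Type*} [Field K] [CharZero K] (S : Finset K) (M : ℕ) :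
    ∃ (p : ℕ) (_ : Fact p.Prime), M < p ∧ Nonempty (Subring.closure (S : Set K) →+* ℤ_[p]) := by
  let A := Algebra.adjoin ℚ (S : Set K)
  haveI : Algebra.FiniteType ℚ A := Subalgebra.fg_iff_finiteType _ |>.1 ⟨S, rfl⟩
  obtain ⟨L, _, _, _, ⟨ρ⟩⟩ := exists_residue A
  have hN : ∀ x : L, ∃ N : ℤ, N ≠ 0 ∧ IsIntegral ℤ (N • x) := exists_int_mult
  choose N hN0 hN using hN
  have hmem : ∀ s : S, (s : K) ∈ A := fun s => Algebra.subset_adjoin s.2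
  let NN : ℤ := ∏ s : S, N (ρ ⟨s, hmem s⟩)
  have hNN : NN ≠ 0 := Finset.prod_ne_zero_iff.2 fun s _ => hN0 _
  obtain ⟨p, hp, hpM, ⟨e⟩⟩ := exists_padic_emb (L) (M + NN.natAbs)
  refine ⟨p, hp, by omega, ?_⟩
  have hle : Subring.closure (S : Set K) ≤ A.toSubring := by
    rw [Subring.closure_le]; exact Algebra.subset_adjoin
  let ψ : Subring.closure (S : Set K) →+* ℚ_[p] := (e.comp ρ).comp (Subring.inclusion hle)
  have hS : ∀ s : S, ‖e (ρ ⟨s, hmem s⟩)‖ ≤ 1 := by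
    intro s
    have h1 : IsIntegral ℤ (e (N (ρ ⟨s, hmem s⟩) • ρ ⟨s, hmem s⟩)) := (hN _).map e.toIntAlgHom
    rw [map_zsmul, zsmul_eq_mul] at h1
    have h2 := padic_of_int h1
    rw [norm_mul] at h2
    have h3 : ‖((N (ρ ⟨s, hmem s⟩) : ℤ) : ℚ_[p])‖ = 1 := by
      have h4 : ¬ ‖((N (ρ ⟨s, hmem s⟩) : ℤ) : ℤ_[p])‖ < 1 := by
        rw [PadicInt.norm_int_lt_one_iff_dvd]
        intro h
        have h5 : (p : ℤ) ∣ NN := h.trans (Finset.dvd_prod_of_mem _ (Finset.mem_univ s))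
        have := Nat.le_of_dvd (Int.natAbs_pos.2 hNN) (Int.natCast_dvd.1 h5)
        omega
      have h6 := le_antisymm (PadicInt.norm_le_one _) (not_lt.1 h4)
      simpa [PadicInt.norm_def] using h6
    rwa [h3, one_mul] at h2
  have hall : ∀ x, ‖ψ x‖ ≤ 1 := by
    have : Subring.closure (S : Set K) ≤ ((PadicInt.subring p).comap (e.comp ρ)).map A.toSubring.subtype := by
      rw [Subring.closure_le]
      intro x hx
      exact ⟨⟨x, hmem ⟨x, hx⟩⟩, hS ⟨x, hx⟩, rfl⟩
    intro x
    obtain ⟨y, hy, hyx⟩ := this x.2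
    have : Subring.inclusion hle x = y := Subtype.ext hyx.symm
    show ‖(e.comp ρ) (Subring.inclusion hle x)‖ ≤ 1
    rw [this]; exact hy
  exact ⟨ψ.codRestrict (PadicInt.subring p) hall⟩

end arith
end WA


set_option linter.all false

namespace WA

open MvPolynomial

section base
variable {R : Type*} [CommRing R] {n : ℕ} {R' : Type*} [CommRing R'] (f : R →+* R')

theorem wmap_inj (hf : Function.Injective f) : Function.Injective (wmap (n := n) f) := by
  intro a b h
  apply sym_injective
  apply MvPolynomial.map_injective f hf
  rw [← sym_wmap, ← sym_wmap, h]

theorem wmap_wlift {g : Ix n → WeylAlgebra R n} (hg : IsWeyl g) (a : WeylAlgebra R n) :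
    wmap f (wlift (R := R) g hg a) = wlift (R := R') (fun s => wmap f (g s)) (hg.map (wmap f)) (wmap f a) := by
  induction a using induction_left with
  | h1 => simp only [map_one]
  | hadd a b ha hb => simp only [map_add, ha, hb]
  | hsmul r a ha => rw [map_smul, wmap_smul, wmap_smul, map_smul, ha]
  | hgen s a ha => simp only [map_mul, ha, wmap_gen, wlift_gen]

theorem IsWeyl.of_inj {B C : Type*} [Ring B] [Ring C] {h : B →+* C} (hh : Function.Injective h)
    {g : Ix n → B} (hg : IsWeyl fun s => h (g s)) : IsWeyl g where
  xx i j := hh (by simpa only [map_mul] using hg.xx i j)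
  dd i j := hh (by simpa only [map_mul] using hg.dd i j)
  dx i j := hh (by
    have := hg.dx i j
    rw [map_mul, map_add, map_mul, this]
    congr 1
    split_ifs <;> simp)

theorem dl_of_map (hf : Function.Injective f) {τ : Type*} {k : ℕ} {q : MvPolynomial τ R}
    (h : MvPolynomial.map f q ∈ dl R' τ k) : q ∈ dl R τ k := by
  rw [mem_dl] at h ⊢
  intro m hm
  apply h
  rw [coeff_map]
  intro h0
  exact hm (hf (by rw [h0, map_zero]))

/-- a finite functional on symbols -/
noncomputable def lam (E : Finset (Ix n →₀ ℕ)) (v : E → R) (a : WeylAlgebra R n) : R :=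
  ∑ e : E, v e * coeff e.1 (sym a)

theorem lam_wmap (E : Finset (Ix n →₀ ℕ)) (v : E → R) (a : WeylAlgebra R n) :
    lam E (fun e => f (v e)) (wmap f a) = f (lam E v a) := by
  simp only [lam, sym_wmap, coeff_map, map_sum, map_mul]

theorem lam_add (E : Finset (Ix n →₀ ℕ)) (v : E → R) (a b : WeylAlgebra R n) :
    lam E v (a + b) = lam E v a + lam E v b := by
  simp only [lam, map_add, coeff_add, mul_add, Finset.sum_add_distrib]

theorem lam_smul (E : Finset (Ix n →₀ ℕ)) (v : E → R) (r : R) (a : WeylAlgebra R n) :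
    lam E v (r • a) = r * lam E v a := by
  simp only [lam, map_smul, coeff_smul, Finset.mul_sum, smul_eq_mul]
  refine Finset.sum_congr rfl fun e _ => ?_
  ring

theorem exists_wmap_sub {K : Type*} [Field K] (S : Subring K) (a : WeylAlgebra K n)
    (h : ∀ u ∈ (sym a).support, coeff u (sym a) ∈ S) : ∃ b, wmap S.subtype b = a := by
  have : sym a ∈ Set.range (MvPolynomial.map S.subtype) := by
    rw [MvPolynomial.mem_range_map_iff_coeffs_subset]
    intro x hx
    rw [Finset.mem_coe, mem_coeffs_iff] at hx
    obtain ⟨u, hu, rfl⟩ := hx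
    exact ⟨⟨_, h u hu⟩, rfl⟩
  obtain ⟨q, hq⟩ := this
  exact ⟨quant q, by rw [wmap_quant, hq, quant_sym]⟩

end base

section main
variable {K : Type*} [Field K] [CharZero K] {n : ℕ}

/-- the functional detecting that a generator is not in the image -/
theorem exists_lam (φ : WeylAlgebra K n →ₐ[K] WeylAlgebra K n) (c : ℕ) (s : Ix n)
    (h : ¬ ∃ y, sym y ∈ dl K (Ix n) (c + 1) ∧ φ y = gen _ s) :
    ∃ (E : Finset (Ix n →₀ ℕ)) (v : E → K), (∀ u : Ix n →₀ ℕ, u.degree < c + 1 →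
      lam E v (φ (quant (monomial u 1))) = 0) ∧ lam E v (gen K s) = 1 := by
  classical
  let T : MvPolynomial (Ix n) K →ₗ[K] MvPolynomial (Ix n) K := sym.comp (φ.toLinearMap.comp quant)
  have hn : sym (gen K s) ∉ (dl K (Ix n) (c + 1)).map T := by
    rintro ⟨q, hq, hq'⟩
    refine h ⟨quant q, by rw [sym_quant]; exact hq, ?_⟩
    exact sym_injective hq'
  obtain ⟨l, hl0, hl⟩ := Submodule.exists_le_ker_of_notMem hn
  have hfin : {u : Ix n →₀ ℕ | u.degree ≤ c}.Finite := Finsupp.finite_of_degree_le c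
  let F := hfin.toFinset
  let E : Finset (Ix n →₀ ℕ) := (sym (gen K s)).support ∪ F.biUnion fun u => (T (monomial u 1)).support
  have key : ∀ q : MvPolynomial (Ix n) K, q.support ⊆ E →
      ∑ e : E, ((l (sym (gen K s)))⁻¹ * l (monomial e.1 1)) * coeff e.1 q = (l (sym (gen K s)))⁻¹ * l q := by
    intro q hq
    have h1 : l q = ∑ e ∈ E, coeff e q * l (monomial e 1) := by
      conv_lhs => rw [q.as_sum]
      rw [map_sum]
      have h2 : ∀ e, l (monomial e (coeff e q)) = coeff e q * l (monomial e 1) := by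
        intro e
        rw [← smul_eq_mul, ← map_smul, smul_monomial, smul_eq_mul, mul_one]
      simp only [h2]
      apply Finset.sum_subset hq
      intro e _ he
      rw [notMem_support_iff.1 he, zero_mul]
    rw [h1, Finset.mul_sum, ← Finset.sum_coe_sort E]
    refine Finset.sum_congr rfl fun e _ => ?_
    ring
  refine ⟨E, fun e => (l (sym (gen K s)))⁻¹ * l (monomial e.1 1), ?_, ?_⟩
  · intro u hu
    have hsub : (T (monomial u 1)).support ⊆ E := by
      refine Finset.Subset.trans ?_ Finset.subset_union_right
      exact Finset.subset_biUnion_of_mem (fun u => (T (monomial u 1)).support)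
        (hfin.mem_toFinset.2 (by simpa using Nat.lt_succ_iff.1 hu))
    have := key _ hsub
    have h0 : l (T (monomial u 1)) = 0 := hl ⟨_, monomial_mem_dl 1 hu, rfl⟩
    rw [h0, mul_zero] at this
    exact this
  · have := key _ (Finset.subset_union_left : (sym (gen K s)).support ⊆ E)
    rw [inv_mul_cancel₀ hl0] at this
    exact this

theorem left_main (φ : WeylAlgebra K n →ₐ[K] WeylAlgebra K n) {m c : ℕ}
    (a : Fin m → WeylAlgebra K n) (l0 : Fin m) (a0 : a l0 = 1)
    (u : Fin m → Ix n → Fin m → WeylAlgebra K n)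
    (hu : ∀ l s k, sym (u l s k) ∈ dl K (Ix n) (c + 1))
    (rel : ∀ l s, a l * gen _ s = ∑ k, φ (u l s k) * a k) (s : Ix n) :
    ∃ y, φ y = gen K s := by
  classical
  by_contra hcon
  obtain ⟨E, v, hv0, hv1⟩ := exists_lam φ c s (fun ⟨y, _, hy⟩ => hcon ⟨y, hy⟩)
  let cs : WeylAlgebra K n → Finset K := fun b => (sym b).support.image fun e => coeff e (sym b)
  let S : Finset K := (Finset.univ.biUnion fun t : Ix n => cs (φ (gen K t))) ∪
    (Finset.univ.biUnion fun l : Fin m => cs (a l)) ∪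
    (Finset.univ.biUnion fun x : Fin m × Ix n × Fin m => cs (u x.1 x.2.1 x.2.2)) ∪
    Finset.univ.image v
  obtain ⟨p, hp, hpM, ⟨θ⟩⟩ := exists_padic S (m + (c + 1) * m + (c + 1))
  set R := Subring.closure (S : Set K) with hR
  have hSR : ∀ x ∈ S, x ∈ R := fun x hx => Subring.subset_closure hx
  have hlift : ∀ b, cs b ⊆ S → ∃ b', wmap R.subtype b' = b := by
    intro b hb
    apply exists_wmap_sub
    intro e he
    exact hSR _ (hb (Finset.mem_image_of_mem _ he))
  have hS1 : ∀ t, cs (φ (gen K t)) ⊆ S := by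
    intro t x hx
    simp only [S, Finset.mem_union, Finset.mem_biUnion, Finset.mem_univ, true_and]
    exact Or.inl (Or.inl (Or.inl ⟨t, hx⟩))
  have hS2 : ∀ l, cs (a l) ⊆ S := by
    intro l x hx
    simp only [S, Finset.mem_union, Finset.mem_biUnion, Finset.mem_univ, true_and]
    exact Or.inl (Or.inl (Or.inr ⟨l, hx⟩))
  have hS3 : ∀ l s k, cs (u l s k) ⊆ S := by
    intro l s k x hx
    simp only [S, Finset.mem_union, Finset.mem_biUnion, Finset.mem_univ, true_and]
    exact Or.inl (Or.inr ⟨(l, s, k), hx⟩)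
  have hS4 : ∀ e, v e ∈ R := by
    intro e
    apply hSR
    exact Finset.mem_union_right _ (Finset.mem_image_of_mem _ (Finset.mem_univ e))
  choose g hg using fun t => hlift _ (hS1 t)
  choose a' ha' using fun l => hlift _ (hS2 l)
  choose u' hu' using fun l s k => hlift _ (hS3 l s k)
  let v' : E → R := fun e => ⟨v e, hS4 e⟩
  have hinj : Function.Injective R.subtype := Subtype.val_injective
  have hwinj := wmap_inj (n := n) R.subtype hinj
  have hW : IsWeyl (fun t => φ (gen K t)) := isWeyl_gen.map φ.toRingHom
  have hgW : IsWeyl g := by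
    apply IsWeyl.of_inj hwinj
    simp only [hg]; exact hW
  let φR := wlift (R := R) g hgW
  have hφR : ∀ b, wmap R.subtype (φR b) = φ (wmap R.subtype b) := by
    intro b
    rw [wmap_wlift]
    congr 1
    apply algHom_ext
    intro t
    rw [wlift_gen, hg]
  let ψ : R →+* ZMod p := (PadicInt.toZMod (p := p)).comp θ
  let φF := wlift (R := ZMod p) (fun t => wmap ψ (g t)) (hgW.map _)
  have hφF : ∀ b, wmap ψ (φR b) = φF (wmap ψ b) := fun b => wmap_wlift ψ hgW b
  have hcomp : ∀ b : WeylAlgebra R n, wmap (PadicInt.toZMod (p := p)) (wmap θ b) = wmap ψ b := by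
    intro b
    apply sym_injective
    rw [sym_wmap, sym_wmap, sym_wmap, MvPolynomial.map_map]
  have relR : ∀ l s, a' l * gen _ s = ∑ k, φR (u' l s k) * a' k := by
    intro l s
    apply hwinj
    simp only [map_mul, map_sum, ha', wmap_gen, hφR, hu', rel]
  let d : FD φF m c :=
    { a := fun l => wmap ψ (a' l)
      l0 := l0
      a0 := by
        have : a' l0 = 1 := hwinj (by rw [ha', a0, map_one])
        rw [this, map_one]
      u := fun l s k => wmap ψ (u' l s k)
      hu := by
        intro l s k
        rw [sym_wmap]
        apply dl_map
        apply dl_of_map R.subtype hinj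
        rw [← sym_wmap, hu']
        exact hu l s k
      rel := by
        intro l s
        have := congrArg (wmap ψ) (relR l s)
        simpa only [map_mul, map_sum, wmap_gen, hφF] using this }
  obtain ⟨y, hy, hys⟩ := mod_p (isLift_padic p n) (hgW.map (wmap θ)) (φ := φF)
    (fun t => by rw [hcomp]; exact (wlift_gen (R := ZMod p) (fun t => wmap ψ (g t)) (hgW.map _) t).symm) d (by omega) (by omega) (by omega) s
  have hR0 : ∀ w : Ix n →₀ ℕ, w.degree < c + 1 → lam E v' (φR (quant (monomial w 1))) = 0 := by
    intro w hw
    apply hinj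
    rw [← lam_wmap, hφR, wmap_quant, map_monomial, map_one, map_zero]
    exact hv0 w hw
  have hR1 : lam E v' (gen R s) = 1 := by
    apply hinj
    rw [← lam_wmap, wmap_gen, map_one]
    exact hv1
  have hF1 : lam E (fun e => ψ (v' e)) (gen (ZMod p) s) = 1 := by
    rw [← wmap_gen ψ, lam_wmap, hR1, map_one]
  have hF0 : ∀ q ∈ dl (ZMod p) (Ix n) (c + 1), lam E (fun e => ψ (v' e)) (φF (quant q)) = 0 := by
    intro q hq
    refine dl_induction (P := fun q => lam E (fun e => ψ (v' e)) (φF (quant q)) = 0) ?_ ?_ ?_ hq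
    · simp only [map_zero, lam, coeff_zero, mul_zero, Finset.sum_const_zero]
    · intro q r hq hr
      simp only [map_add, lam_add, hq, hr, add_zero]
    · intro w hw r
      have h1 : monomial w r = r • (monomial w 1 : MvPolynomial (Ix n) (ZMod p)) := by
        rw [smul_monomial, smul_eq_mul, mul_one]
      have h2 : (monomial w 1 : MvPolynomial (Ix n) (ZMod p)) = MvPolynomial.map ψ (monomial w 1) := by
        rw [map_monomial, map_one ψ]
      rw [h1, map_smul, map_smul, lam_smul, h2, ← wmap_quant, ← hφF, lam_wmap, hR0 w hw, map_zero, mul_zero]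
  have := hF0 _ hy
  rw [quant_sym, hys, hF1] at this
  exact one_ne_zero this

end main
end WA


set_option linter.all false

namespace WA

open MvPolynomial

section final
variable {K : Type*} [Field K] [CharZero K] {n : ℕ}

theorem weyl_inj (φ : WeylAlgebra K n →ₐ[K] WeylAlgebra K n) : Function.Injective φ := by
  rw [injective_iff_map_eq_zero]
  have key : ∀ k, ∀ a : WeylAlgebra K n, sym a ∈ dl K (Ix n) k → φ a = 0 → a = 0 := by
    intro k
    induction k with
    | zero => intro a ha _; exact sym_eq_zero.1 (mem_dl_zero ha)
    | succ k ih =>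
      intro a ha h0
      have hpd : ∀ s, pderiv s (sym a) = 0 := by
        intro s
        have hm := pderiv_mem_dl s ha
        rcases s with i | i
        · rw [← sym_ad_inr] at hm ⊢
          rw [ih _ hm (by rw [map_sub, map_mul, map_mul, h0, mul_zero, zero_mul, sub_zero]), map_zero]
        · rw [← sym_ad_inl] at hm ⊢
          rw [ih _ hm (by rw [map_sub, map_mul, map_mul, h0, mul_zero, zero_mul, sub_zero]), map_zero]
      have hC : sym a = C (coeff 0 (sym a)) := by
        ext u
        rw [coeff_C]
        split_ifs with hu
        · rw [hu]
        obtain ⟨s, hs⟩ : ∃ s, u s ≠ 0 := by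
          by_contra! h
          apply hu; ext s; simpa using (h s).symm
        have h2 : u - Finsupp.single s 1 + Finsupp.single s 1 = u := by
          apply tsub_add_cancel_of_le
          rw [Finsupp.single_le_iff]; omega
        have h1 := congrArg (coeff (u - Finsupp.single s 1)) (hpd s)
        rw [coeff_pderiv, h2, coeff_zero] at h1
        refine (mul_eq_zero.1 h1).resolve_right ?_
        exact Nat.cast_add_one_ne_zero _
      have ha' : a = algebraMap K _ (coeff 0 (sym a)) := by
        apply sym_injective
        rw [sym_algebraMap]; exact hC
      rw [ha', AlgHom.commutes] at h0
      rw [ha']; exact h0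
  intro a ha
  exact key _ a (mem_dl_succ.2 le_rfl) ha

theorem surj_of_gens (φ : WeylAlgebra K n →ₐ[K] WeylAlgebra K n) (h : ∀ s, ∃ y, φ y = gen K s) :
    Function.Surjective φ := by
  rw [← AlgHom.range_eq_top, eq_top_iff, ← adjoin_gen, Algebra.adjoin_le_iff]
  rintro _ ⟨s, rfl⟩
  exact h s

theorem left_surj (φ : WeylAlgebra K n →ₐ[K] WeylAlgebra K n) {ι : Type*} [Fintype ι]
    (a : ι → WeylAlgebra K n) (h : ∀ x, ∃ t : ι → WeylAlgebra K n, x = ∑ i, φ (t i) * a i) :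
    Function.Surjective φ := by
  classical
  apply surj_of_gens
  let e := Fintype.equivFin (Option ι)
  let a' : Fin (Fintype.card (Option ι)) → WeylAlgebra K n := fun l => (e.symm l).elim 1 a
  have h' : ∀ x, ∃ t : Fin (Fintype.card (Option ι)) → WeylAlgebra K n, x = ∑ k, φ (t k) * a' k := by
    intro x
    obtain ⟨t, ht⟩ := h x
    refine ⟨fun l => (e.symm l).elim 0 t, ?_⟩
    rw [Equiv.sum_comp e.symm (fun o : Option ι => φ (o.elim 0 t) * o.elim 1 a), Fintype.sum_option]
    simpa using ht
  choose u hu using fun l s => h' (a' l * gen K s)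
  intro s
  refine left_main φ (c := Finset.univ.sup fun x : Fin (Fintype.card (Option ι)) × Ix n × Fin (Fintype.card (Option ι)) =>
    (sym (u x.1 x.2.1 x.2.2)).totalDegree) a' (e none) (by simp [a']) u ?_ hu s
  intro l s k
  rw [mem_dl_succ]
  exact Finset.le_sup (f := fun x : Fin (Fintype.card (Option ι)) × Ix n × Fin (Fintype.card (Option ι)) =>
    (sym (u x.1 x.2.1 x.2.2)).totalDegree) (Finset.mem_univ (l, s, k))

theorem sgn_dx {B : Type*} [Ring B] [Algebra K B] {x d e : B} (h : d * x = x * d + e) :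
    x * ((-1 : K) • d) = ((-1 : K) • d) * x + e := by
  rw [mul_smul_comm, smul_mul_assoc, h, smul_add]; simp

theorem sgn_neg {B : Type*} [Ring B] [Algebra K B] (b : B) : (-1 : K) • b = -b := by simp

theorem sgn_sgn {B : Type*} [Ring B] [Algebra K B] (b : B) : (-1 : K) • (-1 : K) • b = b := by simp

/-- generators of the opposite algebra -/
noncomputable def og : Ix n → (WeylAlgebra K n)ᵐᵒᵖ
  | .inl i => MulOpposite.op (gen K (.inl i))
  | .inr i => MulOpposite.op ((-1 : K) • gen K (.inr i))

theorem og_weyl : IsWeyl (og : Ix n → (WeylAlgebra K n)ᵐᵒᵖ) where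
  xx i j := by
    simp only [og]; rw [← MulOpposite.op_mul, ← MulOpposite.op_mul, isWeyl_gen.xx]
  dd i j := by
    simp only [og]; rw [← MulOpposite.op_mul, ← MulOpposite.op_mul]
    congr 1
    have := (isWeyl_gen (R := K) (n := n)).dd i j
    rw [smul_mul_smul_comm, smul_mul_smul_comm, this]
  dx i j := by
    simp only [og]; rw [← MulOpposite.op_mul, ← MulOpposite.op_mul]
    have h1 : (if i = j then (1 : (WeylAlgebra K n)ᵐᵒᵖ) else 0) = MulOpposite.op (if i = j then 1 else 0) := by
      split_ifs <;> rfl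
    rw [h1, ← MulOpposite.op_add]
    congr 1
    have := (isWeyl_gen (R := K) (n := n)).dx i j
    exact sgn_dx this

/-- the anti-automorphism -/
noncomputable def tr : WeylAlgebra K n →ₗ[K] WeylAlgebra K n :=
  (MulOpposite.opLinearEquiv K).symm.toLinearMap.comp (wlift (R := K) og og_weyl).toLinearMap

theorem tr_one : tr (1 : WeylAlgebra K n) = 1 := by
  show MulOpposite.unop (wlift (R := K) og og_weyl 1) = 1
  rw [map_one]; rfl

theorem tr_mul (a b : WeylAlgebra K n) : tr (a * b) = tr b * tr a := by
  show MulOpposite.unop (wlift (R := K) og og_weyl (a * b)) = _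
  rw [map_mul]; rfl

theorem tr_gen (s : Ix n) : tr (gen K s) = MulOpposite.unop (og s) := by
  show MulOpposite.unop (wlift (R := K) og og_weyl (gen K s)) = _
  rw [wlift_gen]

theorem tr_tr (a : WeylAlgebra K n) : tr (tr a) = a := by
  induction a using induction_left with
  | h1 => simp only [tr_one]
  | hadd a b ha hb => simp only [map_add, ha, hb]
  | hsmul r a ha => rw [map_smul, map_smul, ha]
  | hgen s a ha =>
    rw [tr_mul, tr_mul, ha]
    congr 1
    rcases s with i | i
    · rw [tr_gen]; exact tr_gen _
    · rw [tr_gen]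
      show tr ((-1 : K) • gen K (.inr i)) = _
      rw [map_smul, tr_gen]
      exact sgn_sgn (K := K) (B := WeylAlgebra K n) (gen K (.inr i))

/-- the conjugated endomorphism -/
noncomputable def conj (φ : WeylAlgebra K n →ₐ[K] WeylAlgebra K n) : WeylAlgebra K n →ₐ[K] WeylAlgebra K n :=
  AlgHom.ofLinearMap (tr.comp (φ.toLinearMap.comp tr))
    (by show tr (φ (tr 1)) = 1
        rw [tr_one, map_one, tr_one])
    (by intro a b
        show tr (φ (tr (a * b))) = tr (φ (tr a)) * tr (φ (tr b))
        rw [tr_mul, map_mul, tr_mul])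

theorem conj_apply (φ : WeylAlgebra K n →ₐ[K] WeylAlgebra K n) (a : WeylAlgebra K n) :
    conj φ a = tr (φ (tr a)) := rfl

theorem right_surj (φ : WeylAlgebra K n →ₐ[K] WeylAlgebra K n) {ι : Type*} [Fintype ι]
    (a : ι → WeylAlgebra K n) (h : ∀ x, ∃ t : ι → WeylAlgebra K n, x = ∑ i, a i * φ (t i)) :
    Function.Surjective φ := by
  have h1 : Function.Surjective (conj φ) := by
    apply left_surj (conj φ) (fun i => tr (a i))
    intro x
    obtain ⟨t, ht⟩ := h (tr x)
    refine ⟨fun i => tr (t i), ?_⟩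
    have := congrArg tr ht
    rw [tr_tr, map_sum] at this
    rw [this]
    refine Finset.sum_congr rfl fun i _ => ?_
    rw [tr_mul, conj_apply, tr_tr]
  intro x
  obtain ⟨y, hy⟩ := h1 (tr x)
  refine ⟨tr y, ?_⟩
  have := congrArg tr hy
  rwa [conj_apply, tr_tr, tr_tr] at this

theorem main (φ : WeylAlgebra K n →ₐ[K] WeylAlgebra K n)
    (hfg : (∃ s : Finset (WeylAlgebra K n),
        AddSubgroup.closure {x : WeylAlgebra K n | ∃ g ∈ s, ∃ b : WeylAlgebra K n,
          x = φ b * g} = ⊤)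
      ∨ (∃ s : Finset (WeylAlgebra K n),
        AddSubgroup.closure {x : WeylAlgebra K n | ∃ g ∈ s, ∃ b : WeylAlgebra K n,
          x = g * φ b} = ⊤)) :
    φ.range = ⊤ ∧ Function.Bijective φ := by
  classical
  have hs : Function.Surjective φ := by
    rcases hfg with ⟨s, hs⟩ | ⟨s, hs⟩
    · apply left_surj φ (fun i : s => i.1)
      intro x
      have hx : x ∈ AddSubgroup.closure {x : WeylAlgebra K n | ∃ g ∈ s, ∃ b : WeylAlgebra K n,
          x = φ b * g} := by rw [hs]; trivial
      induction hx using AddSubgroup.closure_induction with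
      | mem x hx =>
        obtain ⟨g, hg, b, rfl⟩ := hx
        refine ⟨Pi.single ⟨g, hg⟩ b, ?_⟩
        rw [Finset.sum_eq_single ⟨g, hg⟩]
        · simp
        · intro i _ hi; rw [Pi.single_eq_of_ne hi, map_zero, zero_mul]
        · simp
      | zero => exact ⟨0, by simp⟩
      | add x y _ _ hx hy =>
        obtain ⟨t, rfl⟩ := hx
        obtain ⟨t', rfl⟩ := hy
        exact ⟨t + t', by simp [add_mul, Finset.sum_add_distrib]⟩
      | neg x _ hx =>
        obtain ⟨t, rfl⟩ := hx
        refine ⟨fun i => (-1 : K) • t i, ?_⟩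
        rw [← Finset.sum_neg_distrib]
        refine Finset.sum_congr rfl fun i _ => ?_
        rw [map_smul, smul_mul_assoc]; exact (sgn_neg _).symm
    · apply right_surj φ (fun i : s => i.1)
      intro x
      have hx : x ∈ AddSubgroup.closure {x : WeylAlgebra K n | ∃ g ∈ s, ∃ b : WeylAlgebra K n,
          x = g * φ b} := by rw [hs]; trivial
      induction hx using AddSubgroup.closure_induction with
      | mem x hx =>
        obtain ⟨g, hg, b, rfl⟩ := hx
        refine ⟨Pi.single ⟨g, hg⟩ b, ?_⟩
        rw [Finset.sum_eq_single ⟨g, hg⟩]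
        · simp
        · intro i _ hi; rw [Pi.single_eq_of_ne hi, map_zero, mul_zero]
        · simp
      | zero => exact ⟨0, by simp⟩
      | add x y _ _ hx hy =>
        obtain ⟨t, rfl⟩ := hx
        obtain ⟨t', rfl⟩ := hy
        exact ⟨t + t', by simp [mul_add, Finset.sum_add_distrib]⟩
      | neg x _ hx =>
        obtain ⟨t, rfl⟩ := hx
        refine ⟨fun i => (-1 : K) • t i, ?_⟩
        rw [← Finset.sum_neg_distrib]
        refine Finset.sum_congr rfl fun i _ => ?_
        rw [map_smul, mul_smul_comm]; exact (sgn_neg _).symm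
  exact ⟨(AlgHom.range_eq_top φ).2 hs, weyl_inj φ, hs⟩

end final
end WA

/-- **Main theorem.** Let `K` be a field of characteristic `0`, `A = A_n(K)`
the `n`-th Weyl algebra, `φ : A → A` a `K`-algebra endomorphism and `S = φ(A)`.  If `A` is
finitely generated as a left `S`-module or as a right `S`-module, then `S = A`; in
particular, `φ` is an automorphism of `A`. -/
theorem weylAlgebra_endomorphism_surjective_of_finitely_generated (K : Type*) [Field K]
    [CharZero K] (n : ℕ) (φ : WeylAlgebra K n →ₐ[K] WeylAlgebra K n)
    (hfg : (∃ s : Finset (WeylAlgebra K n),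
        AddSubgroup.closure {x : WeylAlgebra K n | ∃ g ∈ s, ∃ b : WeylAlgebra K n,
          x = φ b * g} = ⊤)
      ∨ (∃ s : Finset (WeylAlgebra K n),
        AddSubgroup.closure {x : WeylAlgebra K n | ∃ g ∈ s, ∃ b : WeylAlgebra K n,
          x = g * φ b} = ⊤)) :
    φ.range = ⊤ ∧ Function.Bijective φ := by
  exact WA.main φ hfg
end

section
/- Let K be a field, B = K[x_1,…,x_n] with n > 0, and φ: B → B a K-algebra endomorphism with φ(x_i) = f_i. Let d, r ∈ ℕ with r > 0, let h_1, …, h_r ∈ B be polynomials of total degree ≤ d, and let m > n + d be an integer. If there is no non-trivial relation φ(b_1) h_1 + ⋯ + φ(b_r) h_r = 0 with b_1, …, b_r ∈ B of total degree ≤ m (not all zero), then m (r − deg(φ)^n) < 2^n deg(φ)^{n−1} (n + d). -/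
/-- The degree of a `K`-algebra endomorphism `φ` of the polynomial ring `K[x_1, …, x_n]`:
`deg(φ) = max {deg f_1, …, deg f_n}` where `f_i = φ(x_i)` and `deg` is total degree. -/
noncomputable def polyDeg {K : Type*} [CommSemiring K] {n : ℕ}
    (φ : MvPolynomial (Fin n) K →ₐ[K] MvPolynomial (Fin n) K) : ℕ :=
  Finset.univ.sup fun i : Fin n => (φ (MvPolynomial.X i)).totalDegree

lemma aux_card (n m : ℕ) :
    Nat.card {s : Fin n →₀ ℕ | (s.sum fun _ e => e) ≤ m} = (m + n).choose n := by
  classical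
  have hset : {s : Fin n →₀ ℕ | (s.sum fun _ e => e) ≤ m} =
      (((Finset.range (m + 1)).biUnion fun k =>
        (Finset.univ : Finset (Fin n)).finsuppAntidiag k : Finset (Fin n →₀ ℕ)) :
          Set (Fin n →₀ ℕ)) := by
    ext s
    simp only [Set.mem_ofPred_eq, Finset.coe_biUnion, Set.mem_iUnion, Finset.mem_coe,
      Finset.mem_finsuppAntidiag', Finset.mem_range, Finset.subset_univ, and_true]
    constructor
    · intro hs
      exact ⟨_, Nat.lt_succ_of_le hs, rfl⟩
    · rintro ⟨k, hk, hs⟩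
      omega
  rw [hset, Nat.card_coe_set_eq, Set.ncard_coe_finset, Finset.card_biUnion]
  · rw [← Nat.sum_range_multichoose]
    refine Finset.sum_congr rfl fun k _ => ?_
    rw [Finset.card_finsuppAntidiag_nat_eq_multichoose, Finset.card_univ, Fintype.card_fin]
  · intro i _ j _ hij
    refine Finset.disjoint_left.2 ?_
    intro s hs ht
    rw [Finset.mem_finsuppAntidiag'] at hs ht
    exact hij (hs.1.symm.trans ht.1)

lemma aux_finrank (K : Type*) [Field K] (n m : ℕ) :
    Module.finrank K (MvPolynomial.restrictTotalDegree (Fin n) K m) = (m + n).choose n := by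
  rw [← aux_card n m]
  exact Module.finrank_eq_nat_card_basis (MvPolynomial.basisRestrictSupport K _)

lemma aux_deg {K : Type*} [Field K] {n : ℕ}
    (φ : MvPolynomial (Fin n) K →ₐ[K] MvPolynomial (Fin n) K) (m : ℕ)
    (b : MvPolynomial (Fin n) K) (hb : b.totalDegree ≤ m) :
    (φ b).totalDegree ≤ polyDeg φ * m := by
  have h1 : φ b = ∑ s ∈ b.support, φ (MvPolynomial.monomial s (b.coeff s)) := by
    conv_lhs => rw [b.as_sum]
    rw [map_sum]
  rw [h1]
  refine MvPolynomial.totalDegree_finsetSum_le fun s hs => ?_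
  have hs' : (s.sum fun _ e => e) ≤ m := (MvPolynomial.le_totalDegree hs).trans hb
  rw [MvPolynomial.monomial_eq, map_mul, Finsupp.prod, map_prod]
  refine (MvPolynomial.totalDegree_mul _ _).trans ?_
  have hC : φ (MvPolynomial.C (b.coeff s)) = MvPolynomial.C (b.coeff s) :=
    φ.commutes (b.coeff s)
  rw [hC, MvPolynomial.totalDegree_C, zero_add]
  refine (MvPolynomial.totalDegree_finsetProd _ _).trans ?_
  calc ∑ i ∈ s.support, (φ (MvPolynomial.X i ^ s i)).totalDegree
      ≤ ∑ i ∈ s.support, polyDeg φ * s i := by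
        refine Finset.sum_le_sum fun i _ => ?_
        rw [map_pow]
        refine (MvPolynomial.totalDegree_pow _ _).trans ?_
        rw [mul_comm]
        refine Nat.mul_le_mul_right _ ?_
        exact Finset.le_sup (f := fun i : Fin n => (φ (MvPolynomial.X i)).totalDegree)
          (Finset.mem_univ i)
    _ = polyDeg φ * (s.sum fun _ e => e) := by rw [← Finset.mul_sum]; rfl
    _ ≤ polyDeg φ * m := Nat.mul_le_mul_left _ hs'

lemma aux_pow (A c n : ℕ) (hc : c ≤ A) :
    (A + c) ^ (n + 1) + A ^ n * c ≤ A ^ (n + 1) + 2 ^ (n + 1) * (A ^ n * c) := by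
  induction n with
  | zero => simp; omega
  | succ n ih =>
    have h1 := Nat.mul_le_mul_right (A + c) ih
    have h2 : A ^ n * c * c ≤ A ^ n * c * A := Nat.mul_le_mul_left _ hc
    have h3 : 1 ≤ 2 ^ (n + 1) := Nat.one_le_two_pow
    obtain ⟨t, ht⟩ := Nat.exists_eq_add_of_le h3
    have h4 := Nat.mul_le_mul_left t h2
    rw [pow_succ 2 (n + 1)]
    rw [ht] at h1 ⊢
    ring_nf at h1 h2 h4 ⊢
    nlinarith

lemma aux_num (n : ℕ) (D d r m : ℕ) (hr : 0 < r) (hm : n + 1 + d < m)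
    (H : r * (m + (n + 1)).choose (n + 1) ≤ (D * m + d + (n + 1)).choose (n + 1)) :
    (m : ℤ) * ((r : ℤ) - (D : ℤ) ^ (n + 1)) <
      2 ^ (n + 1) * (D : ℤ) ^ n * ((n + 1 : ℕ) + (d : ℤ)) := by
  have H1 : r * (m + 1) ^ (n + 1) ≤ (D * m + (n + 1 + d)) ^ (n + 1) := by
    calc r * (m + 1) ^ (n + 1) ≤ r * (m + 1).ascFactorial (n + 1) :=
          Nat.mul_le_mul_left _ (Nat.pow_succ_le_ascFactorial _ _)
      _ = (n + 1).factorial * (r * (m + (n + 1)).choose (n + 1)) := by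
          rw [Nat.ascFactorial_eq_factorial_mul_choose]; ring
      _ ≤ (n + 1).factorial * (D * m + d + (n + 1)).choose (n + 1) :=
          Nat.mul_le_mul_left _ H
      _ = (D * m + d + 1).ascFactorial (n + 1) := by
          rw [Nat.ascFactorial_eq_factorial_mul_choose]
      _ ≤ (D * m + d + (n + 1)) ^ (n + 1) := Nat.ascFactorial_le_pow_add _ _
      _ = _ := by congr 1; ring
  have H2 : r * m ^ (n + 1) < r * (m + 1) ^ (n + 1) :=
    Nat.mul_lt_mul_of_pos_left (Nat.pow_lt_pow_left (Nat.lt_succ_self m) (Nat.succ_ne_zero n)) hr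
  rcases Nat.eq_zero_or_pos D with rfl | hD
  · exfalso
    have h1 : (0 * m + (n + 1 + d)) ^ (n + 1) ≤ m ^ (n + 1) :=
      Nat.pow_le_pow_left (by omega) _
    have h2 : 1 * m ^ (n + 1) ≤ r * m ^ (n + 1) := Nat.mul_le_mul_right _ hr
    omega
  · have hc : n + 1 + d ≤ D * m := by nlinarith
    have h3 := aux_pow (D * m) (n + 1 + d) n hc
    have h4 : r * m ^ (n + 1) <
        (D * m) ^ (n + 1) + 2 ^ (n + 1) * ((D * m) ^ n * (n + 1 + d)) := by omega
    have h5 : m ^ n * (r * m) <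
        m ^ n * (D ^ (n + 1) * m + 2 ^ (n + 1) * D ^ n * (n + 1 + d)) := by
      calc m ^ n * (r * m) = r * m ^ (n + 1) := by ring
        _ < _ := h4
        _ = _ := by rw [mul_pow, mul_pow]; ring
    have h6 := Nat.lt_of_mul_lt_mul_left h5
    have h7 : (r : ℤ) * m < (D : ℤ) ^ (n + 1) * m + 2 ^ (n + 1) * (D : ℤ) ^ n * (n + 1 + d) := by
      exact_mod_cast h6
    push_cast
    linarith

open MvPolynomial in
/-- Let `K` be a field, `B = K[x_1, …, x_n]` with `n > 0`, and `φ : B → B`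
a `K`-algebra endomorphism.  Let `d, r ∈ ℕ` with `r > 0`, let `h_1, …, h_r ∈ B` have total
degree `≤ d`, and let `m > n + d` be an integer.  If there is no non-trivial relation
`φ(b_1) h_1 + ⋯ + φ(b_r) h_r = 0` with all `b_i` of total degree `≤ m`, then
`m (r − deg(φ)^n) < 2^n deg(φ)^{n−1} (n + d)`. -/
theorem polynomial_no_relation_degree_bound (K : Type*) [Field K] (n : ℕ) (hn : 0 < n)
    (φ : MvPolynomial (Fin n) K →ₐ[K] MvPolynomial (Fin n) K)
    (d r : ℕ) (hr : 0 < r) (h : Fin r → MvPolynomial (Fin n) K)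
    (hhd : ∀ i, (h i).totalDegree ≤ d) (m : ℕ) (hm : n + d < m)
    (hno : ¬ ∃ b : Fin r → MvPolynomial (Fin n) K,
        (∀ i, (b i).totalDegree ≤ m) ∧ (∃ i, b i ≠ 0) ∧ ∑ i, φ (b i) * h i = 0) :
    (m : ℤ) * ((r : ℤ) - (polyDeg φ : ℤ) ^ n) <
      2 ^ n * (polyDeg φ : ℤ) ^ (n - 1) * ((n : ℤ) + (d : ℤ)) := by
  classical
  let M : Submodule K (MvPolynomial (Fin n) K) := restrictTotalDegree (Fin n) K m
  let N : Submodule K (MvPolynomial (Fin n) K) :=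
    restrictTotalDegree (Fin n) K (polyDeg φ * m + d)
  let L : (Fin r → M) →ₗ[K] MvPolynomial (Fin n) K :=
    ∑ i, (LinearMap.mulRight K (h i)) ∘ₗ φ.toLinearMap ∘ₗ M.subtype ∘ₗ LinearMap.proj i
  have hL : ∀ b, L b = ∑ i, φ (b i : MvPolynomial (Fin n) K) * h i := by
    intro b
    simp [L, LinearMap.sum_apply]
  have hLN : ∀ b, L b ∈ N := by
    intro b
    rw [hL]
    refine (mem_restrictTotalDegree _ _ _).2 (totalDegree_finsetSum_le fun i _ => ?_)
    exact (totalDegree_mul _ _).trans (Nat.add_le_add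
      (aux_deg φ m _ ((mem_restrictTotalDegree _ _ _).1 (b i).2)) (hhd i))
  have hinj : Function.Injective (L.codRestrict N hLN) := by
    rw [← LinearMap.ker_eq_bot, LinearMap.ker_codRestrict, LinearMap.ker_eq_bot']
    intro b hb
    by_contra hne
    refine hno ⟨fun i => b i, fun i => (mem_restrictTotalDegree _ _ _).1 (b i).2, ?_, ?_⟩
    · by_contra hall
      push Not at hall
      exact hne (funext fun i => Subtype.ext (hall i))
    · rw [← hL, hb]
  have : Module.Finite K M := inferInstanceAs (Module.Finite K (restrictTotalDegree _ _ _))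
  have : Module.Finite K N := inferInstanceAs (Module.Finite K (restrictTotalDegree _ _ _))
  have hrank := LinearMap.finrank_le_finrank_of_injective hinj
  have hM : Module.finrank K M = (m + n).choose n := aux_finrank K n m
  have hN : Module.finrank K N = (polyDeg φ * m + d + n).choose n := aux_finrank K n _
  rw [Module.finrank_pi_fintype, hN] at hrank
  simp only [hM, Finset.sum_const, Finset.card_univ, Fintype.card_fin, smul_eq_mul] at hrank
  obtain ⟨k, rfl⟩ : ∃ k, n = k + 1 := ⟨n - 1, by omega⟩
  exact aux_num k (polyDeg φ) d r m hr hm hrank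
end
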